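/- arXiv:2209.11149 — 11 statements merged into one kernel-verified Lean document; each statement's English description precedes it below -/
import Mathlib

section
/- Let n ≥ 1, let Ω ⊆ ℝⁿ be open, let X, Y : Ω → ℝⁿ be smooth (C^∞), and let x̄ ∈ Ω be a point with ⟨X(x̄), Y(x̄)⟩ > 0 (Euclidean inner product). Then there exists an open neighbourhood U ⊆ Ω of x̄ and a smooth map G : U → Matrix (Fin n) (Fin n) ℝ such that G(x) is symmetric and positive definite for every x ∈ U, and X(x) = G(x) · Y(x) (matrix–vector multiplication) for all x ∈ U. -/
theorem aux_dot_pos {n : ℕ} (v : Fin n → ℝ) (h : v ≠ 0) : 0 < v ⬝ᵥ v := by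
  obtain ⟨i, hi⟩ := Function.ne_iff.mp h
  exact Finset.sum_pos' (fun j _ => mul_self_nonneg _) ⟨i, Finset.mem_univ _, mul_self_pos.mpr hi⟩

theorem aux_quad {n : ℕ} (X Y v : Fin n → ℝ) (hs : 0 < X ⬝ᵥ Y) (hq : 0 < Y ⬝ᵥ Y) (hv : v ≠ 0) :
    0 < (X ⬝ᵥ v) ^ 2 / (X ⬝ᵥ Y) + (v ⬝ᵥ v - (Y ⬝ᵥ v) ^ 2 / (Y ⬝ᵥ Y)) := by
  set c := (Y ⬝ᵥ v) / (Y ⬝ᵥ Y) with hc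
  have e : (v - c • Y) ⬝ᵥ (v - c • Y) = v ⬝ᵥ v - (Y ⬝ᵥ v) ^ 2 / (Y ⬝ᵥ Y) := by
    simp only [sub_dotProduct, dotProduct_sub, smul_dotProduct, dotProduct_smul, smul_eq_mul,
      dotProduct_comm v Y, hc]
    field_simp
    ring
  rw [← e]
  by_cases h : v - c • Y = 0
  · have h' : v = c • Y := sub_eq_zero.mp h
    have hc0 : c ≠ 0 := by
      intro h0
      rw [h0, zero_smul] at h'
      exact hv h'
    have ha : X ⬝ᵥ v = c * (X ⬝ᵥ Y) := by
      conv_lhs => rw [h']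
      simp [dotProduct_smul]
    rw [h, ha]
    simp only [dotProduct_zero, add_zero]
    positivity
  · have := aux_dot_pos _ h
    positivity

theorem local_metric_noncritical
    (n : ℕ) (hn : 1 ≤ n) (Ω : Set (Fin n → ℝ)) (hΩ : IsOpen Ω)
    (X Y : (Fin n → ℝ) → (Fin n → ℝ))
    (hX : ContDiffOn ℝ (⊤ : ℕ∞) X Ω) (hY : ContDiffOn ℝ (⊤ : ℕ∞) Y Ω)
    (x₀ : Fin n → ℝ) (hx₀ : x₀ ∈ Ω)
    (hpos : 0 < ∑ i, X x₀ i * Y x₀ i) :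
    ∃ U : Set (Fin n → ℝ), U ⊆ Ω ∧ IsOpen U ∧ x₀ ∈ U ∧
      ∃ G : (Fin n → ℝ) → Matrix (Fin n) (Fin n) ℝ,
        (∀ i j, ContDiffOn ℝ (⊤ : ℕ∞) (fun x => G x i j) U) ∧
        (∀ x ∈ U, (G x).PosDef) ∧
        (∀ x ∈ U, X x = (G x).mulVec (Y x)) := by
  have hXi : ∀ i, ContDiffOn ℝ (⊤ : ℕ∞) (fun x => X x i) Ω := contDiffOn_pi.mp hX
  have hYi : ∀ i, ContDiffOn ℝ (⊤ : ℕ∞) (fun x => Y x i) Ω := contDiffOn_pi.mp hY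
  have hS : ContDiffOn ℝ (⊤ : ℕ∞) (fun x => X x ⬝ᵥ Y x) Ω :=
    ContDiffOn.sum fun i _ => (hXi i).mul (hYi i)
  have hQ : ContDiffOn ℝ (⊤ : ℕ∞) (fun x => Y x ⬝ᵥ Y x) Ω :=
    ContDiffOn.sum fun i _ => (hYi i).mul (hYi i)
  have hsub : Ω ∩ (fun x => X x ⬝ᵥ Y x) ⁻¹' Set.Ioi 0 ⊆ Ω := Set.inter_subset_left
  have hq : ∀ x ∈ Ω ∩ (fun x => X x ⬝ᵥ Y x) ⁻¹' Set.Ioi 0, 0 < Y x ⬝ᵥ Y x := by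
    intro x hx
    apply aux_dot_pos
    intro h
    have h2 : 0 < X x ⬝ᵥ Y x := hx.2
    simp [h] at h2
  have hmv : ∀ x v, (Matrix.of fun i j => X x i * X x j / (X x ⬝ᵥ Y x) +
      ((1 : Matrix (Fin n) (Fin n) ℝ) i j - Y x i * Y x j / (Y x ⬝ᵥ Y x))).mulVec v
      = ((X x ⬝ᵥ v) / (X x ⬝ᵥ Y x)) • X x + (v - ((Y x ⬝ᵥ v) / (Y x ⬝ᵥ Y x)) • Y x) := by
    intro x v
    have : (Matrix.of fun i j => X x i * X x j / (X x ⬝ᵥ Y x) +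
      ((1 : Matrix (Fin n) (Fin n) ℝ) i j - Y x i * Y x j / (Y x ⬝ᵥ Y x))) =
      (X x ⬝ᵥ Y x)⁻¹ • Matrix.vecMulVec (X x) (X x) +
        (1 - (Y x ⬝ᵥ Y x)⁻¹ • Matrix.vecMulVec (Y x) (Y x)) := by
      ext i j
      simp [Matrix.vecMulVec_apply]
      ring
    rw [this, Matrix.add_mulVec, Matrix.sub_mulVec, Matrix.smul_mulVec, Matrix.smul_mulVec,
      Matrix.one_mulVec, Matrix.vecMulVec_mulVec, Matrix.vecMulVec_mulVec]
    ext i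
    simp
    ring
  refine ⟨Ω ∩ (fun x => X x ⬝ᵥ Y x) ⁻¹' Set.Ioi 0, hsub,
    hS.continuousOn.isOpen_inter_preimage hΩ isOpen_Ioi, ⟨hx₀, hpos⟩,
    fun x => Matrix.of fun i j => X x i * X x j / (X x ⬝ᵥ Y x) +
      ((1 : Matrix (Fin n) (Fin n) ℝ) i j - Y x i * Y x j / (Y x ⬝ᵥ Y x)), ?_, ?_, ?_⟩
  · intro i j
    simp only [Matrix.of_apply]
    exact ((((hXi i).mul (hXi j)).mono hsub).div (hS.mono hsub) fun x hx => ne_of_gt hx.2).add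
      (contDiffOn_const.sub ((((hYi i).mul (hYi j)).mono hsub).div (hQ.mono hsub)
        fun x hx => ne_of_gt (hq x hx)))
  · intro x hx
    refine Matrix.PosDef.of_dotProduct_mulVec_pos ?_ ?_
    · refine Matrix.IsHermitian.ext fun i j => ?_
      have h1 : (1 : Matrix (Fin n) (Fin n) ℝ) j i = (1 : Matrix (Fin n) (Fin n) ℝ) i j := by
        simp only [Matrix.one_apply, eq_comm]
      simp only [Matrix.of_apply, star_trivial, h1, mul_comm]
    · intro v hv
      rw [hmv]
      have := aux_quad (X x) (Y x) v hx.2 (hq x hx) hv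
      refine this.trans_eq ?_
      simp only [star_trivial, dotProduct_add, dotProduct_sub, dotProduct_smul, smul_eq_mul,
        dotProduct_comm v (X x), dotProduct_comm v (Y x)]
      ring
  · intro x hx
    have h1 := hq x hx
    have h2 : 0 < X x ⬝ᵥ Y x := hx.2
    simp only [hmv]
    rw [div_self h1.ne', div_self h2.ne']
    simp
end

section
/- Let n ≥ 1, let Ω ⊆ ℝⁿ be open, and let X, Y : Ω → ℝⁿ be real-analytic on Ω. Let x̄ ∈ Ω satisfy X(x̄) = 0 and Y(x̄) = 0, and assume the Fréchet derivative DY(x̄) : ℝⁿ → ℝⁿ is invertible. Assume there exists a symmetric positive definite matrix Ḡ ∈ Matrix (Fin n) (Fin n) ℝ such that DX(x̄) v = Ḡ · (DY(x̄) v) for all v ∈ ℝⁿ. Then there exists an open neighbourhood U ⊆ Ω of x̄ and a smooth map G : U → Matrix (Fin n) (Fin n) ℝ such that G(x) is symmetric and positive definite for every x ∈ U, and X(x) = G(x) · Y(x) for all x ∈ U. -/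
open Filter Topology Set
open scoped ContDiff

theorem hadamard_analytic {E F : Type*} [NormedAddCommGroup E] [NormedSpace ℝ E]
    [NormedAddCommGroup F] [NormedSpace ℝ F] [CompleteSpace F]
    {f : E → F} {x₀ : E} (hf : AnalyticAt ℝ f x₀) :
    ∃ A : E → (E →L[ℝ] F), AnalyticAt ℝ A x₀ ∧ A x₀ = fderiv ℝ f x₀ ∧
      ∀ᶠ x in 𝓝 x₀, f x = f x₀ + A x (x - x₀) := by
  obtain ⟨p, r, hp⟩ := hf
  have hpos : 0 < p.shift.radius := by
    rw [FormalMultilinearSeries.radius_shift]; exact hp.r_pos.trans_le hp.r_le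
  have h1 := p.shift.hasFPowerSeriesOnBall hpos
  have h2 := (h1.comp_sub x₀)
  rw [zero_add] at h2
  have han : AnalyticAt ℝ (fun x => p.shift.sum (x - x₀)) x₀ := h2.analyticAt
  have hev : ∀ᶠ x in 𝓝 x₀, f x = f x₀ + p.shift.sum (x - x₀) (x - x₀) := by
    filter_upwards [hp.eventually_hasSum_sub, h2.hasFPowerSeriesAt.eventually_hasSum_sub] with x hx hx2
    have h3 := (ContinuousLinearMap.apply ℝ F (x - x₀)).hasSum hx2
    have h4 := (hasSum_nat_add_iff' 1).mpr hx
    have h6 : ∀ m : ℕ, ContinuousLinearMap.apply ℝ F (x - x₀) (p.shift m fun _ => x - x₀)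
        = p (m + 1) fun _ => x - x₀ := by
      intro m
      rw [ContinuousLinearMap.apply_apply]
      change p (m + 1) (Fin.snoc (fun _ => x - x₀) (x - x₀)) = _
      congr 1
      ext i
      refine Fin.lastCases ?_ (fun i => ?_) i <;> simp
    simp only [h6] at h3
    have h5 := h3.unique h4
    simp only [ContinuousLinearMap.apply_apply, Finset.range_one, Finset.sum_singleton] at h5
    rw [h5, hp.coeff_zero]
    abel
  refine ⟨fun x => p.shift.sum (x - x₀), han, ?_, hev⟩
  have hd : HasFDerivAt (fun x => f x₀ + p.shift.sum (x - x₀) (x - x₀)) (p.shift.sum (x₀ - x₀)) x₀ := by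
    have := (han.differentiableAt.hasFDerivAt.clm_apply
      ((hasFDerivAt_id x₀).sub_const x₀)).const_add (f x₀)
    refine this.congr_fderiv ?_
    ext v
    simp
  exact ((hd.congr_of_eventuallyEq hev).fderiv).symm

theorem posDef_eventually {n : ℕ} {E : Type*} [TopologicalSpace E]
    {G : E → Matrix (Fin n) (Fin n) ℝ} {x₀ : E}
    (hc : ∀ i j, ContinuousAt (fun x => G x i j) x₀)
    (hs : ∀ x i j, G x i j = G x j i) (h0 : (G x₀).PosDef) :
    ∀ᶠ x in 𝓝 x₀, (G x).PosDef := by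
  have key : ∀ᶠ x in 𝓝 x₀, ∀ v ∈ Metric.sphere (0 : Fin n → ℝ) 1,
      0 < ∑ i, ∑ j, v i * (G x i j * v j) := by
    apply (isCompact_sphere (0 : Fin n → ℝ) 1).eventually_forall_of_forall_eventually
    intro v hv
    have hcont : ContinuousAt (fun z : E × (Fin n → ℝ) =>
        ∑ i, ∑ j, z.2 i * (G z.1 i j * z.2 j)) (x₀, v) := by
      refine tendsto_finsetSum _ fun i _ => tendsto_finsetSum _ fun j _ => ?_
      have h1 : ∀ i, ContinuousAt (fun z : E × (Fin n → ℝ) => z.2 i) (x₀, v) := fun i => by fun_prop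
      have h2 : ContinuousAt (fun z : E × (Fin n → ℝ) => G z.1 i j) (x₀, v) :=
        ContinuousAt.comp (f := Prod.fst) (g := fun x => G x i j) (hc i j) continuousAt_fst
      exact (h1 i).mul (h2.mul (h1 j))
    refine hcont.eventually (lt_mem_nhds ?_)
    have hv0 : v ≠ 0 := by
      rintro rfl; simp at hv
    have := h0.dotProduct_mulVec_pos hv0
    simpa [dotProduct, Matrix.mulVec, Finset.mul_sum] using this
  filter_upwards [key] with x hx
  refine Matrix.PosDef.of_dotProduct_mulVec_pos ?_ ?_
  · ext i j
    simp [hs x i j]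
  · intro v hv
    have hn : 0 < ‖v‖ := norm_pos_iff.mpr hv
    have := hx (‖v‖⁻¹ • v) (by simp [norm_smul, hn.ne'])
    have h2 : ∑ i, ∑ j, (‖v‖⁻¹ • v) i * (G x i j * (‖v‖⁻¹ • v) j)
        = (‖v‖⁻¹)^2 * ∑ i, ∑ j, v i * (G x i j * v j) := by
      simp only [Finset.mul_sum, Pi.smul_apply, smul_eq_mul]
      refine Finset.sum_congr rfl fun i _ => Finset.sum_congr rfl fun j _ => by ring
    rw [h2] at this
    have h3 := (pos_iff_pos_of_mul_pos this).mp (by positivity)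
    simpa [dotProduct, Matrix.mulVec, Finset.mul_sum] using h3

theorem christoffel_sum {n : ℕ} (a : Fin n → Fin n → Fin n → ℝ) (y : Fin n → ℝ) (i : Fin n) :
    ∑ j, (∑ k, (a i j k + a i k j + a j i k + a j k i - a k i j - a k j i) / 2 * y k) * y j
      = ∑ j, ∑ k, a i j k * y j * y k := by
  have sw : ∀ b : Fin n → Fin n → ℝ, ∑ j, ∑ k, b k j * y j * y k = ∑ j, ∑ k, b j k * y j * y k := by
    intro b
    rw [Finset.sum_comm]
    refine Finset.sum_congr rfl fun i _ => Finset.sum_congr rfl fun j _ => by ring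
  have e : ∑ j, (∑ k, (a i j k + a i k j + a j i k + a j k i - a k i j - a k j i) / 2 * y k) * y j
      = (∑ j, ∑ k, a i j k * y j * y k + ∑ j, ∑ k, a i k j * y j * y k
        + ∑ j, ∑ k, a j i k * y j * y k + ∑ j, ∑ k, a j k i * y j * y k
        - ∑ j, ∑ k, a k i j * y j * y k - ∑ j, ∑ k, a k j i * y j * y k) / 2 := by
    simp only [← Finset.sum_add_distrib, ← Finset.sum_sub_distrib, Finset.sum_div, Finset.sum_mul]
    refine Finset.sum_congr rfl fun i _ => Finset.sum_congr rfl fun j _ => by ring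
  rw [e, sw (fun j k => a i j k), sw (fun j k => a j i k), sw (fun j k => a j k i)]
  ring

/-- **Local existence of a metric around a critical point.**
Let `n ≥ 1`, `Ω ⊆ ℝⁿ` open, `X Y : Ω → ℝⁿ` real analytic on `Ω`, and `x₀ ∈ Ω` with
`X x₀ = 0`, `Y x₀ = 0`, the Fréchet derivative `DY x₀` invertible, and suppose there is a
symmetric positive definite matrix `Ḡ` with `DX x₀ v = Ḡ · (DY x₀ v)` for all `v`.
Then there is an open neighbourhood `U ⊆ Ω` of `x₀` and a smooth map
`G : U → Matrix (Fin n) (Fin n) ℝ` with `G x` symmetric positive definite and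
`X x = G x * Y x` for all `x ∈ U`. -/
theorem local_metric_critical
    (n : ℕ) (hn : 1 ≤ n) (Ω : Set (Fin n → ℝ)) (hΩ : IsOpen Ω)
    (X Y : (Fin n → ℝ) → (Fin n → ℝ))
    (hX : AnalyticOnNhd ℝ X Ω) (hY : AnalyticOnNhd ℝ Y Ω)
    (x₀ : Fin n → ℝ) (hx₀ : x₀ ∈ Ω)
    (hX0 : X x₀ = 0) (hY0 : Y x₀ = 0)
    (hDY : Function.Bijective (fderiv ℝ Y x₀))
    (Gbar : Matrix (Fin n) (Fin n) ℝ) (hGbar : Gbar.PosDef)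
    (hcomp : ∀ v : Fin n → ℝ, fderiv ℝ X x₀ v = Gbar.mulVec (fderiv ℝ Y x₀ v)) :
    ∃ U : Set (Fin n → ℝ), U ⊆ Ω ∧ IsOpen U ∧ x₀ ∈ U ∧
      ∃ G : (Fin n → ℝ) → Matrix (Fin n) (Fin n) ℝ,
        (∀ i j, ContDiffOn ℝ (⊤ : ℕ∞) (fun x => G x i j) U) ∧
        (∀ x ∈ U, (G x).PosDef) ∧
        (∀ x ∈ U, X x = (G x).mulVec (Y x)) := by
  have hXa := hX x₀ hx₀
  have hYa := hY x₀ hx₀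
  let L : (Fin n → ℝ) →L[ℝ] (Fin n → ℝ) := LinearMap.toContinuousLinearMap (Matrix.mulVecLin Gbar)
  have hL : ∀ v, L v = Gbar.mulVec v := fun v => rfl
  have hRa : AnalyticAt ℝ (fun x => X x - L (Y x)) x₀ :=
    hXa.sub ((L.analyticAt _).comp hYa)
  have hRd : fderiv ℝ (fun x => X x - L (Y x)) x₀ = 0 := by
    have h := hXa.differentiableAt.hasFDerivAt.sub
      (L.hasFDerivAt.comp x₀ hYa.differentiableAt.hasFDerivAt)
    refine (HasFDerivAt.fderiv h).trans ?_
    ext v : 1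
    simp [hcomp, hL]
  obtain ⟨A, hA, hA0, hAe⟩ := hadamard_analytic hRa
  obtain ⟨C, hC, -, hCe⟩ := hadamard_analytic hA
  obtain ⟨B, hB, hB0, hBe⟩ := hadamard_analytic hYa
  rw [hRd] at hA0
  let e : (Fin n → ℝ) ≃L[ℝ] (Fin n → ℝ) :=
    (LinearEquiv.ofBijective (fderiv ℝ Y x₀ : (Fin n → ℝ) →ₗ[ℝ] (Fin n → ℝ)) hDY).toContinuousLinearEquiv
  have he : (e : (Fin n → ℝ) →L[ℝ] (Fin n → ℝ)) = B x₀ := by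
    rw [hB0]; ext v : 1; rfl
  let P : (Fin n → ℝ) → ((Fin n → ℝ) →L[ℝ] (Fin n → ℝ)) := fun x => (B x).inverse
  have hP : ContDiffAt ℝ ω P x₀ := by
    have h1 : ContDiffAt ℝ ω ContinuousLinearMap.inverse (B x₀) := he ▸ contDiffAt_map_inverse e
    exact h1.comp x₀ hB.contDiffAt
  have hPY : ∀ᶠ x in 𝓝 x₀, P x (Y x) = x - x₀ := by
    have hinv : ∀ᶠ x in 𝓝 x₀, B x ∈ range ((↑) : ((Fin n → ℝ) ≃L[ℝ] (Fin n → ℝ)) → _) :=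
      hB.continuousAt.eventually_mem (he ▸ ContinuousLinearEquiv.nhds e)
    filter_upwards [hinv, hBe] with x ⟨e', he'⟩ hx
    rw [hx, hY0, zero_add]
    simp only [P, ← he', ContinuousLinearMap.inverse_equiv]
    simp
  let a : (Fin n → ℝ) → Fin n → Fin n → Fin n → ℝ := fun x i j k =>
    C x (P x (Pi.single k 1)) (P x (Pi.single j 1)) i
  have ha : ∀ i j k, ContDiffAt ℝ ω (fun x => a x i j k) x₀ := by
    intro i j k
    have h1 : ContDiffAt ℝ ω (fun x => C x (P x (Pi.single k 1)) (P x (Pi.single j 1))) x₀ :=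
      (hC.contDiffAt.clm_apply (hP.clm_apply contDiffAt_const)).clm_apply
        (hP.clm_apply contDiffAt_const)
    exact contDiffAt_pi.mp h1 i
  have hsum : ∀ x i, C x (P x (Y x)) (P x (Y x)) i = ∑ j, ∑ k, a x i j k * Y x j * Y x k := by
    intro x i
    have hy : ∀ T : (Fin n → ℝ) →L[ℝ] (Fin n → ℝ), T (Y x) = ∑ k, Y x k • T (Pi.single k 1) := by
      intro T
      conv_lhs => rw [pi_eq_sum_univ' (Y x)]
      simp [map_sum]
    rw [hy (P x)]
    simp only [map_sum, map_smul, ContinuousLinearMap.sum_apply, ContinuousLinearMap.smul_apply,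
      Finset.sum_apply, Pi.smul_apply, smul_eq_mul, Finset.mul_sum, a]
    refine Finset.sum_congr rfl fun j _ => Finset.sum_congr rfl fun k _ => by ring
  let G : (Fin n → ℝ) → Matrix (Fin n) (Fin n) ℝ := fun x => Matrix.of fun i j =>
    Gbar i j + ∑ k, (a x i j k + a x i k j + a x j i k + a x j k i - a x k i j - a x k j i) / 2 * Y x k
  have hG : ∀ i j, ContDiffAt ℝ ω (fun x => G x i j) x₀ := by
    intro i j
    refine contDiffAt_const.add (ContDiffAt.sum fun k _ => ?_)
    refine ContDiffAt.mul (ContDiffAt.div_const ?_ _) (contDiffAt_pi.mp hYa.contDiffAt k)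
    exact ((((((ha _ _ _).add (ha _ _ _)).add (ha _ _ _)).add (ha _ _ _)).sub (ha _ _ _)).sub
      (ha _ _ _))
  have hsym : ∀ x i j, G x i j = G x j i := by
    intro x i j
    have := hGbar.1.apply i j
    simp only [star_trivial] at this
    simp only [G, Matrix.of_apply, this]
    congr 1
    refine Finset.sum_congr rfl fun k _ => by ring
  have hG0 : G x₀ = Gbar := by
    ext i j; simp [G, hY0]
  have hpd : ∀ᶠ x in 𝓝 x₀, (G x).PosDef :=
    posDef_eventually (fun i j => (hG i j).continuousAt) hsym (hG0 ▸ hGbar)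
  have hGe : ∀ᶠ x in 𝓝 x₀, ∀ i j, ContDiffAt ℝ ω (fun x => G x i j) x :=
    eventually_all.mpr fun i => eventually_all.mpr fun j => (hG i j).eventually (by simp)
  have heq : ∀ᶠ x in 𝓝 x₀, X x = (G x).mulVec (Y x) := by
    filter_upwards [hAe, hCe, hPY] with x h1 h2 h3
    rw [hX0, hY0, map_zero, sub_zero, zero_add, h2, hA0, zero_add, ← h3, sub_eq_iff_eq_add] at h1
    ext i
    rw [h1, Pi.add_apply, hsum, hL, ← christoffel_sum]
    simp only [Matrix.mulVec, dotProduct, G, Matrix.of_apply, add_mul, Finset.sum_add_distrib]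
    ring
  obtain ⟨U, hU, hUo, hxU⟩ := eventually_nhds_iff.mp
    ((hΩ.eventually_mem hx₀).and (hpd.and (hGe.and heq)))
  exact ⟨U, fun x hx => (hU x hx).1, hUo, hxU, G,
    fun i j x hx => (((hU x hx).2.2.1 i j).of_le le_top).contDiffWithinAt,
    fun x hx => (hU x hx).2.1, fun x hx => (hU x hx).2.2.2⟩
end

section
/- Let n ≥ 1. Let U ∈ Matrix (Fin n) (Fin n) ℝ be invertible with inverse U'. Let R : Fin n → Fin n → Fin n → ℝ (write R a (c,d) with one upper index a and two lower indices c,d) satisfy the symmetry R a c d = R a d c for all a, c, d. Define T : Fin n → Fin n → Fin n → ℝ (two upper indices a,b and one lower index c) by T a b c := (1/2)·( Σ_d U' b d · R a c d + Σ_d U' a d · R b c d − Σ_{c'} Σ_{a'} Σ_{b'} U c c' · U' a a' · U' b b' · R c' a' b' ). Then T a b c = T b a c for all a, b, c, and for all a, c, d: Σ_b U d b · T a b c + Σ_b U c b · T a b d = R a c d. -/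
/-- **Explicit solution of the order-2 tensor equation.**
Let `U` be invertible with inverse `U'`, and let `R` (one upper index, two lower indices)
be symmetric in its lower indices. Then the tensor
`T a b c := (1/2)·(Σ_d U' b d · R a c d + Σ_d U' a d · R b c d
  − Σ_{c',a',b'} U c c' · U' a a' · U' b b' · R c' a' b')`
satisfies `T a b c = T b a c` and `Σ_b U d b · T a b c + Σ_b U c b · T a b d = R a c d`. -/
theorem tensor_equation_order2
    (n : ℕ) (hn : 1 ≤ n) (U U' : Matrix (Fin n) (Fin n) ℝ)
    (hUU' : U * U' = 1) (hU'U : U' * U = 1)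
    (R : Fin n → Fin n → Fin n → ℝ)
    (hR : ∀ a c d, R a c d = R a d c) :
    (∀ a b c,
      (1 / 2 : ℝ) * ((∑ d, U' b d * R a c d) + (∑ d, U' a d * R b c d)
        - ∑ c', ∑ a', ∑ b', U c c' * U' a a' * U' b b' * R c' a' b')
      = (1 / 2 : ℝ) * ((∑ d, U' a d * R b c d) + (∑ d, U' b d * R a c d)
        - ∑ c', ∑ a', ∑ b', U c c' * U' b a' * U' a b' * R c' a' b')) ∧
    (∀ a c d,
      (∑ b, U d b *
        ((1 / 2 : ℝ) * ((∑ e, U' b e * R a c e) + (∑ e, U' a e * R b c e)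
          - ∑ c', ∑ a', ∑ b', U c c' * U' a a' * U' b b' * R c' a' b'))) +
      (∑ b, U c b *
        ((1 / 2 : ℝ) * ((∑ e, U' b e * R a d e) + (∑ e, U' a e * R b d e)
          - ∑ c', ∑ a', ∑ b', U d c' * U' a a' * U' b b' * R c' a' b')))
      = R a c d) := by
  have key : ∀ (f : Fin n → ℝ) (d : Fin n), ∑ b, U d b * ∑ e, U' b e * f e = f d := by
    intro f d
    have h : U.mulVec (U'.mulVec f) = f := by
      rw [Matrix.mulVec_mulVec, hUU', Matrix.one_mulVec]
    exact congrFun h d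
  constructor
  · intro a b c
    have h : ∑ c', ∑ a', ∑ b', U c c' * U' a a' * U' b b' * R c' a' b'
        = ∑ c', ∑ a', ∑ b', U c c' * U' b a' * U' a b' * R c' a' b' := by
      refine Finset.sum_congr rfl fun c' _ => ?_
      rw [Finset.sum_comm]
      refine Finset.sum_congr rfl fun x _ => Finset.sum_congr rfl fun y _ => ?_
      rw [hR c' y x]
      ring
    rw [h]
    ring
  · intro a c d
    have third : ∀ c b, ∑ c', ∑ a', ∑ b', U c c' * U' a a' * U' b b' * R c' a' b'
        = ∑ e, U' b e * ∑ c', U c c' * ∑ a', U' a a' * R c' e a' := by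
      intro c b
      simp only [Finset.mul_sum]
      rw [Finset.sum_comm (s := Finset.univ (α := Fin n))
        (f := fun e c' => ∑ a', U' b e * (U c c' * (U' a a' * R c' e a')))]
      refine Finset.sum_congr rfl fun c' _ => ?_
      rw [Finset.sum_comm]
      refine Finset.sum_congr rfl fun x _ => Finset.sum_congr rfl fun y _ => ?_
      rw [hR c' y x]
      ring
    have half : ∀ c d, (∑ b, U d b *
        ((1 / 2 : ℝ) * ((∑ e, U' b e * R a c e) + (∑ e, U' a e * R b c e)
          - ∑ c', ∑ a', ∑ b', U c c' * U' a a' * U' b b' * R c' a' b')))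
        = (1 / 2 : ℝ) * (R a c d + (∑ b, U d b * ∑ e, U' a e * R b c e)
          - ∑ b, U c b * ∑ e, U' a e * R b d e) := by
      intro c d
      rw [← key (fun e => R a c e) d,
        ← key (fun e => ∑ c', U c c' * ∑ a', U' a a' * R c' e a') d,
        ← Finset.sum_add_distrib, ← Finset.sum_sub_distrib, Finset.mul_sum]
      refine Finset.sum_congr rfl fun b _ => ?_
      rw [third c b]
      ring
    rw [half c d, half d c, hR a d c]
    ring
end

section
/- Let n ≥ 1 and N ≥ 2. Let U ∈ Matrix (Fin n) (Fin n) ℝ be invertible. Let R : Fin n → (Fin N → Fin n) → ℝ (one upper index and N lower indices) be symmetric in its lower indices, i.e. R a (γ ∘ π) = R a γ for every permutation π of Fin N and every γ : Fin N → Fin n. Then there exists T : Fin n → Fin n → (Fin (N−1) → Fin n) → ℝ (two upper indices, N−1 lower indices) such that T a b δ = T b a δ for all a, b, δ, T is symmetric in its lower indices, and for every γ : Fin N → Fin n and every a: Σ_{i ∈ Fin N} Σ_{b ∈ Fin n} U (γ i) b · T a b (γ with the i-th entry removed) = R a γ. -/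
/-- `removeEntry γ i` is the function `Fin (N-1) → Fin n` obtained from `γ : Fin N → Fin n`
by deleting the `i`-th value. -/
def removeEntry {N n : ℕ} (hN : 0 < N) (γ : Fin N → Fin n) (i : Fin N) :
    Fin (N - 1) → Fin n :=
  fun j => γ (Fin.cast (Nat.succ_pred_eq_of_pos hN)
    ((Fin.cast (Nat.succ_pred_eq_of_pos hN).symm i).succAbove j))

lemma map_univ_comp {N n : ℕ} (γ : Fin N → Fin n) (π : Equiv.Perm (Fin N)) :
    Finset.univ.val.map (γ ∘ π) = Finset.univ.val.map γ := by
  rw [← Multiset.map_map, Multiset.map_univ_val_equiv]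

lemma exists_perm_of_map {N n : ℕ} (γ γ' : Fin N → Fin n)
    (h : Finset.univ.val.map γ = Finset.univ.val.map γ') :
    ∃ π : Equiv.Perm (Fin N), γ = γ' ∘ π := by
  have key : γ ∘ Tuple.sort γ = γ' ∘ Tuple.sort γ' := by
    apply List.ofFn_injective
    apply List.Perm.eq_of_sortedLE
    · exact (Tuple.monotone_sort γ).sortedLE_ofFn
    · exact (Tuple.monotone_sort γ').sortedLE_ofFn
    · rw [← Multiset.coe_eq_coe, ← Fin.univ_val_map, ← Fin.univ_val_map, map_univ_comp,
        map_univ_comp, h]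
  refine ⟨(Tuple.sort γ).symm.trans (Tuple.sort γ'), ?_⟩
  funext i
  simpa using congrFun key ((Tuple.sort γ).symm i)

open Multiset in
lemma removeEntry_mset {N n : ℕ} (hN : 0 < N) (γ : Fin N → Fin n) (i : Fin N) :
    γ i ::ₘ (Finset.univ.val.map (removeEntry hN γ i)) = Finset.univ.val.map γ := by
  obtain ⟨M, rfl⟩ : ∃ M, N = M + 1 := ⟨N - 1, by omega⟩
  have : (Finset.univ : Finset (Fin (M+1))).val
      = i ::ₘ (Finset.univ : Finset (Fin M)).val.map i.succAbove := by
    rw [Fin.univ_succAbove M i]; simp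
  rw [this, Multiset.map_cons, Multiset.map_map]
  rfl

open Multiset in
lemma mset_key (n N : ℕ) (hN : 2 ≤ N) (U V : Matrix (Fin n) (Fin n) ℝ) (hUV : U * V = 1)
    (f : Fin n → Multiset (Fin n) → ℝ) :
    ∃ T : Fin n → Fin n → Multiset (Fin n) → ℝ, (∀ a b s, T a b s = T b a s) ∧
      ∀ a s, card s = N → (s.map fun x => ∑ b, U x b * T a b (s.erase x)).sum = f a s := by
  have hd : ∀ (x : Fin n) (g : Fin n → ℝ), ∑ b, U x b * ∑ d, V b d * g d = g x := by
    intro x g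
    have := congrFun (Matrix.mulVec_mulVec g U V) x
    rw [hUV, Matrix.one_mulVec] at this
    exact this
  refine ⟨fun a b s => (1 / (N:ℝ)) * ((∑ d, V b d * f a (d ::ₘ s)) + (∑ d, V a d * f b (d ::ₘ s))
    - (1 / ((N:ℝ) - 1)) * (s.map fun x => ∑ b', V b b' * ∑ a', V a a' * ∑ c, U x c *
        f c (a' ::ₘ b' ::ₘ s.erase x)).sum), ?_, ?_⟩
  · intro a b s
    have : ∀ x : Fin n, (∑ b', V b b' * ∑ a', V a a' * ∑ c, U x c *
        f c (a' ::ₘ b' ::ₘ s.erase x)) = ∑ b', V a b' * ∑ a', V b a' * ∑ c, U x c *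
        f c (a' ::ₘ b' ::ₘ s.erase x) := by
      intro x
      simp only [Finset.mul_sum]
      rw [Finset.sum_comm]
      refine Finset.sum_congr rfl fun i _ => Finset.sum_congr rfl fun j _ => ?_
      refine Finset.sum_congr rfl fun k _ => ?_
      rw [Multiset.cons_swap]; ring
    simp only [this]
    ring
  · intro a s hs
    set H : Fin n → ℝ := fun y => ∑ a', V a a' * ∑ c, U y c * f c (a' ::ₘ s.erase y) with hH
    have h1 : ∀ x ∈ s, (∑ b, U x b * ((1 / (N:ℝ)) * ((∑ d, V b d * f a (d ::ₘ s.erase x))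
        + (∑ d, V a d * f b (d ::ₘ s.erase x))
        - (1 / ((N:ℝ) - 1)) * ((s.erase x).map fun y => ∑ b', V b b' * ∑ a', V a a' * ∑ c, U y c *
        f c (a' ::ₘ b' ::ₘ (s.erase x).erase y)).sum)))
        = (1 / (N:ℝ)) * (f a s + H x - (1 / ((N:ℝ) - 1)) * ((s.map H).sum - H x)) := by
      intro x hx
      have e1 := hd x (fun d => f a (d ::ₘ s.erase x))
      simp only [Multiset.cons_erase hx] at e1
      have e2 : ∑ b, U x b * (∑ d, V a d * f b (d ::ₘ s.erase x)) = H x := by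
        simp only [hH, Finset.mul_sum]
        rw [Finset.sum_comm]
        refine Finset.sum_congr rfl fun i _ => Finset.sum_congr rfl fun j _ => ?_
        ring
      have e3 : ∑ b, U x b * ((s.erase x).map fun y => ∑ b', V b b' * ∑ a', V a a' * ∑ c, U y c *
        f c (a' ::ₘ b' ::ₘ (s.erase x).erase y)).sum = (s.map H).sum - H x := by
        simp only [← Multiset.sum_map_mul_left]
        rw [← Multiset.sum_map_sum]
        have e4 : (s.map H).sum = H x + ((s.erase x).map H).sum := by
          conv_lhs => rw [← Multiset.cons_erase hx]
          rw [Multiset.map_cons, Multiset.sum_cons]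
        rw [e4, add_sub_cancel_left]
        refine congrArg _ (Multiset.map_congr rfl fun y hy => ?_)
        rw [hd x (fun b' => ∑ a', V a a' * ∑ c, U y c *
          f c (a' ::ₘ b' ::ₘ (s.erase x).erase y))]
        have e5 : x ::ₘ (s.erase x).erase y = s.erase y := by
          rw [Multiset.erase_comm, Multiset.cons_erase]
          by_cases hxy : x = y
          · subst hxy; exact hy
          · exact (Multiset.mem_erase_of_ne hxy).2 hx
        simp only [e5, hH]
      rw [← e3, ← e1, ← e2, ← Finset.sum_add_distrib, Finset.mul_sum, ← Finset.sum_sub_distrib,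
        Finset.mul_sum]
      refine Finset.sum_congr rfl fun i _ => ?_
      ring
    rw [Multiset.map_congr rfl h1]
    have hN0 : (N:ℝ) ≠ 0 := by positivity
    have hN1 : (N:ℝ) - 1 ≠ 0 := by
      have : (2:ℝ) ≤ N := by exact_mod_cast hN
      linarith
    rw [Multiset.sum_map_mul_left, Multiset.sum_map_sub, Multiset.sum_map_add,
      Multiset.sum_map_mul_left, Multiset.sum_map_sub]
    simp only [Multiset.map_const', Multiset.sum_replicate, hs, nsmul_eq_mul]
    field_simp
    ring

/-- **Solvability of the order-N tensor equation.**
Let `N ≥ 2`, let `U` be an invertible `n × n` matrix, and let `R` (one upper index, `N`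
lower indices) be symmetric in its lower indices. Then there is a tensor `T` (two upper
indices, `N − 1` lower indices), symmetric in its upper index pair and in its lower
indices, such that for every `γ : Fin N → Fin n` and every `a`:
`Σ_{i} Σ_{b} U (γ i) b · T a b (γ with the i-th entry removed) = R a γ`. -/
theorem tensor_equation_orderN
    (n N : ℕ) (hn : 1 ≤ n) (hN : 2 ≤ N)
    (U : Matrix (Fin n) (Fin n) ℝ) (hU : IsUnit U)
    (R : Fin n → (Fin N → Fin n) → ℝ)
    (hR : ∀ (a : Fin n) (γ : Fin N → Fin n) (π : Equiv.Perm (Fin N)), R a (γ ∘ π) = R a γ) :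
    ∃ T : Fin n → Fin n → (Fin (N - 1) → Fin n) → ℝ,
      (∀ a b δ, T a b δ = T b a δ) ∧
      (∀ (a b : Fin n) (δ : Fin (N - 1) → Fin n) (π : Equiv.Perm (Fin (N - 1))),
        T a b (δ ∘ π) = T a b δ) ∧
      (∀ (a : Fin n) (γ : Fin N → Fin n),
        ∑ i : Fin N, ∑ b : Fin n,
          U (γ i) b * T a b (removeEntry (by omega) γ i) = R a γ) := by
  classical
  obtain ⟨V, hUV⟩ := hU.exists_right_inv
  obtain ⟨f, hf⟩ : ∃ f : Fin n → Multiset (Fin n) → ℝ,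
      ∀ a (γ : Fin N → Fin n), f a (Finset.univ.val.map γ) = R a γ := by
    refine ⟨fun a s => if h : ∃ γ : Fin N → Fin n, Finset.univ.val.map γ = s
      then R a h.choose else 0, fun a γ => ?_⟩
    have h : ∃ γ' : Fin N → Fin n, Finset.univ.val.map γ' = Finset.univ.val.map γ := ⟨γ, rfl⟩
    simp only [dif_pos h]
    obtain ⟨σ, hσ⟩ := exists_perm_of_map _ _ h.choose_spec
    rw [hσ, hR]
  obtain ⟨T, hT1, hT2⟩ := mset_key n N hN U V hUV f
  refine ⟨fun a b δ => T a b (Finset.univ.val.map δ), fun a b δ => hT1 _ _ _, ?_, ?_⟩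
  · intro a b δ π
    have : Finset.univ.val.map (δ ∘ π) = Finset.univ.val.map δ :=
      map_univ_comp δ π
    simp only [this]
  · intro a γ
    have := hT2 a (Finset.univ.val.map γ) (by simp)
    rw [hf, Multiset.map_map] at this
    rw [← this]
    refine Finset.sum_congr rfl fun i _ => ?_
    have e : (Finset.univ.val.map γ).erase (γ i)
      = Finset.univ.val.map (removeEntry (by omega) γ i) := by
      rw [← removeEntry_mset (by omega) γ i, Multiset.erase_cons_head]
    simp only [Function.comp, e]
end

section
/- Let (r_N)_{N≥0} and (t_N)_{N≥0} be sequences of nonnegative real numbers, and let C' ≥ 0, q > 0, K̃ ≥ 0 and n ≥ 1 be constants. Assume that for every N ≥ 2: r_N / N! ≤ C'·qᴺ·( 1 + n·Σ_{k=0}^{N−2} t_k/(k!·qᵏ) ) and t_{N−1} ≤ (K̃ / N)·r_N. Then there exist constants C < ∞ and p < ∞ such that t_N ≤ C·N!·pᴺ for all N ≥ 1. -/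
/-- **Growth bound for the power series coefficients.**
Let `(r_N)` and `(t_N)` be nonnegative sequences, `C' ≥ 0`, `q > 0`, `K̃ ≥ 0`, `n ≥ 1`,
such that for every `N ≥ 2`:
`r_N / N! ≤ C'·qᴺ·(1 + n·Σ_{k=0}^{N-2} t_k/(k!·qᵏ))` and `t_{N-1} ≤ (K̃/N)·r_N`.
Then there are constants `C, p` with `t_N ≤ C·N!·pᴺ` for all `N ≥ 1`. -/
theorem coefficient_growth_bound
    (r t : ℕ → ℝ) (hr : ∀ N, 0 ≤ r N) (ht : ∀ N, 0 ≤ t N)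
    (C' : ℝ) (hC' : 0 ≤ C') (q : ℝ) (hq : 0 < q) (Kt : ℝ) (hKt : 0 ≤ Kt)
    (n : ℕ) (hn : 1 ≤ n)
    (h1 : ∀ N, 2 ≤ N →
      r N / (N.factorial : ℝ) ≤
        C' * q ^ N *
          (1 + (n : ℝ) * ∑ k ∈ Finset.range (N - 1), t k / ((k.factorial : ℝ) * q ^ k)))
    (h2 : ∀ N, 2 ≤ N → t (N - 1) ≤ (Kt / (N : ℝ)) * r N) :
    ∃ C p : ℝ, ∀ N, 1 ≤ N → t N ≤ C * (N.factorial : ℝ) * p ^ N := by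
  obtain ⟨S, hS⟩ : ∃ S : ℕ → ℝ, ∀ m, S m =
      1 + (n : ℝ) * ∑ k ∈ Finset.range m, t k / ((k.factorial : ℝ) * q ^ k) := ⟨_, fun _ => rfl⟩
  have hn0 : (0 : ℝ) ≤ n := Nat.cast_nonneg n
  have hSpos : ∀ m, 0 ≤ S m := by
    intro m
    rw [hS]
    have : 0 ≤ ∑ k ∈ Finset.range m, t k / ((k.factorial : ℝ) * q ^ k) :=
      Finset.sum_nonneg fun k _ => div_nonneg (ht k) (by positivity)
    positivity
  have hA : 0 ≤ Kt * C' * q := by positivity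
  have key : ∀ m, 1 ≤ m → t m ≤ (Kt * C' * q) * S m * ((m.factorial : ℝ) * q ^ m) := by
    intro m hm
    have a := h1 (m + 1) (by omega)
    have b := h2 (m + 1) (by omega)
    simp only [Nat.add_sub_cancel] at a b
    rw [← hS, div_le_iff₀ (by positivity)] at a
    have hm1 : (0 : ℝ) < ((m + 1 : ℕ) : ℝ) := by positivity
    refine b.trans ((mul_le_mul_of_nonneg_left a (by positivity)).trans (le_of_eq ?_))
    rw [Nat.factorial_succ]
    push_cast at hm1 ⊢
    field_simp
    ring
  have step : ∀ m, 1 ≤ m → S (m + 1) ≤ (1 + n * (Kt * C' * q)) * S m := by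
    intro m hm
    have e : S (m + 1) = S m + n * (t m / ((m.factorial : ℝ) * q ^ m)) := by
      rw [hS, hS, Finset.sum_range_succ]; ring
    have c : t m / ((m.factorial : ℝ) * q ^ m) ≤ (Kt * C' * q) * S m := by
      rw [div_le_iff₀ (by positivity)]; exact key m hm
    have := mul_le_mul_of_nonneg_left c hn0
    rw [e]; linarith
  have hB : 1 ≤ 1 + n * (Kt * C' * q) := by
    have := mul_nonneg hn0 hA
    linarith
  have bound : ∀ m, 1 ≤ m → S m ≤ S 1 * (1 + n * (Kt * C' * q)) ^ m := by
    intro m hm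
    induction m, hm using Nat.le_induction with
    | base => rw [pow_one]; exact le_mul_of_one_le_right (hSpos 1) hB
    | succ m hm ih =>
      refine (step m hm).trans ((mul_le_mul_of_nonneg_left ih (by linarith)).trans (le_of_eq ?_))
      ring
  refine ⟨Kt * C' * q * S 1, (1 + n * (Kt * C' * q)) * q, fun N hN => ?_⟩
  refine (key N hN).trans ((mul_le_mul_of_nonneg_right
    (mul_le_mul_of_nonneg_left (bound N hN) hA) (by positivity)).trans (le_of_eq ?_))
  rw [mul_pow]; ring
end

section
/- Let n ≥ 1, let Ω ⊆ ℝⁿ be open and connected, let f : Ω → ℝ and X : Ω → ℝⁿ be smooth, and suppose the gradient ∇f has a unique zero x̄ ∈ Ω, at which f attains its minimum. Assume the Hessian H := D²f(x̄) is nondegenerate and that X and ∇f are real-analytic on a neighbourhood of x̄. Then there exists a smooth map g : Ω → Matrix (Fin n) (Fin n) ℝ with g(x) symmetric positive definite for all x ∈ Ω and ∇f(x) = g(x) · X(x) for all x ∈ Ω, if and only if: (i) ⟨X(x), ∇f(x)⟩ > 0 for all x ∈ Ω with x ≠ x̄; (ii) X(x̄) = 0; (iii) the linear map Λ := DX(x̄)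 : ℝⁿ → ℝⁿ is symmetric and positive with respect to the Hessian scalar product, i.e. ⟨H(Λz), w⟩ = ⟨H z, Λw⟩ for all z, w ∈ ℝⁿ and ⟨H(Λz), z⟩ > 0 for all z ≠ 0. -/
open scoped Topology ContDiff
open Filter

theorem hada {E F : Type*} [NormedAddCommGroup E] [NormedSpace ℝ E] [CompleteSpace E]
    [NormedAddCommGroup F] [NormedSpace ℝ F] [CompleteSpace F] {f : E → F} {x₀ : E}
    (hf : AnalyticAt ℝ f x₀) :
    ∃ A : E → E →L[ℝ] F, AnalyticAt ℝ A x₀ ∧ ∀ᶠ x in 𝓝 x₀, f x = f x₀ + A x (x - x₀) := by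
  obtain ⟨p, r, hp⟩ := hf
  have hr : 0 < p.shift.radius := by
    rw [p.radius_shift]; exact hp.r_pos.trans_le hp.r_le
  have hq := p.shift.hasFPowerSeriesOnBall hr
  refine ⟨fun x => p.shift.sum (x - x₀), ?_, ?_⟩
  · have h1 : AnalyticAt ℝ p.shift.sum (x₀ - x₀) := by
      rw [sub_self]; exact hq.analyticAt
    have h2 : AnalyticAt ℝ (fun x => x - x₀) x₀ := by fun_prop
    exact AnalyticAt.comp (g := p.shift.sum) (f := fun x => x - x₀) h1 h2
  · filter_upwards [Metric.eball_mem_nhds x₀ hp.r_pos] with x hx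
    have hx' : x - x₀ ∈ Metric.eball (0:E) r := by
      simpa [edist_eq_enorm_sub] using hx
    have hx'' : x - x₀ ∈ Metric.eball (0:E) p.shift.radius := by
      rw [p.radius_shift]; exact Metric.eball_subset_eball hp.r_le hx'
    have s1 := hp.hasSum hx'
    have s2 := (hq.hasSum hx'').mapL (ContinuousLinearMap.apply ℝ F (x - x₀))
    rw [zero_add] at s2
    have s3 := (hasSum_nat_add_iff' 1).2 s1
    have : f x - f x₀ = p.shift.sum (x - x₀) (x - x₀) := by
      refine HasSum.unique (L := SummationFilter.unconditional ℕ) (f := fun n => p (n+1) (fun _ => x - x₀)) ?_ ?_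
      · simpa [hp.coeff_zero] using s3
      · have hfun : (fun n => p (n+1) (fun _ => x - x₀)) =
            fun b => ContinuousLinearMap.apply ℝ F (x - x₀) (p.shift b fun _ => x - x₀) := by
          funext k
          show _ = p (k+1) (Fin.snoc (fun _ => x - x₀) (x - x₀))
          congr 1
          funext i
          refine Fin.lastCases ?_ (fun j => ?_) i
          · rw [Fin.snoc_last]
          · rw [Fin.snoc_castSucc]
        rw [hfun]
        exact s2
    rw [← this]; abel

theorem hada_fderiv {E F : Type*} [NormedAddCommGroup E] [NormedSpace ℝ E]
    [NormedAddCommGroup F] [NormedSpace ℝ F]  {f : E → F} {x₀ : E}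
    {A : E → E →L[ℝ] F} (hA : AnalyticAt ℝ A x₀) (c : F)
    (h : ∀ᶠ x in 𝓝 x₀, f x = c + A x (x - x₀)) : HasFDerivAt f (A x₀) x₀ := by
  have h1 : HasFDerivAt (fun x => c + A x (x - x₀)) (A x₀) x₀ := by
    have := (hA.differentiableAt.hasFDerivAt.clm_apply
      ((hasFDerivAt_id x₀).sub_const x₀)).const_add c
    convert this using 1
    all_goals ext v; simp
  exact h1.congr_of_eventuallyEq h

theorem factor {E F : Type*} [NormedAddCommGroup E] [NormedSpace ℝ E] [CompleteSpace E]
    [NormedAddCommGroup F] [NormedSpace ℝ F] [CompleteSpace F] {f : E → F} {X : E → E} {x₀ : E}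
    (hf : AnalyticAt ℝ f x₀) (hX : AnalyticAt ℝ X x₀) (hX0 : X x₀ = 0)
    (e : E ≃L[ℝ] E) (he : fderiv ℝ X x₀ = e) :
    ∃ C : E → E →L[ℝ] F, AnalyticAt ℝ C x₀ ∧ (∀ᶠ x in 𝓝 x₀, f x = f x₀ + C x (X x)) ∧
      ∀ z, C x₀ (fderiv ℝ X x₀ z) = fderiv ℝ f x₀ z := by
  obtain ⟨A, hA, hA'⟩ := hada hX
  obtain ⟨B, hB, hB'⟩ := hada hf
  have hAx : A x₀ = e := by rw [← he]; exact (hada_fderiv hA _ hA').fderiv.symm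
  have hBx : fderiv ℝ f x₀ = B x₀ := (hada_fderiv hB _ hB').fderiv
  refine ⟨fun x => (B x).comp (A x).inverse, ?_, ?_, ?_⟩
  · have h1 : ContDiffAt ℝ ω (fun x => (A x).inverse) x₀ := by
      have h2 : ContDiffAt ℝ ω ContinuousLinearMap.inverse (A x₀) := by
        rw [hAx]; exact contDiffAt_map_inverse e
      exact h2.comp x₀ hA.contDiffAt
    exact ((hB.contDiffAt (n := ω)).clm_comp h1).analyticAt
  · have : ∀ᶠ x in 𝓝 x₀, A x ∈ Set.range ((↑) : (E ≃L[ℝ] E) → (E →L[ℝ] E)) := by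
      apply hA.continuousAt.eventually
      rw [hAx]; exact e.nhds
    filter_upwards [this, hA', hB'] with x h1 h2 h3
    obtain ⟨e', he'⟩ := h1
    rw [h3, h2, hX0, ← he']
    simp
  · intro z
    simp only [hBx, hAx, he]; simp

theorem posDef_nhds {n : ℕ} {E : Type*} [TopologicalSpace E] {x₀ : E}
    (g : E → Matrix (Fin n) (Fin n) ℝ)
    (hc : ∀ i j, ContinuousAt (fun x => g x i j) x₀)
    (hs : ∀ x i j, g x i j = g x j i) (h0 : (g x₀).PosDef) : ∀ᶠ x in 𝓝 x₀, (g x).PosDef := by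
  have hK : IsCompact (Metric.sphere (0 : Fin n → ℝ) 1) := isCompact_sphere _ _
  have key : ∀ᶠ x in 𝓝 x₀, ∀ v ∈ Metric.sphere (0 : Fin n → ℝ) 1,
      0 < ∑ i, v i * ∑ j, g x i j * v j := by
    apply hK.eventually_forall_of_forall_eventually
    intro v hv
    have hv0 : v ≠ 0 := by rintro rfl; simp at hv
    have hpos := h0.dotProduct_mulVec_pos hv0
    have hcont : ContinuousAt (fun z : E × (Fin n → ℝ) =>
        ∑ i, z.2 i * ∑ j, g z.1 i j * z.2 j) (x₀, v) := by
      refine tendsto_finsetSum _ fun i _ => ?_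
      refine ContinuousAt.mul (by fun_prop) ?_
      refine tendsto_finsetSum _ fun j _ => ?_
      refine ContinuousAt.mul ?_ (by fun_prop)
      exact ContinuousAt.comp (f := Prod.fst) (g := fun x => g x i j) (hc i j) continuousAt_fst
    apply hcont.eventually (lt_mem_nhds _)
    simpa [dotProduct, Matrix.mulVec] using hpos
  filter_upwards [key] with x hx
  refine Matrix.PosDef.of_dotProduct_mulVec_pos ?_ ?_
  · ext i j; simp [hs x j i]
  · intro v hv
    have hn : 0 < ‖v‖ := norm_pos_iff.2 hv
    have := hx (‖v‖⁻¹ • v) (by simp [norm_smul, hn.ne'])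
    have e : ∑ i, (‖v‖⁻¹ • v) i * ∑ j, g x i j * (‖v‖⁻¹ • v) j
        = (‖v‖⁻¹)^2 * (star v ⬝ᵥ (g x).mulVec v) := by
      simp only [dotProduct, Matrix.mulVec, Finset.mul_sum, Pi.smul_apply, smul_eq_mul, star_trivial]
      refine Finset.sum_congr rfl fun i _ => Finset.sum_congr rfl fun j _ => by ring
    rw [e] at this
    exact pos_of_mul_pos_right this (by positivity)

theorem outer {n : ℕ} (G X : Fin n → ℝ) (h : 0 < ∑ i, X i * G i) :
    (Matrix.of fun i j => G i * G j / (∑ k, X k * G k) + ((if i = j then 1 else 0)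
      - X i * X j / ∑ k, X k * X k)).PosDef ∧
    (Matrix.of fun i j => G i * G j / (∑ k, X k * G k) + ((if i = j then 1 else 0)
      - X i * X j / ∑ k, X k * X k)).mulVec X = G := by
  set a := ∑ k, X k * G k with ha
  set b := ∑ k, X k * X k with hb
  have hb0 : 0 < b := by
    have : 0 ≤ b := Finset.sum_nonneg fun i _ => mul_self_nonneg _
    refine this.lt_of_ne fun h0 => ?_
    have h1 := (Finset.sum_eq_zero_iff_of_nonneg (fun i _ => mul_self_nonneg (X i))).1 h0.symm
    have : a = 0 := Finset.sum_eq_zero fun i hi => by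
      rw [mul_self_eq_zero.1 (h1 i hi), zero_mul]
    linarith
  have hmv : ∀ v : Fin n → ℝ, ∀ i, (Matrix.of fun i j => G i * G j / a + ((if i = j then 1 else 0)
      - X i * X j / b)).mulVec v i = G i * (∑ j, v j * G j) / a + (v i - X i * (∑ j, v j * X j) / b) := by
    intro v i
    simp only [Matrix.mulVec, dotProduct, Matrix.of_apply, add_mul, sub_mul, Finset.sum_add_distrib,
      Finset.sum_sub_distrib, ite_mul, one_mul, zero_mul, Finset.sum_ite_eq, Finset.mem_univ, if_true,
      Finset.mul_sum, Finset.sum_div]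
    congr 1
    · exact Finset.sum_congr rfl fun j _ => by ring
    · congr 1
      exact Finset.sum_congr rfl fun j _ => by ring
  constructor
  · refine Matrix.PosDef.of_dotProduct_mulVec_pos ?_ ?_
    · ext i j; simp [mul_comm (G i), mul_comm (X i), eq_comm]
    · intro v hv
      set p := ∑ j, v j * G j with hp
      set q := ∑ j, v j * X j with hq
      have e : star v ⬝ᵥ (Matrix.of fun i j => G i * G j / a + ((if i = j then 1 else 0)
      - X i * X j / b)).mulVec v = p ^ 2 / a + ∑ i, (v i - q / b * X i) ^ 2 := by
        have e1 : ∑ i, (v i - q / b * X i) ^ 2 = ∑ i, v i * v i - q ^ 2 / b := by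
          have : ∀ i, (v i - q / b * X i) ^ 2 = v i * v i - 2 * (q / b) * (v i * X i)
            + (q / b)^2 * (X i * X i) := fun i => by ring
          simp only [this, Finset.sum_add_distrib, Finset.sum_sub_distrib, ← Finset.mul_sum, ← hq, ← hb]
          field_simp
          ring
        rw [e1]
        simp only [dotProduct, hmv, star_trivial]
        have : ∀ i, v i * (G i * p / a + (v i - X i * q / b)) = p / a * (v i * G i) + v i * v i
          - q / b * (v i * X i) := fun i => by ring
        rw [← hp, ← hq]
        simp only [this, Finset.sum_add_distrib, Finset.sum_sub_distrib, ← Finset.mul_sum, ← hq, ← hp]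
        ring
      rw [e]
      have n1 : 0 ≤ p ^ 2 / a := by positivity
      have n2 : 0 ≤ ∑ i, (v i - q / b * X i) ^ 2 := Finset.sum_nonneg fun i _ => sq_nonneg _
      refine (add_nonneg n1 n2).lt_of_ne fun h0 => hv ?_
      have z1 : p ^ 2 / a = 0 := by linarith
      have z2 : ∑ i, (v i - q / b * X i) ^ 2 = 0 := by linarith
      have z3 := (Finset.sum_eq_zero_iff_of_nonneg (fun i _ => sq_nonneg _)).1 z2
      have z4 : ∀ i, v i = q / b * X i := fun i => by
        have := pow_eq_zero_iff (two_ne_zero) |>.1 (z3 i (Finset.mem_univ i)); linarith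
      have z5 : p = q / b * a := by
        rw [hp, ha, Finset.mul_sum]
        exact Finset.sum_congr rfl fun i _ => by rw [z4 i]; ring
      have z6 : p = 0 := by
        rcases div_eq_zero_iff.1 z1 with h | h
        · exact pow_eq_zero_iff two_ne_zero |>.1 h
        · linarith
      have z7 : q / b = 0 := by
        rcases mul_eq_zero.1 (z5.symm.trans z6) with h | h
        · exact h
        · linarith
      ext i; rw [z4 i, z7]; simp
  · ext i
    rw [hmv, ← ha, ← hb]
    field_simp
    ring

theorem fderiv_comp_coord {n : ℕ} {F : (Fin n → ℝ) → (Fin n → ℝ)} {x₀ : Fin n → ℝ}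
    (h : ∀ j, DifferentiableAt ℝ (fun x => F x j) x₀) (z : Fin n → ℝ) (j : Fin n) :
    fderiv ℝ (fun x => F x j) x₀ z = fderiv ℝ F x₀ z j := by
  rw [fderiv_apply (differentiableAt_pi.2 h)]; rfl

theorem localg {n : ℕ} {G X : (Fin n → ℝ) → (Fin n → ℝ)} {x₀ : Fin n → ℝ}
    (hG : AnalyticAt ℝ G x₀) (hX : AnalyticAt ℝ X x₀) (hX0 : X x₀ = 0) (hG0 : G x₀ = 0)
    (e : (Fin n → ℝ) ≃L[ℝ] (Fin n → ℝ)) (he : fderiv ℝ X x₀ = e)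
    (hsymm : ∀ z w, ∑ i, fderiv ℝ G x₀ z i * fderiv ℝ X x₀ w i
      = ∑ i, fderiv ℝ G x₀ w i * fderiv ℝ X x₀ z i)
    (hpos : ∀ z, z ≠ 0 → 0 < ∑ i, fderiv ℝ G x₀ z i * fderiv ℝ X x₀ z i) :
    ∃ g : (Fin n → ℝ) → Matrix (Fin n) (Fin n) ℝ, (∀ i j, AnalyticAt ℝ (fun x => g x i j) x₀) ∧
      (∀ᶠ x in 𝓝 x₀, (g x).PosDef) ∧ (∀ᶠ x in 𝓝 x₀, G x = (g x).mulVec (X x)) := by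
  obtain ⟨C, hC, hC1, hC2⟩ := factor hG hX hX0 e he
  obtain ⟨D, hD, hD1, -⟩ := factor hC hX hX0 e he
  let r : (Fin n → ℝ) → Fin n → Fin n → Fin n → ℝ := fun x i j k =>
    (D x (Pi.single k 1) (Pi.single j 1) i + D x (Pi.single j 1) (Pi.single k 1) i) / 2
  let M : Matrix (Fin n) (Fin n) ℝ := Matrix.of fun i j => C x₀ (Pi.single j 1) i
  let g : (Fin n → ℝ) → Matrix (Fin n) (Fin n) ℝ := fun x => Matrix.of fun i j =>
    M i j + ∑ k, (r x i j k + r x j i k - r x k i j) * X x k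
  have hrs : ∀ x i j k, r x i j k = r x i k j := fun x i j k => by simp only [r]; ring
  have expand : ∀ (T : (Fin n → ℝ) →L[ℝ] (Fin n → ℝ)) v i, T v i = ∑ j, T (Pi.single j 1) i * v j := by
    intro T v i
    conv_lhs => rw [← Finset.univ_sum_single v]
    rw [map_sum, Finset.sum_apply]
    refine Finset.sum_congr rfl fun j _ => ?_
    have : (Pi.single j (v j) : Fin n → ℝ) = v j • Pi.single j 1 := by
      rw [← Pi.single_smul]; simp
    rw [this, map_smul]; simp [mul_comm]
  have hMv : ∀ v i, M.mulVec v i = C x₀ v i := fun v i => by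
    rw [expand]; rfl
  have hbil : ∀ v w, ∑ i, C x₀ v i * w i = ∑ i, C x₀ w i * v i := by
    intro v w
    obtain ⟨z, rfl⟩ := e.surjective v
    obtain ⟨u, rfl⟩ := e.surjective w
    have := hsymm z u
    rw [← hC2, ← hC2, he] at this
    exact this
  have hMs : ∀ i j, M i j = M j i := by
    intro i j
    have := hbil (Pi.single j 1) (Pi.single i 1)
    show C x₀ (Pi.single j 1) i = C x₀ (Pi.single i 1) j
    simpa [Pi.single_apply] using this
  have hMpos : M.PosDef := by
    refine Matrix.PosDef.of_dotProduct_mulVec_pos ?_ ?_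
    · ext i j; simp [hMs j i]
    · intro v hv
      obtain ⟨z, rfl⟩ := e.surjective v
      have := hpos z (by rintro rfl; simp at hv)
      rw [← hC2, he] at this
      simp only [dotProduct, hMv, star_trivial]
      simpa [mul_comm] using this
  have hD' : ∀ u v i, AnalyticAt ℝ (fun x => D x u v i) x₀ := by
    intro u v i
    have h1 : AnalyticAt ℝ (fun x => D x u v) x₀ :=
      (((hD.contDiffAt (n := ω)).clm_apply contDiffAt_const).clm_apply contDiffAt_const).analyticAt
    exact analyticAt_pi_iff.1 h1 i
  have hX' : ∀ k, AnalyticAt ℝ (fun x => X x k) x₀ := analyticAt_pi_iff.1 hX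
  have hr' : ∀ i j k, AnalyticAt ℝ (fun x => r x i j k) x₀ := fun i j k =>
    ((hD' _ _ _).add (hD' _ _ _)).div_const
  have hga : ∀ i j, AnalyticAt ℝ (fun x => g x i j) x₀ := by
    intro i j
    refine analyticAt_const.add ?_
    refine Finset.analyticAt_fun_sum _ fun k _ => ?_
    exact (((hr' _ _ _).add (hr' _ _ _)).sub (hr' _ _ _)).mul (hX' k)
  refine ⟨g, hga, ?_, ?_⟩
  · refine posDef_nhds g (fun i j => (hga i j).continuousAt) ?_ ?_
    · intro x i j
      simp only [g, Matrix.of_apply]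
      rw [hMs i j]
      congr 1
      refine Finset.sum_congr rfl fun k _ => ?_
      rw [hrs x k i j]; ring
    · have : g x₀ = M := by
        ext i j; simp [g, hX0]
      rwa [this]
  · filter_upwards [hC1, hD1] with x h1 h2
    ext i
    have e1 : D x (X x) (X x) i = ∑ j, ∑ k, r x i j k * (X x j * X x k) := by
      have e2 : D x (X x) (X x) i
          = ∑ j, ∑ k, D x (Pi.single k 1) (Pi.single j 1) i * (X x j * X x k) := by
        rw [expand]
        refine Finset.sum_congr rfl fun j _ => ?_
        have := expand ((D x).flip (Pi.single j 1)) (X x) i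
        simp only [ContinuousLinearMap.flip_apply] at this
        rw [this, Finset.sum_mul]
        exact Finset.sum_congr rfl fun k _ => by ring
      have e3 : D x (X x) (X x) i
          = ∑ j, ∑ k, D x (Pi.single j 1) (Pi.single k 1) i * (X x j * X x k) := by
        rw [e2, Finset.sum_comm]
        exact Finset.sum_congr rfl fun k _ => Finset.sum_congr rfl fun j _ => by ring
      have : D x (X x) (X x) i = (D x (X x) (X x) i + D x (X x) (X x) i) / 2 := by ring
      rw [this]
      nth_rewrite 1 [e2]
      rw [e3, ← Finset.sum_add_distrib, Finset.sum_div]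
      refine Finset.sum_congr rfl fun j _ => ?_
      rw [← Finset.sum_add_distrib, Finset.sum_div]
      exact Finset.sum_congr rfl fun k _ => by simp only [r]; ring
    have e4 : (g x).mulVec (X x) i = M.mulVec (X x) i +
        ∑ j, ∑ k, (r x i j k + r x j i k - r x k i j) * (X x j * X x k) := by
      simp only [Matrix.mulVec, dotProduct, g, Matrix.of_apply, add_mul, Finset.sum_add_distrib]
      congr 1
      refine Finset.sum_congr rfl fun j _ => ?_
      rw [Finset.sum_mul]
      exact Finset.sum_congr rfl fun k _ => by ring
    have e5 : ∑ j, ∑ k, (r x i j k + r x j i k - r x k i j) * (X x j * X x k)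
        = ∑ j, ∑ k, r x i j k * (X x j * X x k) := by
      simp only [add_mul, sub_mul, Finset.sum_add_distrib, Finset.sum_sub_distrib]
      have : ∑ j, ∑ k, r x k i j * (X x j * X x k) = ∑ j, ∑ k, r x j i k * (X x j * X x k) := by
        rw [Finset.sum_comm]
        exact Finset.sum_congr rfl fun k _ => Finset.sum_congr rfl fun j _ => by ring
      rw [this]; ring
    rw [e4, e5, ← e1, h1, h2, hG0, hMv]
    simp

theorem gradient_case_characterisation
    (n : ℕ) (hn : 1 ≤ n) (Ω : Set (Fin n → ℝ)) (hΩ : IsOpen Ω) (hconn : IsConnected Ω)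
    (f : (Fin n → ℝ) → ℝ) (X : (Fin n → ℝ) → (Fin n → ℝ))
    (hf : ContDiffOn ℝ (⊤ : ℕ∞) f Ω) (hX : ContDiffOn ℝ (⊤ : ℕ∞) X Ω)
    (gradf : (Fin n → ℝ) → (Fin n → ℝ))
    (hgrad : ∀ x ∈ Ω, ∀ v : Fin n → ℝ, fderiv ℝ f x v = ∑ i, gradf x i * v i)
    (x₀ : Fin n → ℝ) (hx₀ : x₀ ∈ Ω)
    (huniq : ∀ x ∈ Ω, (gradf x = 0 ↔ x = x₀))
    (hmin : ∀ x ∈ Ω, f x₀ ≤ f x)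
    (H : Matrix (Fin n) (Fin n) ℝ)
    (hH : ∀ i j, H i j =
      fderiv ℝ (fun y => fderiv ℝ f y (Pi.single j 1)) x₀ (Pi.single i 1))
    (hHnd : IsUnit H)
    (hana : ∃ V : Set (Fin n → ℝ), IsOpen V ∧ x₀ ∈ V ∧
      AnalyticOnNhd ℝ X V ∧ AnalyticOnNhd ℝ gradf V) :
    (∃ g : (Fin n → ℝ) → Matrix (Fin n) (Fin n) ℝ,
      (∀ i j, ContDiffOn ℝ (⊤ : ℕ∞) (fun x => g x i j) Ω) ∧
      (∀ x ∈ Ω, (g x).PosDef) ∧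
      (∀ x ∈ Ω, gradf x = (g x).mulVec (X x)))
    ↔
    ((∀ x ∈ Ω, x ≠ x₀ → 0 < ∑ i, X x i * gradf x i) ∧
     (X x₀ = 0) ∧
     ((∀ z w : Fin n → ℝ,
        ∑ i, H.mulVec (fderiv ℝ X x₀ z) i * w i = ∑ i, H.mulVec z i * fderiv ℝ X x₀ w i) ∧
      (∀ z : Fin n → ℝ, z ≠ 0 → 0 < ∑ i, H.mulVec (fderiv ℝ X x₀ z) i * z i))) := by
  have hG : ∀ x ∈ Ω, ∀ j, gradf x j = fderiv ℝ f x (Pi.single j 1) := by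
    intro x hx j
    rw [hgrad x hx]; simp [Pi.single_apply]
  have hfd : ContDiffOn ℝ (⊤ : ℕ∞) (fderiv ℝ f) Ω :=
    hf.fderiv_of_isOpen hΩ (by exact_mod_cast le_top)
  have hGs : ∀ j, ContDiffOn ℝ (⊤ : ℕ∞) (fun x => gradf x j) Ω := fun j =>
    (hfd.clm_apply contDiffOn_const).congr fun x hx => hG x hx j
  have hXs : ∀ j, ContDiffOn ℝ (⊤ : ℕ∞) (fun x => X x j) Ω := contDiffOn_pi.1 hX
  have hΩn : ∀ x ∈ Ω, Ω ∈ 𝓝 x := fun x hx => hΩ.mem_nhds hx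
  have hGd : ∀ j, DifferentiableAt ℝ (fun x => gradf x j) x₀ := fun j =>
    ((hGs j).contDiffAt (hΩn _ hx₀)).differentiableAt (by simp)
  have hXd : ∀ j, DifferentiableAt ℝ (fun x => X x j) x₀ := fun j =>
    ((hXs j).contDiffAt (hΩn _ hx₀)).differentiableAt (by simp)
  have hfdd : DifferentiableAt ℝ (fderiv ℝ f) x₀ :=
    (hfd.contDiffAt (hΩn _ hx₀)).differentiableAt (by simp)
  have hH2 : ∀ i j, H i j = fderiv ℝ (fderiv ℝ f) x₀ (Pi.single i 1) (Pi.single j 1) := by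
    intro i j
    rw [hH, fderiv_clm_apply hfdd (differentiableAt_const _)]
    simp
  have hHs : ∀ i j, H i j = H j i := by
    intro i j
    rw [hH2, hH2]
    refine ContDiffAt.isSymmSndFDerivAt (hf.contDiffAt (hΩn _ hx₀)) ?_ _ _
    simp only [minSmoothness_of_isRCLikeNormedField]
    exact WithTop.coe_le_coe.2 (le_top : (2 : ℕ∞) ≤ ⊤)
  have hDG : ∀ z j, fderiv ℝ gradf x₀ z j = H.mulVec z j := by
    intro z j
    rw [← fderiv_comp_coord hGd]
    have h1 : (fun x => gradf x j) =ᶠ[𝓝 x₀] fun x => fderiv ℝ f x (Pi.single j 1) := by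
      filter_upwards [hΩn _ hx₀] with x hx using hG x hx j
    rw [h1.fderiv_eq]
    conv_lhs => rw [← Finset.univ_sum_single z]
    rw [map_sum]
    simp only [Matrix.mulVec, dotProduct]
    refine Finset.sum_congr rfl fun i _ => ?_
    have : (Pi.single i (z i) : Fin n → ℝ) = z i • Pi.single i 1 := by
      rw [← Pi.single_smul]; simp
    rw [this, map_smul, ← hH, hHs i j, smul_eq_mul, mul_comm]
  have hHadj : ∀ z w : Fin n → ℝ, ∑ i, H.mulVec z i * w i = ∑ i, H.mulVec w i * z i := by
    intro z w
    simp only [Matrix.mulVec, dotProduct, Finset.sum_mul]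
    rw [Finset.sum_comm]
    refine Finset.sum_congr rfl fun i _ => Finset.sum_congr rfl fun j _ => ?_
    rw [hHs]; ring
  have hG0 : gradf x₀ = 0 := (huniq x₀ hx₀).2 rfl
  obtain ⟨V, hV, hxV, hXan, hGan⟩ := hana
  constructor
  · rintro ⟨g, hgs, hgp, hgX⟩
    have hX0 : X x₀ = 0 := by
      by_contra h
      have := (hgp x₀ hx₀).dotProduct_mulVec_pos h
      rw [← hgX x₀ hx₀, hG0] at this
      simp at this
    have hgd : ∀ i j, DifferentiableAt ℝ (fun x => g x i j) x₀ := fun i j =>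
      ((hgs i j).contDiffAt (hΩn _ hx₀)).differentiableAt (by simp)
    have hD : ∀ z, H.mulVec z = (g x₀).mulVec (fderiv ℝ X x₀ z) := by
      intro z
      ext i
      rw [← hDG, ← fderiv_comp_coord hGd]
      have h1 : (fun x => gradf x i) =ᶠ[𝓝 x₀] fun x => ∑ j, g x i j * X x j := by
        filter_upwards [hΩn _ hx₀] with x hx
        rw [hgX x hx]; rfl
      rw [h1.fderiv_eq, fderiv_fun_sum (fun j _ => (hgd i j).fun_mul (hXd j))]
      simp only [ContinuousLinearMap.sum_apply, Matrix.mulVec, dotProduct]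
      refine Finset.sum_congr rfl fun j _ => ?_
      rw [fderiv_fun_mul (hgd i j) (hXd j), ← fderiv_comp_coord hXd]
      simp [hX0]
    have hgadj : ∀ z w : Fin n → ℝ, ∑ i, (g x₀).mulVec z i * w i = ∑ i, (g x₀).mulVec w i * z i := by
      intro z w
      simp only [Matrix.mulVec, dotProduct, Finset.sum_mul]
      rw [Finset.sum_comm]
      refine Finset.sum_congr rfl fun i _ => Finset.sum_congr rfl fun j _ => ?_
      have := (hgp x₀ hx₀).isHermitian.apply i j
      rw [← this]; simp; ring
    refine ⟨?_, hX0, ?_, ?_⟩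
    · intro x hx hne
      have hXx : X x ≠ 0 := by
        intro h0
        apply hne
        rw [← huniq x hx, hgX x hx, h0, Matrix.mulVec_zero]
      have := (hgp x hx).dotProduct_mulVec_pos hXx
      rw [← hgX x hx] at this
      simpa [dotProduct] using this
    · intro z w
      rw [hHadj, hD, hD, hgadj]
    · intro z hz
      rw [hHadj, hD]
      have hne : fderiv ℝ X x₀ z ≠ 0 := by
        intro h0
        apply hz
        have h1 := hD z
        rw [h0, Matrix.mulVec_zero] at h1
        exact (Matrix.mulVec_injective_iff_isUnit.2 hHnd) (by rw [h1, Matrix.mulVec_zero])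
      have := (hgp x₀ hx₀).dotProduct_mulVec_pos hne
      simpa [dotProduct, mul_comm] using this
  · rintro ⟨h1, hX0, h2, h3⟩
    have hinj : Function.Injective (fderiv ℝ X x₀) := by
      refine (injective_iff_map_eq_zero _).2 fun z hz => ?_
      by_contra hne
      have := h3 z hne
      rw [hz] at this
      simp at this
    let e : (Fin n → ℝ) ≃L[ℝ] (Fin n → ℝ) :=
      (LinearEquiv.ofInjectiveEndo (fderiv ℝ X x₀ : (Fin n → ℝ) →ₗ[ℝ] (Fin n → ℝ))
        hinj).toContinuousLinearEquiv
    have he : fderiv ℝ X x₀ = e := by ext z; simp [e]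
    obtain ⟨g₁, hg₁a, hg₁p, hg₁X⟩ := localg (hGan x₀ hxV) (hXan x₀ hxV) hX0 hG0 e he
      (by
        intro z w
        simp only [hDG]
        rw [← h2, hHadj])
      (by
        intro z hz
        simp only [hDG]
        rw [← h2]; exact h3 z hz)
    have hev : ∀ᶠ x in 𝓝 x₀, (∀ i j, AnalyticAt ℝ (fun x => g₁ x i j) x) ∧ (g₁ x).PosDef ∧
        gradf x = (g₁ x).mulVec (X x) := by
      refine Filter.Eventually.and ?_ (hg₁p.and hg₁X)
      exact eventually_all.2 fun i => eventually_all.2 fun j => (hg₁a i j).eventually_analyticAt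
    obtain ⟨ε, hε, hball⟩ := Metric.nhds_basis_closedBall.eventually_iff.1 hev
    let χ : ContDiffBump x₀ := ⟨ε / 2, ε, by positivity, by linarith⟩
    let g₂ : (Fin n → ℝ) → Matrix (Fin n) (Fin n) ℝ := fun x => Matrix.of fun i j =>
      gradf x i * gradf x j / (∑ k, X x k * gradf x k) + ((if i = j then 1 else 0)
      - X x i * X x j / ∑ k, X x k * X x k)
    have hg₂ : ∀ x ∈ Ω, x ≠ x₀ → (g₂ x).PosDef ∧ (g₂ x).mulVec (X x) = gradf x := fun x hx hne =>
      outer _ _ (h1 x hx hne)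
    have hg₂s : ∀ x ∈ Ω, x ≠ x₀ → ∀ i j, ContDiffAt ℝ (⊤ : ℕ∞) (fun x => g₂ x i j) x := by
      intro x hx hne i j
      have hGa := fun k => (hGs k).contDiffAt (hΩn x hx)
      have hXa := fun k => (hXs k).contDiffAt (hΩn x hx)
      have hp := h1 x hx hne
      have hb : ∑ k, X x k * X x k ≠ 0 := by
        intro h0
        have h4 := (Finset.sum_eq_zero_iff_of_nonneg (fun i _ => mul_self_nonneg (X x i))).1 h0
        have : ∑ k, X x k * gradf x k = 0 := Finset.sum_eq_zero fun i hi => by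
          rw [mul_self_eq_zero.1 (h4 i hi), zero_mul]
        linarith
      refine ContDiffAt.add ?_ (contDiffAt_const.sub ?_)
      · exact ((hGa i).mul (hGa j)).div
          (ContDiffAt.sum fun k _ => (hXa k).mul (hGa k)) hp.ne'
      · exact ((hXa i).mul (hXa j)).div
          (ContDiffAt.sum fun k _ => (hXa k).mul (hXa k)) hb
    refine ⟨fun x => χ x • g₁ x + (1 - χ x) • g₂ x, ?_, ?_, ?_⟩
    · intro i j x hx
      apply ContDiffAt.contDiffWithinAt
      simp only [Matrix.add_apply, Matrix.smul_apply, smul_eq_mul]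
      by_cases hne : x = x₀
      · subst hne
        have : (fun y => χ y * g₁ y i j + (1 - χ y) * g₂ y i j) =ᶠ[𝓝 x] fun y => g₁ y i j := by
          filter_upwards [χ.eventuallyEq_one] with y hy
          rw [hy]; simp
        exact ContDiffAt.congr_of_eventuallyEq (hg₁a i j).contDiffAt this
      · refine ContDiffAt.add ?_ ((contDiffAt_const.sub χ.contDiffAt).mul (hg₂s x hx hne i j))
        by_cases hxb : x ∈ Metric.closedBall x₀ ε
        · exact χ.contDiffAt.mul ((hball hxb).1 i j).contDiffAt
        · have : (fun y => χ y * g₁ y i j) =ᶠ[𝓝 x] fun _ => 0 := by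
            filter_upwards [Metric.isClosed_closedBall.isOpen_compl.mem_nhds hxb] with y hy
            have : χ y = 0 := χ.zero_of_le_dist (by
              simp only [Set.mem_compl_iff, Metric.mem_closedBall, not_le] at hy
              exact hy.le)
            rw [this, zero_mul]
          exact contDiffAt_const.congr_of_eventuallyEq this
    · intro x hx
      by_cases hne : x = x₀
      · subst hne
        have h5 : χ x = 1 := χ.eventuallyEq_one.self_of_nhds
        simp only [h5, sub_self, zero_smul, add_zero, one_smul]
        exact (hball (Metric.mem_closedBall_self hε.le)).2.1
      · by_cases hxb : x ∈ Metric.ball x₀ ε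
        · have h6 : 0 < χ x := χ.pos_of_mem_ball hxb
          have h7 : χ x ≤ 1 := χ.le_one
          exact ((hball (Metric.ball_subset_closedBall hxb)).2.1.smul h6).add_posSemidef
            ((hg₂ x hx hne).1.posSemidef.smul (by linarith))
        · have h6 : χ x = 0 := χ.zero_of_le_dist (by simpa using hxb)
          simp only [h6, sub_zero, zero_smul, zero_add, one_smul]
          exact (hg₂ x hx hne).1
    · intro x hx
      rw [Matrix.add_mulVec, Matrix.smul_mulVec, Matrix.smul_mulVec]
      by_cases hne : x = x₀
      · subst hne
        rw [hX0, hG0]; simp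
      · rw [(hg₂ x hx hne).2]
        by_cases hxb : x ∈ Metric.ball x₀ ε
        · rw [← (hball (Metric.ball_subset_closedBall hxb)).2.2, ← add_smul]
          simp
        · have h6 : χ x = 0 := χ.zero_of_le_dist (by simpa using hxb)
          simp [h6]
end

section
/- Let n ≥ 1, let H ∈ Matrix (Fin n) (Fin n) ℝ be symmetric and invertible, and let Λ ∈ Matrix (Fin n) (Fin n) ℝ. Then the following are equivalent: (1) there exists a symmetric positive definite matrix Ḡ ∈ Matrix (Fin n) (Fin n) ℝ such that Λ = Ḡ · H; (2) the bilinear form (z, w) ↦ ⟨H·(Λ·z), w⟩ is symmetric (i.e. ⟨H·(Λ·z), w⟩ = ⟨H·z, Λ·w⟩ for all z, w ∈ ℝⁿ) and positive definite (i.e. ⟨H·(Λ·z), z⟩ > 0 for all z ≠ 0). -/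
/-- **Reduction of the critical-point compatibility condition to symmetry and
positivity with respect to the Hessian scalar product.**
Let `H` be a symmetric invertible real `n × n` matrix and `Λ` any real `n × n` matrix.
Then there exists a symmetric positive definite `Ḡ` with `Λ = Ḡ · H` iff the bilinear
form `(z, w) ↦ ⟨H·(Λ·z), w⟩` is symmetric and positive definite. -/
theorem posdef_factorisation_iff
    (n : ℕ) (hn : 1 ≤ n) (H : Matrix (Fin n) (Fin n) ℝ)
    (hHsymm : H.IsSymm) (hHinv : IsUnit H) (L : Matrix (Fin n) (Fin n) ℝ) :
    (∃ Gbar : Matrix (Fin n) (Fin n) ℝ, Gbar.PosDef ∧ L = Gbar * H)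
    ↔
    ((∀ z w : Fin n → ℝ,
        ∑ i, H.mulVec (L.mulVec z) i * w i = ∑ i, H.mulVec z i * L.mulVec w i) ∧
     (∀ z : Fin n → ℝ, z ≠ 0 → 0 < ∑ i, H.mulVec (L.mulVec z) i * z i)) := by
  have hHH : star H = H := by
    rw [Matrix.star_eq_conjTranspose, Matrix.conjTranspose_eq_transpose_of_trivial]
    exact hHsymm
  have key : ∀ z w : Fin n → ℝ, ∑ i, H.mulVec z i * L.mulVec w i
      = ((L.transpose * H).mulVec z) ⬝ᵥ w := by
    intro z w
    change H.mulVec z ⬝ᵥ L.mulVec w = _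
    rw [Matrix.dotProduct_mulVec, ← Matrix.mulVec_transpose, Matrix.mulVec_mulVec]
  have key2 : ∀ z w : Fin n → ℝ, ∑ i, H.mulVec (L.mulVec z) i * w i
      = ((H * L).mulVec z) ⬝ᵥ w := by
    intro z w
    change H.mulVec (L.mulVec z) ⬝ᵥ w = _
    rw [Matrix.mulVec_mulVec]
  have h2 : ((∀ z w : Fin n → ℝ,
        ∑ i, H.mulVec (L.mulVec z) i * w i = ∑ i, H.mulVec z i * L.mulVec w i) ∧
     (∀ z : Fin n → ℝ, z ≠ 0 → 0 < ∑ i, H.mulVec (L.mulVec z) i * z i)) ↔ (H * L).PosDef := by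
    simp only [key, key2]
    rw [Matrix.posDef_iff_dotProduct_mulVec]
    have hT : (H * L).conjTranspose = L.transpose * H := by
      rw [Matrix.conjTranspose_eq_transpose_of_trivial, Matrix.transpose_mul, hHsymm.eq]
    refine and_congr ⟨fun h => ?_, fun h z w => ?_⟩ ?_
    · rw [Matrix.IsHermitian, hT]
      refine Matrix.ext_of_mulVec_single fun i => ?_
      exact (dotProduct_eq _ _ fun w => h _ w).symm
    · rw [← hT, h.eq]
    · refine forall_congr' fun z => imp_congr_right fun _ => ?_
      rw [star_trivial, dotProduct_comm]
  rw [h2]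
  constructor
  · rintro ⟨G, hG, rfl⟩
    have := (Matrix.IsUnit.posDef_star_left_conjugate_iff hHinv).2 hG
    rwa [hHH, Matrix.mul_assoc] at this
  · intro h
    have hd := (Matrix.isUnit_iff_isUnit_det H).1 hHinv
    refine ⟨L * H⁻¹, ?_, ?_⟩
    · refine (Matrix.IsUnit.posDef_star_left_conjugate_iff hHinv).1 ?_
      rwa [hHH, Matrix.mul_assoc, Matrix.nonsing_inv_mul_cancel_right _ _ hd]
    · rw [Matrix.nonsing_inv_mul_cancel_right _ _ hd]
end

section
/- Let n ≥ 1, k ∈ ℕ, let Ω ⊆ ℝⁿ be open, and let X, Y : Ω → ℝⁿ be of class C^{k+1}. Assume that at every point m ∈ Ω with Y(m) = 0 the derivative DY(m) is invertible. Then there exists a map g : Ω → Matrix (Fin n) (Fin n) ℝ of class C^k with g(x) symmetric positive definite for all x ∈ Ω and Y(x) = g(x) · X(x) for all x ∈ Ω, if and only if the following three conditions hold: (i) ⟨X(m), Y(m)⟩ > 0 for every m ∈ Ω with Y(m) ≠ 0; (ii) X(m) = 0 for every m ∈ Ω with Y(m) = 0; (iii) for every m ∈ Ω with Y(m) = 0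 there exists a symmetric positive definite matrix ḡ ∈ Matrix (Fin n) (Fin n) ℝ such that DY(m) v = ḡ · (DX(m) v) for all v ∈ ℝⁿ. -/
namespace CkMain
open scoped ContDiff Topology

noncomputable def pd {n : ℕ} (i : Fin n) (f : (Fin n → ℝ) → ℝ) : (Fin n → ℝ) → ℝ :=
  fun z => fderiv ℝ f z (Pi.single i 1)

noncomputable def H {n : ℕ} : ℕ → ((Fin n → ℝ) → ℝ) → (Fin n → ℝ) → ℝ
  | 0, f => fun _ => f 0
  | j+1, f => fun z => (1/((j:ℝ)+1)) * ∑ i, z i * H j (pd i f) z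

def Fl {n : ℕ} : ℕ → ((Fin n → ℝ) → ℝ) → Prop
  | 0, f => Continuous f ∧ f 0 = 0
  | K+1, f => Differentiable ℝ f ∧ f 0 = 0 ∧ ∀ i, Fl K (pd i f)

variable {n : ℕ}

lemma pd_contDiff {K : ℕ} {f : (Fin n → ℝ) → ℝ} (hf : ContDiff ℝ (K+1) f) (i : Fin n) :
    ContDiff ℝ K (pd i f) :=
  (contDiff_succ_iff_fderiv_apply.1 hf).2.2 _

lemma pd_comm {f : (Fin n → ℝ) → ℝ} (hf : ContDiff ℝ 2 f) (i j : Fin n) :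
    pd i (pd j f) = pd j (pd i f) := by
  have hd : Differentiable ℝ (fderiv ℝ f) :=
    (hf.fderiv_right (m := 1) (by norm_num)).differentiable (by norm_num)
  funext z
  have hs := (hf.contDiffAt (x := z)).isSymmSndFDerivAt (by simp)
  have key : ∀ a b : Fin n, pd a (pd b f) z
      = fderiv ℝ (fderiv ℝ f) z (Pi.single a 1) (Pi.single b 1) := by
    intro a b
    have : HasFDerivAt (pd b f) ((fderiv ℝ (fderiv ℝ f) z).flip (Pi.single b 1)) z := by
      have := (hd z).hasFDerivAt.clm_apply (hasFDerivAt_const (Pi.single b (1:ℝ)) z)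
      simpa using! this
    unfold pd at this ⊢
    rw [this.fderiv]; rfl
  rw [key, key]; exact hs _ _

lemma H_contDiff (j : ℕ) : ∀ f : (Fin n → ℝ) → ℝ, ContDiff ℝ ∞ (H j f) := by
  induction j with
  | zero => intro f; exact contDiff_const
  | succ j ih =>
    intro f
    unfold H
    refine contDiff_const.mul (ContDiff.sum fun i _ => ?_)
    exact (contDiff_apply ℝ ℝ i).mul (ih _)

lemma H_diff (j : ℕ) (f : (Fin n → ℝ) → ℝ) : Differentiable ℝ (H j f) :=
  (H_contDiff j f).differentiable (by simp)

lemma pd_H_aux (j : ℕ) (f : (Fin n → ℝ) → ℝ) (l : Fin n) (z : Fin n → ℝ) :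
    pd l (H (j+1) f) z = (1/((j:ℝ)+1)) *
      (H j (pd l f) z + ∑ i, z i * pd l (H j (pd i f)) z) := by
  have h1 : ∀ i : Fin n, HasFDerivAt (fun z : Fin n → ℝ => z i * H j (pd i f) z)
      (z i • fderiv ℝ (H j (pd i f)) z + H j (pd i f) z • ContinuousLinearMap.proj i) z := by
    intro i
    exact (hasFDerivAt_apply i z).mul ((H_diff j (pd i f)) z).hasFDerivAt
  have h2 := (HasFDerivAt.fun_sum (u := Finset.univ) (fun i _ => h1 i)).const_mul (1/((j:ℝ)+1))
  show fderiv ℝ (fun z => (1/((j:ℝ)+1)) * ∑ i, z i * H j (pd i f) z) z (Pi.single l 1) = _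
  rw [h2.fderiv]
  simp [pd, Finset.sum_add_distrib, Pi.single_apply]
  ring

lemma pd_H (j : ℕ) : ∀ (f : (Fin n → ℝ) → ℝ), ContDiff ℝ (j+1) f → ∀ l : Fin n,
    pd l (H (j+1) f) = H j (pd l f) := by
  induction j with
  | zero =>
    intro f hf l
    funext z
    rw [pd_H_aux]
    have : ∀ i, pd l (H 0 (pd i f)) z = 0 := by
      intro i
      simp [pd, H]
    simp [this]
  | succ j ih =>
    intro f hf l
    funext z
    rw [pd_H_aux]
    have : ∀ i, pd l (H (j+1) (pd i f)) z = H j (pd i (pd l f)) z := by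
      intro i
      rw [ih (pd i f) (by exact_mod_cast pd_contDiff (K := j+1) (by exact_mod_cast hf) i) l]
      rw [pd_comm (hf.of_le ?_)]
      push_cast
      have : ((2:ℕ) : ℕ∞ω) ≤ ((j+1+1 : ℕ) : ℕ∞ω) := by
        exact_mod_cast (by omega : 2 ≤ j+1+1)
      exact_mod_cast this
    simp only [this]
    simp only [H]
    push_cast
    field_simp
    ring

lemma H_zero (j : ℕ) (f : (Fin n → ℝ) → ℝ) : H (j+1) f 0 = 0 := by
  simp [H]

lemma Fl_taylor (K : ℕ) : ∀ f : (Fin n → ℝ) → ℝ, ContDiff ℝ K f →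
    Fl K (fun z => f z - ∑ j ∈ Finset.range (K+1), H j f z) := by
  induction K with
  | zero =>
    intro f hf
    refine ⟨?_, by simp [H]⟩
    simp [H]
    exact hf.continuous.sub continuous_const
  | succ K ih =>
    intro f hf
    have hfd : Differentiable ℝ f := hf.differentiable (by simp)
    refine ⟨?_, ?_, ?_⟩
    · refine hfd.sub ?_
      exact Differentiable.fun_sum fun j _ => H_diff j f
    · beta_reduce
      rw [Finset.sum_range_succ']
      simp only [H_zero]
      simp [H]
    · intro i
      have := ih (pd i f) (pd_contDiff (by exact_mod_cast hf) i)
      convert! this using 1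
      funext z
      have hh := ((hfd z).hasFDerivAt.sub (HasFDerivAt.fun_sum (u := Finset.range (K+1+1))
        (fun j _ => (H_diff j f z).hasFDerivAt)))
      have : pd i (fun z => f z - ∑ j ∈ Finset.range (K+1+1), H j f z) z
        = pd i f z - ∑ j ∈ Finset.range (K+1+1), pd i (H j f) z := by
        simp only [pd]
        erw [hh.fderiv]
        simp
      rw [this, Finset.sum_range_succ']
      have h0 : pd i (H 0 f) z = 0 := by simp [pd, H]
      rw [h0, add_zero]
      congr 1
      refine Finset.sum_congr rfl fun j hj => ?_
      rw [pd_H]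
      refine hf.of_le ?_
      have := Finset.mem_range.1 hj
      exact_mod_cast (by omega : j+1 ≤ K+1)

lemma Fl.cont {K : ℕ} {f : (Fin n → ℝ) → ℝ} (h : Fl K f) : Continuous f := by
  cases K with
  | zero => exact h.1
  | succ K => exact h.1.continuous

lemma Fl.zero {K : ℕ} {f : (Fin n → ℝ) → ℝ} (h : Fl K f) : f 0 = 0 := by
  cases K with
  | zero => exact h.2
  | succ K => exact h.2.1

lemma Fl.pred {K : ℕ} : ∀ {f : (Fin n → ℝ) → ℝ}, Fl (K+1) f → Fl K f := by
  induction K with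
  | zero => intro f h; exact ⟨h.cont, h.zero⟩
  | succ K ih => intro f h; exact ⟨h.1, h.2.1, fun i => ih (h.2.2 i)⟩

lemma fderiv_eq_sum (f : (Fin n → ℝ) → ℝ) (z v : Fin n → ℝ) :
    fderiv ℝ f z v = ∑ i, v i * pd i f z := by
  conv_lhs => rw [pi_eq_sum_univ' v]
  simp only [map_sum, map_smul, pd, smul_eq_mul]

lemma Fl.littleO (K : ℕ) : ∀ {f : (Fin n → ℝ) → ℝ}, Fl K f → ∀ ε > 0,
    ∃ δ > 0, ∀ z : Fin n → ℝ, ‖z‖ < δ → |f z| ≤ ε * ‖z‖^K := by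
  induction K with
  | zero =>
    intro f h ε hε
    obtain ⟨δ, hδ, H⟩ := Metric.continuousAt_iff.1 (h.1.continuousAt (x := 0)) ε hε
    refine ⟨δ, hδ, fun z hz => ?_⟩
    have := H (x := z) (by simpa using hz)
    rw [h.2] at this
    simpa using this.le
  | succ K ih =>
    intro f h ε hε
    have hn : (0:ℝ) < n + 1 := by positivity
    have h' : ∀ i, ∃ δ > 0, ∀ z : Fin n → ℝ, ‖z‖ < δ → |pd i f z| ≤ ε/(n+1) * ‖z‖^K :=
      fun i => ih (h.2.2 i) _ (by positivity)
    choose δ hδ hb using h'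
    obtain ⟨d, hd, hdd⟩ : ∃ d > 0, ∀ i, d ≤ δ i := by
      rcases isEmpty_or_nonempty (Fin n) with he | he
      · exact ⟨1, one_pos, fun i => he.elim i⟩
      · obtain ⟨i, hi⟩ := Finite.exists_min δ
        exact ⟨δ i, hδ i, hi⟩
    refine ⟨d, hd, fun z hz => ?_⟩
    have hC : ∀ x ∈ Metric.closedBall (0 : Fin n → ℝ) ‖z‖, ‖fderiv ℝ f x‖ ≤ ε * ‖z‖^K := by
      intro x hx
      have hx' : ‖x‖ ≤ ‖z‖ := by simpa using hx
      refine ContinuousLinearMap.opNorm_le_bound _ (by positivity) fun v => ?_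
      rw [fderiv_eq_sum]
      calc ‖∑ i, v i * pd i f x‖ ≤ ∑ i, ‖v i * pd i f x‖ := norm_sum_le _ _
        _ ≤ ∑ i : Fin n, ‖v‖ * (ε/(n+1) * ‖z‖^K) := by
          refine Finset.sum_le_sum fun i _ => ?_
          rw [norm_mul]
          refine mul_le_mul (norm_le_pi_norm v i) ?_ (norm_nonneg _) (norm_nonneg _)
          refine (hb i x (lt_of_le_of_lt hx' (hz.trans_le (hdd i)))).trans ?_
          gcongr
        _ = (n/(n+1)) * (ε * ‖z‖^K * ‖v‖) := by
          simp; field_simp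
        _ ≤ 1 * (ε * ‖z‖^K * ‖v‖) := by
          gcongr
          rw [div_le_one hn]; linarith
        _ = _ := one_mul _
    have := (convex_closedBall (0 : Fin n → ℝ) ‖z‖).norm_image_sub_le_of_norm_fderiv_le
      (fun x _ => h.1 x) hC (x := 0) (y := z) (by simp) (by simp)
    rw [h.2.1] at this
    simp only [sub_zero, Real.norm_eq_abs] at this
    rw [pow_succ, ← mul_assoc]; exact this

def Hom (a : ℕ) (p : (Fin n → ℝ) → ℝ) : Prop :=
  ContDiffOn ℝ ∞ p {0}ᶜ ∧ ∀ c : ℝ, 0 < c → ∀ z : Fin n → ℝ, z ≠ 0 → p (c • z) * c^a = p z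

lemma Hom.pd {a : ℕ} {p : (Fin n → ℝ) → ℝ} (h : Hom a p) (i : Fin n) : Hom (a+1) (pd i p) := by
  have hd : ∀ z : Fin n → ℝ, z ≠ 0 → DifferentiableAt ℝ p z := fun z hz =>
    (h.1.contDiffAt (isOpen_compl_singleton.mem_nhds hz)).differentiableAt (by simp)
  refine ⟨?_, ?_⟩
  · have := h.1.fderiv_of_isOpen (m := ∞) isOpen_compl_singleton (by simp)
    exact this.clm_apply contDiffOn_const
  · intro c hc z hz
    have hcz : c • z ≠ 0 := smul_ne_zero hc.ne' hz
    have h1 : HasFDerivAt (fun y : Fin n → ℝ => p (c • y) * c^a)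
        (c^a • (fderiv ℝ p (c • z)).comp (c • ContinuousLinearMap.id ℝ (Fin n → ℝ))) z := by
      have hs : HasFDerivAt (fun y : Fin n → ℝ => c • y)
        (c • ContinuousLinearMap.id ℝ (Fin n → ℝ)) z := (hasFDerivAt_id z).const_smul c
      exact ((hd _ hcz).hasFDerivAt.comp z hs).mul_const (c^a)
    have h2 : (fun y : Fin n → ℝ => p (c • y) * c^a) =ᶠ[𝓝 z] p := by
      filter_upwards [isOpen_compl_singleton.mem_nhds hz] with y hy
      exact h.2 c hc y hy
    have h3 := (h1.congr_of_eventuallyEq h2.symm).fderiv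
    unfold CkMain.pd
    rw [h3]
    simp
    ring

lemma Hom.bound {a : ℕ} {p : (Fin n → ℝ) → ℝ} (h : Hom a p) :
    ∃ C > 0, ∀ z : Fin n → ℝ, z ≠ 0 → |p z| * ‖z‖^a ≤ C := by
  have hc : ContinuousOn p (Metric.sphere 0 1) := by
    refine h.1.continuousOn.mono fun z hz => ?_
    rintro rfl
    simp at hz
  obtain ⟨C, hC⟩ := (isCompact_sphere (0 : Fin n → ℝ) 1).exists_bound_of_continuousOn hc
  refine ⟨max C 1, by positivity, fun z hz => ?_⟩
  have hz' : 0 < ‖z‖ := norm_pos_iff.2 hz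
  have h1 := h.2 ‖z‖⁻¹ (inv_pos.2 hz') z hz
  have h2 := hC (‖z‖⁻¹ • z) (by simp [norm_smul, hz'.ne'])
  rw [← h1, abs_mul, abs_of_pos (by positivity : 0 < ‖z‖⁻¹^a), mul_assoc, ← mul_pow,
    inv_mul_cancel₀ hz'.ne', one_pow, mul_one]
  exact h2.trans (le_max_left _ _)

lemma mul_small {a k : ℕ} {p f : (Fin n → ℝ) → ℝ} (hp : Hom a p) (hf : Fl (k+a) f) :
    ∀ ε > 0, ∃ δ > 0, ∀ z : Fin n → ℝ, ‖z‖ < δ → |p z * f z| ≤ ε * ‖z‖^k := by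
  intro ε hε
  obtain ⟨C, hC, hb⟩ := hp.bound
  obtain ⟨δ, hδ, hd⟩ := Fl.littleO _ hf (ε/C) (by positivity)
  refine ⟨δ, hδ, fun z hz => ?_⟩
  by_cases h0 : z = 0
  · subst h0
    rw [hf.zero]; simp; positivity
  · rw [abs_mul]
    calc |p z| * |f z| ≤ |p z| * (ε/C * ‖z‖^(k+a)) := by gcongr; exact hd z hz
      _ = (|p z| * ‖z‖^a) * (ε/C * ‖z‖^k) := by ring
      _ ≤ C * (ε/C * ‖z‖^k) := by gcongr; exact hb z h0
      _ = _ := by field_simp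

lemma mul_contDiff (k : ℕ) : ∀ {a : ℕ} {p f : (Fin n → ℝ) → ℝ}, Hom a p → Fl (k+a) f →
    ContDiff ℝ k (fun z => p z * f z) := by
  induction k with
  | zero =>
    intro a p f hp hf
    refine contDiff_zero.2 (continuous_iff_continuousAt.2 fun z => ?_)
    by_cases h0 : z = 0
    · subst h0
      rw [Metric.continuousAt_iff]
      intro ε hε
      obtain ⟨δ, hδ, hd⟩ := mul_small (k := 0) hp hf (ε/2) (by positivity)
      refine ⟨δ, hδ, fun {z} hz => ?_⟩
      have := hd z (by simpa using hz)
      rw [hf.zero]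
      simp at this ⊢
      linarith
    · exact (hp.1.contDiffAt (isOpen_compl_singleton.mem_nhds h0)).continuousAt.mul
        hf.cont.continuousAt
  | succ k ih =>
    intro a p f hp hf
    have hf1 : Fl (k + a + 1) f := by convert! hf using 1; ring
    have hf2 : Fl (k + (a + 1)) f := hf1
    push_cast
    rw [contDiff_succ_iff_hasFDerivAt]
    refine ⟨fun z => ∑ i, (pd i p z * f z + p z * pd i f z) • ContinuousLinearMap.proj i, ?_, ?_⟩
    · refine ContDiff.sum fun i _ => ?_
      exact ((ih (hp.pd i) hf2).add (ih hp (hf1.2.2 i))).smul contDiff_const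
    · intro z
      by_cases h0 : z = 0
      · subst h0
        have : ∑ i, (pd i p 0 * f 0 + p 0 * pd i f 0) •
            (ContinuousLinearMap.proj i : (Fin n → ℝ) →L[ℝ] ℝ) = 0 := by
          refine Finset.sum_eq_zero fun i _ => ?_
          rw [hf.zero, (hf1.2.2 i).zero]; simp
        beta_reduce
        rw [this, hasFDerivAt_iff_isLittleO, Asymptotics.isLittleO_iff]
        intro ε hε
        obtain ⟨δ, hδ, hd⟩ := mul_small (k := k+1) hp hf ε hε
        filter_upwards [Metric.ball_mem_nhds (0 : Fin n → ℝ) (lt_min hδ one_pos)] with z hz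
        have hz' : ‖z‖ < min δ 1 := by simpa using hz
        have h1 := hd z (hz'.trans_le (min_le_left _ _))
        have h2 : ‖z‖^k ≤ 1 := pow_le_one₀ (norm_nonneg _) (hz'.trans_le (min_le_right _ _)).le
        rw [hf.zero]
        simp only [mul_zero, sub_zero, _root_.zero_apply, Real.norm_eq_abs]
        refine h1.trans ?_
        rw [pow_succ]
        have : ‖z‖^k * ‖z‖ ≤ 1 * ‖z‖ := by gcongr
        rw [one_mul] at this
        gcongr
      · have hpd := (hp.1.contDiffAt (isOpen_compl_singleton.mem_nhds h0)).differentiableAt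
          (by simp)
        refine (hpd.hasFDerivAt.mul (hf1.1 z).hasFDerivAt).congr_fderiv ?_
        refine ContinuousLinearMap.ext fun v => ?_
        simp only [_root_.add_apply, _root_.smul_apply,
          _root_.sum_apply, ContinuousLinearMap.proj_apply, smul_eq_mul]
        rw [fderiv_eq_sum p, fderiv_eq_sum f, Finset.mul_sum, Finset.mul_sum,
          ← Finset.sum_add_distrib]
        refine Finset.sum_congr rfl fun i _ => ?_
        ring

lemma N_pos {z : Fin n → ℝ} (hz : z ≠ 0) : 0 < ∑ i, z i ^ 2 := by
  obtain ⟨i, hi⟩ := Function.ne_iff.1 hz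
  exact Finset.sum_pos' (fun i _ => sq_nonneg _) ⟨i, Finset.mem_univ _, by
    have : z i ≠ 0 := hi
    positivity⟩

lemma N_contDiff : ContDiff ℝ ∞ (fun z : Fin n → ℝ => ∑ i, z i ^ 2) :=
  ContDiff.sum fun i _ => (contDiff_apply ℝ ℝ i).pow 2

lemma N_smul (c : ℝ) (z : Fin n → ℝ) : ∑ i, (c • z) i ^ 2 = c^2 * ∑ i, z i ^ 2 := by
  rw [Finset.mul_sum]
  exact Finset.sum_congr rfl fun i _ => by simp; ring

lemma hom1 (j : Fin n) : Hom 1 (fun z : Fin n → ℝ => z j / ∑ i, z i ^ 2) := by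
  refine ⟨?_, ?_⟩
  · exact (contDiff_apply ℝ ℝ j).contDiffOn.div N_contDiff.contDiffOn
      fun z hz => (N_pos hz).ne'
  · intro c hc z hz
    beta_reduce
    rw [N_smul]
    have := N_pos hz
    simp
    field_simp

lemma hom3 (l i j : Fin n) :
    Hom 1 (fun z : Fin n → ℝ => z l * z i * z j / (∑ i, z i ^ 2)^2) := by
  refine ⟨?_, ?_⟩
  · exact (((contDiff_apply ℝ ℝ l).mul (contDiff_apply ℝ ℝ i)).mul
      (contDiff_apply ℝ ℝ j)).contDiffOn.div (N_contDiff.pow 2).contDiffOn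
      fun z hz => (pow_pos (N_pos hz) 2).ne'
  · intro c hc z hz
    beta_reduce
    rw [N_smul]
    have := N_pos hz
    simp
    field_simp

lemma taylor2 (k : ℕ) (f : (Fin n → ℝ) → ℝ) :
    ∃ D : Fin n → Fin n → (Fin n → ℝ) → ℝ, (∀ j l, ContDiff ℝ ∞ (D j l)) ∧
      (∀ j l z, D j l z = D l j z) ∧
      ∀ z, ∑ m ∈ Finset.range (k+1+1), H m f z = f 0 + ∑ j, pd j f 0 * z j
        + ∑ j, ∑ l, z j * z l * D j l z := by
  let d : Fin n → Fin n → (Fin n → ℝ) → ℝ := fun j l z =>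
    ∑ m ∈ Finset.range k, (1/(((m:ℝ)+2)*(m+1))) * H m (pd l (pd j f)) z
  refine ⟨fun j l z => (d j l z + d l j z)/2, ?_, ?_, ?_⟩
  · have : ∀ j l, ContDiff ℝ ∞ (d j l) := fun j l =>
      ContDiff.sum fun m _ => contDiff_const.mul (H_contDiff _ _)
    intro j l
    exact ((this j l).add (this l j)).div_const 2
  · intro j l z; ring
  · intro z
    have hs : ∑ j, ∑ l, z j * z l * ((d j l z + d l j z)/2) = ∑ j, ∑ l, z j * z l * d j l z := by
      have h1 : ∑ j, ∑ l, z j * z l * d l j z = ∑ j, ∑ l, z j * z l * d j l z := by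
        rw [Finset.sum_comm]
        refine Finset.sum_congr rfl fun j _ => Finset.sum_congr rfl fun l _ => by ring
      have h2 : ∀ j l, z j * z l * ((d j l z + d l j z)/2)
        = (z j * z l * d j l z)/2 + (z j * z l * d l j z)/2 := fun j l => by ring
      simp only [h2, Finset.sum_add_distrib, ← Finset.sum_div]
      rw [h1]; ring
    rw [hs, Finset.sum_range_succ', Finset.sum_range_succ']
    have h2 : ∑ m ∈ Finset.range k, H (m+1+1) f z = ∑ j, ∑ l, z j * z l * d j l z := by
      simp only [d, Finset.mul_sum]
      have : ∀ m ∈ Finset.range k, H (m+1+1) f z = ∑ j, ∑ l, z j * z l *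
          ((1/(((m:ℝ)+2)*(m+1))) * H m (pd l (pd j f)) z) := by
        intro m _
        simp only [H, Finset.mul_sum]
        refine Finset.sum_congr rfl fun j _ => Finset.sum_congr rfl fun l _ => ?_
        push_cast
        field_simp
        ring
      rw [Finset.sum_congr rfl this, Finset.sum_comm]
      refine Finset.sum_congr rfl fun j _ => ?_
      rw [Finset.sum_comm]
    rw [h2]
    simp [H]
    have : ∑ j, pd j f 0 * z j = ∑ j, z j * pd j f 0 :=
      Finset.sum_congr rfl fun j _ => mul_comm _ _
    rw [this]; ring

lemma local_sym (k : ℕ) (F : Fin n → (Fin n → ℝ) → ℝ) (hF : ∀ i, ContDiff ℝ (k+1) (F i))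
    (h0 : ∀ i, F i 0 = 0) (hs : ∀ i j, pd j (F i) 0 = pd i (F j) 0) :
    ∃ h : (Fin n → ℝ) → Fin n → Fin n → ℝ, (∀ i j, ContDiff ℝ k (fun z => h z i j)) ∧
      (∀ z i j, h z i j = h z j i) ∧ (∀ i j, h 0 i j = pd j (F i) 0) ∧
      ∀ z i, F i z = ∑ j, h z i j * z j := by
  choose D hD hDs hDt using fun i => taylor2 k (F i)
  let q : Fin n → (Fin n → ℝ) → ℝ :=
    fun i z => F i z - ∑ m ∈ Finset.range (k+1+1), H m (F i) z
  have hq : ∀ i, Fl (k+1) (q i) := fun i => Fl_taylor (k+1) (F i) (by exact_mod_cast hF i)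
  refine ⟨fun z i j => pd j (F i) 0 + ∑ l, z l * (D i j l z + D j i l z - D l i j z)
    + (z j / (∑ i, z i ^ 2) * q i z + z i / (∑ i, z i ^ 2) * q j z
      - ∑ l, z l * z i * z j / (∑ i, z i ^ 2)^2 * q l z), ?_, ?_, ?_, ?_⟩
  · intro i j
    have hle : ((k : ℕ) : ℕ∞ω) ≤ ∞ := by exact_mod_cast le_top
    refine (contDiff_const.add (ContDiff.sum fun l _ => ?_)).add
      (((mul_contDiff k (hom1 j) (hq i)).add (mul_contDiff k (hom1 i) (hq j))).sub
        (ContDiff.sum fun l _ => mul_contDiff k (hom3 l i j) (hq l)))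
    exact (contDiff_apply ℝ ℝ l).mul
      ((((hD i j l).add (hD j i l)).sub (hD l i j)).of_le hle)
  · intro z i j
    beta_reduce
    rw [hs i j]
    have h1 : ∀ l, D l i j z = D l j i z := fun l => hDs l i j z
    have h2 : ∀ l, z l * z i * z j = z l * z j * z i := fun l => by ring
    simp only [h1, h2]
    have h3 : ∀ l, D i j l z + D j i l z = D j i l z + D i j l z := fun l => add_comm _ _
    simp only [h3]
    ring
  · intro i j
    simp
  · intro z i
    by_cases hz : z = 0
    · subst hz; simp [h0]
    have hN := N_pos hz
    beta_reduce
    simp only [add_mul, sub_mul, Finset.sum_add_distrib, Finset.sum_sub_distrib]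
    have e1 : ∑ j, (∑ l, z l * (D i j l z + D j i l z - D l i j z)) * z j
        = ∑ j, ∑ l, z j * z l * D i j l z := by
      have a1 : ∀ j l, z l * (D i j l z + D j i l z - D l i j z) * z j
        = z j * z l * D i j l z + (z j * z l * D j i l z - z j * z l * D l i j z) :=
        fun j l => by ring
      simp only [Finset.sum_mul, a1, Finset.sum_add_distrib, Finset.sum_sub_distrib]
      have : ∑ j, ∑ l, z j * z l * D j i l z = ∑ j, ∑ l, z j * z l * D l i j z := by
        rw [Finset.sum_comm]
        refine Finset.sum_congr rfl fun j _ => Finset.sum_congr rfl fun l _ => by ring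
      rw [this]; ring
    have e2 : ∑ j, z j / (∑ i, z i ^ 2) * q i z * z j = q i z := by
      have : ∀ j, z j / (∑ i, z i ^ 2) * q i z * z j = z j ^ 2 * (q i z / ∑ i, z i ^ 2) :=
        fun j => by ring
      simp only [this, ← Finset.sum_mul]
      field_simp
    have e3 : ∑ j, (∑ l, z l * z i * z j / (∑ i, z i ^ 2)^2 * q l z) * z j
        = ∑ j, z i / (∑ i, z i ^ 2) * q j z * z j := by
      simp only [Finset.sum_mul]
      rw [Finset.sum_comm]
      refine Finset.sum_congr rfl fun l _ => ?_
      have : ∀ j, z l * z i * z j / (∑ i, z i ^ 2)^2 * q l z * z j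
        = z j ^ 2 * (z l * z i / (∑ i, z i ^ 2)^2 * q l z) := fun j => by ring
      simp only [this, ← Finset.sum_mul]
      field_simp
    rw [e1, e2, e3]
    have := hDt i z
    have hqi : q i z = F i z - ∑ m ∈ Finset.range (k+1+1), H m (F i) z := rfl
    rw [hqi, this, h0 i]
    ring

lemma exists_global {k : ℕ} {f : (Fin n → ℝ) → ℝ} (hf : ContDiffAt ℝ (k+1) f 0) :
    ∃ F : (Fin n → ℝ) → ℝ, ContDiff ℝ (k+1) F ∧ F =ᶠ[𝓝 0] f := by
  have hev := hf.eventually (by exact_mod_cast WithTop.coe_ne_top)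
  obtain ⟨r, hr, hb⟩ := Metric.eventually_nhds_iff_ball.1 hev
  let χ : ContDiffBump (0 : Fin n → ℝ) := ⟨r/4, r/2, by positivity, by linarith⟩
  refine ⟨fun z => χ z * f z, ?_, ?_⟩
  · refine contDiff_iff_contDiffAt.2 fun z => ?_
    by_cases hz : z ∈ Metric.ball (0 : Fin n → ℝ) r
    · exact χ.contDiffAt.mul (hb z hz)
    · have hz' : z ∈ (tsupport χ)ᶜ := by
        rw [χ.tsupport_eq]
        intro h
        apply hz
        have : dist z 0 ≤ r/2 := h
        exact lt_of_le_of_lt this (by linarith)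
      have : (fun z => χ z * f z) =ᶠ[𝓝 z] fun _ => 0 := by
        filter_upwards [(isClosed_tsupport χ).isOpen_compl.mem_nhds hz'] with y hy
        rw [image_eq_zero_of_notMem_tsupport hy, zero_mul]
      exact contDiffAt_const.congr_of_eventuallyEq this
  · filter_upwards [χ.eventuallyEq_one] with z hz
    rw [hz]; simp

lemma posDef_eventually {A : (Fin n → ℝ) → Fin n → Fin n → ℝ} {m : Fin n → ℝ}
    (hs : ∀ x i j, A x i j = A x j i) (hc : ∀ i j, ContinuousAt (fun x => A x i j) m)
    (hm : (Matrix.of (A m)).PosDef) : ∀ᶠ x in 𝓝 m, (Matrix.of (A x)).PosDef := by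
  have key : ∀ᶠ x in 𝓝 m, ∀ v ∈ Metric.sphere (0 : Fin n → ℝ) 1,
      0 < v ⬝ᵥ (Matrix.of (A x)).mulVec v := by
    refine (isCompact_sphere _ _).eventually_forall_of_forall_eventually fun v hv => ?_
    have hv0 : v ≠ 0 := by rintro rfl; simp at hv
    have hpos := hm.dotProduct_mulVec_pos hv0
    simp only [star_trivial] at hpos
    have hcont : ContinuousAt (fun p : (Fin n → ℝ) × (Fin n → ℝ) =>
        p.2 ⬝ᵥ (Matrix.of (A p.1)).mulVec p.2) (m, v) := by
      simp only [dotProduct, Matrix.mulVec, Matrix.of_apply]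
      refine tendsto_finsetSum _ fun i _ => ?_
      refine ContinuousAt.mul (by fun_prop) ?_
      refine tendsto_finsetSum _ fun j _ => ?_
      refine ContinuousAt.mul ?_ (by fun_prop)
      exact ContinuousAt.comp (f := fun p : (Fin n → ℝ) × (Fin n → ℝ) => p.1)
        (g := fun x => A x i j) (x := (m, v)) (hc i j) continuousAt_fst
    exact hcont.eventually (lt_mem_nhds hpos)
  filter_upwards [key] with x hx
  refine Matrix.PosDef.of_dotProduct_mulVec_pos ?_ ?_
  · ext i j
    simp [hs x j i]
  · intro v hv
    have hv' : 0 < ‖v‖ := norm_pos_iff.2 hv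
    have := hx (‖v‖⁻¹ • v) (by simp [norm_smul, hv'.ne'])
    rw [Matrix.mulVec_smul, smul_dotProduct, dotProduct_smul] at this
    simp only [smul_eq_mul] at this
    rw [star_trivial]
    have h2 : 0 < ‖v‖⁻¹ := inv_pos.2 hv'
    exact (mul_pos_iff_of_pos_left h2).1 ((mul_pos_iff_of_pos_left h2).1 this)

lemma local_zero (k : ℕ) {Ω : Set (Fin n → ℝ)} (hΩ : IsOpen Ω)
    {X Y : (Fin n → ℝ) → (Fin n → ℝ)}
    (hX : ContDiffOn ℝ (k + 1) X Ω) (hY : ContDiffOn ℝ (k + 1) Y Ω)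
    {m : Fin n → ℝ} (hm : m ∈ Ω) (hY0 : Y m = 0) (hX0 : X m = 0)
    (hb : Function.Bijective (fderiv ℝ Y m)) (G : Matrix (Fin n) (Fin n) ℝ) (hG : G.PosDef)
    (hGv : ∀ v : Fin n → ℝ, fderiv ℝ Y m v = G.mulVec (fderiv ℝ X m v)) :
    ∃ U ∈ 𝓝 m, ∃ g : (Fin n → ℝ) → Fin n → Fin n → ℝ, ContDiffOn ℝ k g U ∧
      ∀ y ∈ U, (Matrix.of (g y)).PosDef ∧ Y y = (Matrix.of (g y)).mulVec (X y) := by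
  have hk : ((k : ℕ∞ω) + 1) ≠ 0 := by exact_mod_cast (by omega : k + 1 ≠ 0)
  have hXm : ContDiffAt ℝ (k+1) X m := hX.contDiffAt (hΩ.mem_nhds hm)
  have hYm : ContDiffAt ℝ (k+1) Y m := hY.contDiffAt (hΩ.mem_nhds hm)
  have hinj : Function.Injective (fderiv ℝ X m) := by
    intro v w hvw
    apply hb.1
    rw [hGv, hGv, hvw]
  let e : (Fin n → ℝ) ≃L[ℝ] (Fin n → ℝ) :=
    (LinearEquiv.ofInjectiveEndo (fderiv ℝ X m : (Fin n → ℝ) →ₗ[ℝ] (Fin n → ℝ))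
      hinj).toContinuousLinearEquiv
  have he : (e : (Fin n → ℝ) →L[ℝ] (Fin n → ℝ)) = fderiv ℝ X m := by
    ext1 v; rfl
  have hXd : HasFDerivAt X (e : (Fin n → ℝ) →L[ℝ] (Fin n → ℝ)) m := by
    rw [he]; exact (hXm.differentiableAt hk).hasFDerivAt
  have hXs := hXm.hasStrictFDerivAt' hXd hk
  let ψ := hXs.localInverse X e m
  have hψ : ContDiffAt ℝ (k+1) ψ 0 := by
    have := hXm.to_localInverse hXd hk
    rwa [hX0] at this
  have hψ0 : ψ 0 = m := by
    have := hXs.localInverse_apply_image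
    rwa [hX0] at this
  have hψd : HasFDerivAt ψ (e.symm : (Fin n → ℝ) →L[ℝ] (Fin n → ℝ)) 0 := by
    have := hXs.to_localInverse.hasFDerivAt
    rwa [hX0] at this
  have hF0 : ContDiffAt ℝ (k+1) (fun z => Y (ψ z)) 0 := by
    refine ContDiffAt.comp (g := Y) 0 ?_ hψ
    rw [hψ0]; exact hYm
  have hF0d : HasFDerivAt (fun z => Y (ψ z)) ((fderiv ℝ Y m).comp
      (e.symm : (Fin n → ℝ) →L[ℝ] (Fin n → ℝ))) 0 := by
    refine HasFDerivAt.comp (g := Y) 0 ?_ hψd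
    rw [hψ0]; exact (hYm.differentiableAt hk).hasFDerivAt
  choose F hF hFe using fun i => exists_global (contDiffAt_pi.1 hF0 i)
  have hFz : ∀ i, F i 0 = 0 := by
    intro i
    rw [(hFe i).eq_of_nhds, hψ0, hY0]; rfl
  have hFd : ∀ i j, pd j (F i) 0 = G i j := by
    intro i j
    have h1 := ((hasFDerivAt_pi'.1 hF0d i).congr_of_eventuallyEq (hFe i)).fderiv
    have h2 : fderiv ℝ X m (e.symm (Pi.single j 1)) = Pi.single j 1 := by
      rw [← he]; simp
    unfold pd
    rw [h1]
    simp [hGv, h2]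
  have hGs : ∀ i j, G i j = G j i := by
    intro i j
    have := hG.isHermitian.apply j i
    simpa using this
  obtain ⟨h, hh1, hh2, hh3, hh4⟩ := local_sym k F hF hFz (fun i j => by rw [hFd, hFd, hGs])
  have hgk : ∀ i j, ContDiffOn ℝ k (fun x => h (X x) i j) Ω := fun i j =>
    (hh1 i j).comp_contDiffOn (hX.of_le (by exact_mod_cast Nat.le_succ k))
  have hpd : ∀ᶠ x in 𝓝 m, (Matrix.of (h (X x))).PosDef := by
    refine posDef_eventually (A := fun x => h (X x)) (fun x i j => hh2 _ i j) (fun i j => ?_) ?_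
    · exact ((hgk i j).contDiffAt (hΩ.mem_nhds hm)).continuousAt
    · have : Matrix.of (h (X m)) = G := by
        ext i j
        rw [Matrix.of_apply, hX0, hh3, hFd]
      rw [this]; exact hG
  have hXt : Filter.Tendsto X (𝓝 m) (𝓝 0) := by
    have := hXm.continuousAt.tendsto
    rwa [hX0] at this
  have hev : ∀ᶠ x in 𝓝 m, x ∈ Ω ∧ (Matrix.of (h (X x))).PosDef ∧
      Y x = (Matrix.of (h (X x))).mulVec (X x) := by
    have h1 : ∀ᶠ x in 𝓝 m, ∀ i, F i (X x) = Y (ψ (X x)) i :=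
      Filter.eventually_all.2 fun i => hXt.eventually (hFe i)
    filter_upwards [h1, hpd, hXs.eventually_left_inverse, hΩ.mem_nhds hm] with x a b c d
    refine ⟨d, b, ?_⟩
    funext i
    have c' : ψ (X x) = x := c
    have := a i
    rw [c'] at this
    rw [← this, hh4]
    rfl
  refine ⟨_, hev, fun x => h (X x), ?_, fun y hy => hy.2⟩
  refine contDiffOn_pi.2 fun i => contDiffOn_pi.2 fun j => (hgk i j).mono fun x hx => hx.1

lemma local_nonzero (k : ℕ) {Ω : Set (Fin n → ℝ)} (hΩ : IsOpen Ω)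
    {X Y : (Fin n → ℝ) → (Fin n → ℝ)}
    (hX : ContDiffOn ℝ (k + 1) X Ω) (hY : ContDiffOn ℝ (k + 1) Y Ω)
    {m : Fin n → ℝ} (hm : m ∈ Ω) (hp : 0 < ∑ i, X m i * Y m i) :
    ∃ U ∈ 𝓝 m, ∃ g : (Fin n → ℝ) → Fin n → Fin n → ℝ, ContDiffOn ℝ k g U ∧
      ∀ y ∈ U, (Matrix.of (g y)).PosDef ∧ Y y = (Matrix.of (g y)).mulVec (X y) := by
  have hle : (k : ℕ∞ω) ≤ k + 1 := by exact_mod_cast Nat.le_succ k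
  have hX' : ∀ i, ContDiffOn ℝ k (fun x => X x i) Ω := contDiffOn_pi.1 (hX.of_le hle)
  have hY' : ∀ i, ContDiffOn ℝ k (fun x => Y x i) Ω := contDiffOn_pi.1 (hY.of_le hle)
  have hXY : ContDiffOn ℝ k (fun x => ∑ i, X x i * Y x i) Ω :=
    ContDiffOn.sum fun i _ => (hX' i).mul (hY' i)
  have hXX : ContDiffOn ℝ k (fun x => ∑ i, X x i ^ 2) Ω :=
    ContDiffOn.sum fun i _ => (hX' i).pow 2
  have hev : ∀ᶠ x in 𝓝 m, x ∈ Ω ∧ 0 < ∑ i, X x i * Y x i := by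
    filter_upwards [hΩ.mem_nhds hm,
      (hXY.continuousOn.continuousAt (hΩ.mem_nhds hm)).eventually (lt_mem_nhds hp)] with x a b
    exact ⟨a, b⟩
  have hne : ∀ x, 0 < ∑ i, X x i * Y x i → 0 < ∑ i, X x i ^ 2 := by
    intro x hx
    apply N_pos
    intro h0
    simp [h0] at hx
  refine ⟨_, hev, fun x i j => Y x i * Y x j / (∑ i, X x i * Y x i) +
    ((if i = j then 1 else 0) - X x i * X x j / ∑ i, X x i ^ 2), ?_, ?_⟩
  · refine contDiffOn_pi.2 fun i => contDiffOn_pi.2 fun j => ?_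
    have hsub : {x | x ∈ Ω ∧ 0 < ∑ i, X x i * Y x i} ⊆ Ω := fun x hx => hx.1
    refine ContDiffOn.add ?_ (contDiffOn_const.sub ?_)
    · exact (((hY' i).mul (hY' j)).mono hsub).div (hXY.mono hsub) fun x hx => hx.2.ne'
    · exact (((hX' i).mul (hX' j)).mono hsub).div (hXX.mono hsub) fun x hx => (hne x hx.2).ne'
  · rintro x ⟨hxΩ, hx⟩
    have hx2 := hne x hx
    set p := ∑ i, X x i * Y x i with hpdef
    set q := ∑ i, X x i ^ 2 with hq
    have hmv : ∀ v : Fin n → ℝ, ∀ i, (Matrix.of (fun i j => Y x i * Y x j / p +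
        ((if i = j then (1:ℝ) else 0) - X x i * X x j / q))).mulVec v i
        = Y x i * (∑ j, Y x j * v j) / p + (v i - X x i * (∑ j, X x j * v j) / q) := by
      intro v i
      simp only [Matrix.mulVec, dotProduct, Matrix.of_apply, add_mul, sub_mul,
        Finset.sum_add_distrib, Finset.sum_sub_distrib]
      congr 1
      · rw [Finset.mul_sum, Finset.sum_div]
        exact Finset.sum_congr rfl fun j _ => by ring
      · congr 1
        · simp
        · rw [Finset.mul_sum, Finset.sum_div]
          exact Finset.sum_congr rfl fun j _ => by ring
    refine ⟨Matrix.PosDef.of_dotProduct_mulVec_pos ?_ ?_, ?_⟩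
    · ext i j
      simp [mul_comm, eq_comm]
    · intro v hv
      rw [star_trivial]
      set a := ∑ j, Y x j * v j with ha
      set b := ∑ j, X x j * v j with hb
      have hval : v ⬝ᵥ (Matrix.of (fun i j => Y x i * Y x j / p +
        ((if i = j then (1:ℝ) else 0) - X x i * X x j / q))).mulVec v
          = a^2/p + ∑ i, (v i - (b/q) * X x i)^2 := by
        simp only [dotProduct, hmv, ← ha, ← hb]
        have e1 : ∀ i, v i * (Y x i * a / p + (v i - X x i * b / q))
          = (Y x i * v i) * (a/p) + (v i ^ 2 - (X x i * v i) * (b/q)) := fun i => by ring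
        have e2 : ∀ i, (v i - (b/q) * X x i)^2
          = v i ^ 2 - (X x i * v i) * (2*(b/q)) + X x i ^ 2 * (b/q)^2 := fun i => by ring
        simp only [e1, e2, Finset.sum_add_distrib, Finset.sum_sub_distrib, ← Finset.sum_mul]
        rw [← ha, ← hb, ← hq]
        field_simp
        ring
      rw [hval]
      have n1 : 0 ≤ a^2/p := by positivity
      have n2 : 0 ≤ ∑ i, (v i - (b/q) * X x i)^2 := Finset.sum_nonneg fun i _ => sq_nonneg _
      rcases n2.lt_or_eq with h | h
      · linarith
      · have hall : ∀ i, v i = (b/q) * X x i := by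
          intro i
          have := (Finset.sum_eq_zero_iff_of_nonneg (fun i _ => sq_nonneg _)).1 h.symm i
            (Finset.mem_univ i)
          have := pow_eq_zero_iff (two_ne_zero) |>.1 this
          linarith
        have hap : a = (b/q) * p := by
          rw [ha, hpdef, Finset.mul_sum]
          exact Finset.sum_congr rfl fun i _ => by rw [hall i]; ring
        have hbq : b/q ≠ 0 := by
          intro h0
          apply hv
          funext i
          rw [hall i, h0]; simp
        have : 0 < a^2/p := by
          rw [hap]; positivity
        linarith
    · funext i
      rw [hmv]
      have e1 : ∑ j, Y x j * X x j = p := Finset.sum_congr rfl fun j _ => mul_comm _ _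
      have e2 : ∑ j, X x j * X x j = q := Finset.sum_congr rfl fun j _ => (sq _).symm
      rw [e1, e2]
      field_simp
      ring

lemma hasFDerivAt_mul_zero {g f : (Fin n → ℝ) → ℝ} {f' : (Fin n → ℝ) →L[ℝ] ℝ} {m : Fin n → ℝ}
    (hg : ContinuousAt g m) (hf : HasFDerivAt f f' m) (h0 : f m = 0) :
    HasFDerivAt (fun x => g x * f x) (g m • f') m := by
  have h1 : (fun x => (g x - g m) * f x) =o[𝓝 m] fun x => x - m := by
    have a : (fun x => g x - g m) =o[𝓝 m] fun _ => (1:ℝ) := by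
      rw [Asymptotics.isLittleO_one_iff]
      simpa using hg.tendsto.sub_const (g m)
    have b : f =O[𝓝 m] fun x => ‖x - m‖ := by
      have := hf.isBigO_sub
      simp only [h0, sub_zero] at this
      exact this.norm_right
    have := a.mul_isBigO b
    simp only [one_mul] at this
    exact this.of_norm_right
  have h2 : HasFDerivAt (fun x => (g x - g m) * f x) (0 : (Fin n → ℝ) →L[ℝ] ℝ) m := by
    rw [hasFDerivAt_iff_isLittleO]
    simpa [h0] using h1
  have h3 := h2.add (hf.const_mul (g m))
  rw [zero_add] at h3
  refine h3.congr_of_eventuallyEq (Filter.Eventually.of_forall fun x => ?_)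
  simp; ring

end CkMain

open CkMain in
open scoped ContDiff Topology Manifold in
/-- **`C^k`-regularity version of the main theorem (coordinate version).**
Let `n ≥ 1`, `k ∈ ℕ`, `Ω ⊆ ℝⁿ` open, and `X Y : Ω → ℝⁿ` of class `C^{k+1}`. Assume that
at every `m ∈ Ω` with `Y m = 0` the derivative `DY m` is invertible. Then a field of
symmetric positive definite matrices `g` of class `C^k` with `Y x = g x · X x` on `Ω`
exists iff (i) `⟨X m, Y m⟩ > 0` whenever `Y m ≠ 0`, (ii) `X m = 0` whenever `Y m = 0`,
and (iii) at each zero `m` of `Y` there is a symmetric positive definite `ḡ` with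
`DY m v = ḡ · (DX m v)` for all `v`. -/
theorem main_characterisation_Ck
    (n : ℕ) (hn : 1 ≤ n) (k : ℕ) (Ω : Set (Fin n → ℝ)) (hΩ : IsOpen Ω)
    (X Y : (Fin n → ℝ) → (Fin n → ℝ))
    (hX : ContDiffOn ℝ (k + 1) X Ω) (hY : ContDiffOn ℝ (k + 1) Y Ω)
    (hcrit : ∀ m ∈ Ω, Y m = 0 → Function.Bijective (fderiv ℝ Y m)) :
    (∃ g : (Fin n → ℝ) → Matrix (Fin n) (Fin n) ℝ,
      (∀ i j, ContDiffOn ℝ k (fun x => g x i j) Ω) ∧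
      (∀ x ∈ Ω, (g x).PosDef) ∧
      (∀ x ∈ Ω, Y x = (g x).mulVec (X x)))
    ↔
    ((∀ m ∈ Ω, Y m ≠ 0 → 0 < ∑ i, X m i * Y m i) ∧
     (∀ m ∈ Ω, Y m = 0 → X m = 0) ∧
     (∀ m ∈ Ω, Y m = 0 → ∃ gbar : Matrix (Fin n) (Fin n) ℝ, gbar.PosDef ∧
        ∀ v : Fin n → ℝ, fderiv ℝ Y m v = gbar.mulVec (fderiv ℝ X m v))) := by

  constructor
  · rintro ⟨g, hg, hpd, hgY⟩
    have hz : ∀ m ∈ Ω, Y m = 0 → X m = 0 := by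
      intro m hm h0
      by_contra hx
      have := (hpd m hm).dotProduct_mulVec_pos hx
      rw [← hgY m hm, h0] at this
      simp at this
    refine ⟨?_, hz, ?_⟩
    · intro m hm h0
      have hx : X m ≠ 0 := by
        intro hx
        apply h0
        rw [hgY m hm, hx]; simp
      have := (hpd m hm).dotProduct_mulVec_pos hx
      rw [← hgY m hm] at this
      simpa [dotProduct] using this
    · intro m hm h0
      refine ⟨g m, hpd m hm, fun v => ?_⟩
      have hk : ((k : ℕ∞ω) + 1) ≠ 0 := by exact_mod_cast (by omega : k + 1 ≠ 0)
      have hXd := ((hX.contDiffAt (hΩ.mem_nhds hm)).differentiableAt hk).hasFDerivAt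
      have hXm := hz m hm h0
      have hYd : HasFDerivAt Y (ContinuousLinearMap.pi fun i =>
          ∑ j, g m i j • (ContinuousLinearMap.proj j).comp (fderiv ℝ X m)) m := by
        have : HasFDerivAt (fun x => (g x).mulVec (X x)) (ContinuousLinearMap.pi fun i =>
          ∑ j, g m i j • (ContinuousLinearMap.proj j).comp (fderiv ℝ X m)) m := by
          refine hasFDerivAt_pi.2 fun i => ?_
          simp only [Matrix.mulVec, dotProduct]
          refine HasFDerivAt.fun_sum fun j _ => ?_
          refine hasFDerivAt_mul_zero ((hg i j).continuousOn.continuousAt (hΩ.mem_nhds hm))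
            (hasFDerivAt_pi'.1 hXd j) ?_
          rw [hXm]; rfl
        refine this.congr_of_eventuallyEq ?_
        filter_upwards [hΩ.mem_nhds hm] with x hx using hgY x hx
      rw [hYd.fderiv]
      funext i
      simp [Matrix.mulVec, dotProduct]
  · rintro ⟨h1, h2, h3⟩
    have hloc : ∀ m ∈ Ω, ∃ U ∈ 𝓝 m, ∃ g : (Fin n → ℝ) → Fin n → Fin n → ℝ,
        ContDiffOn ℝ k g U ∧
        ∀ y ∈ U, (Matrix.of (g y)).PosDef ∧ Y y = (Matrix.of (g y)).mulVec (X y) := by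
      intro m hm
      by_cases h0 : Y m = 0
      · obtain ⟨G, hG, hGv⟩ := h3 m hm h0
        exact local_zero k hΩ hX hY hm h0 (h2 m hm h0) (hcrit m hm h0) G hG hGv
      · exact local_nonzero k hΩ hX hY hm (h1 m hm h0)
    let M : TopologicalSpace.Opens (Fin n → ℝ) := ⟨Ω, hΩ⟩
    have : LocallyCompactSpace M := hΩ.locallyCompactSpace
    have : SecondCountableTopology M := inferInstance
    have : SigmaCompactSpace M := inferInstance
    let t : M → Set (Fin n → Fin n → ℝ) := fun x =>
      {A | (Matrix.of A).PosDef ∧ Y x = (Matrix.of A).mulVec (X x)}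
    have ht : ∀ x, Convex ℝ (t x) := by
      intro x A hA B hB a b ha hb hab
      have hof : Matrix.of (a • A + b • B) = a • Matrix.of A + b • Matrix.of B := rfl
      refine ⟨?_, ?_⟩
      · rw [hof]
        rcases ha.lt_or_eq with ha' | ha'
        · exact (hA.1.smul ha').add_posSemidef (hB.1.posSemidef.smul hb)
        · have : b = 1 := by linarith
          subst this
          rw [← ha']
          simpa using hB.1
      · rw [hof, Matrix.add_mulVec, Matrix.smul_mulVec, Matrix.smul_mulVec, ← hA.2, ← hB.2,
          ← add_smul, hab, one_smul]
    obtain ⟨g, hg⟩ := exists_contMDiffMap_forall_mem_convex_of_local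
      (I := 𝓘(ℝ, Fin n → ℝ)) (n := (k : ℕ∞)) (t := t) ht (by
        rintro ⟨x, hx⟩
        obtain ⟨U, hU, g, hgU, hgt⟩ := hloc x hx
        refine ⟨Subtype.val ⁻¹' U, continuous_subtype_val.continuousAt.preimage_mem_nhds hU,
          fun y => g y, ?_, fun y hy => hgt y hy⟩
        have := (contMDiffOn_iff_contDiffOn.2 hgU).comp
          (contMDiff_subtype_val (I := 𝓘(ℝ, Fin n → ℝ)) (U := M)).contMDiffOn
          (s := Subtype.val ⁻¹' U) (fun y hy => hy)
        exact_mod_cast this)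
    classical
    let g' : (Fin n → ℝ) → Fin n → Fin n → ℝ := fun x => if h : x ∈ Ω then g ⟨x, h⟩ else 0
    have hg' : ∀ x (h : x ∈ Ω), g' x = g ⟨x, h⟩ := fun x h => dif_pos h
    refine ⟨fun x => Matrix.of (g' x), ?_, ?_, ?_⟩
    · have hc : ContDiffOn ℝ k g' Ω := by
        intro x hx
        have ha := g.contMDiff ⟨x, hx⟩
        have hb : (fun y : M => g' y) = g := by
          funext y; exact hg' y y.2
        rw [← hb, contMDiffAt_subtype_iff, contMDiffAt_iff_contDiffAt] at ha
        exact_mod_cast ha.contDiffWithinAt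
      intro i j
      exact contDiffOn_pi.1 (contDiffOn_pi.1 hc i) j
    · intro x hx
      beta_reduce
      rw [hg' x hx]; exact (hg ⟨x, hx⟩).1
    · intro x hx
      beta_reduce
      rw [hg' x hx]; exact (hg ⟨x, hx⟩).2
end

section
/- Let n ≥ 1, let Ω ⊆ ℝⁿ be open, and let X, Y : Ω → ℝⁿ be differentiable. Assume that at every point m ∈ Ω with Y(m) = 0 the derivative DY(m) is invertible, and that: (i) ⟨X(m), Y(m)⟩ > 0 for every m ∈ Ω with Y(m) ≠ 0; (ii) X(m) = 0 for every m ∈ Ω with Y(m) = 0; (iii) for every m ∈ Ω with Y(m) = 0 there exists a symmetric positive definite matrix ḡ_m ∈ Matrix (Fin n) (Fin n) ℝ such that DY(m) v = ḡ_m · (DX(m) v) for all v ∈ ℝⁿ. Then there exists a continuous map g : Ω → Matrix (Fin n) (Fin n) ℝ with g(x) symmetric positive definite for all x ∈ Ω and Y(x) = g(x) · X(x) for all x ∈ Ω. -/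
open Matrix Filter Topology Asymptotics

namespace CMetric

variable {n : ℕ}

lemma vmv (a b v : Fin n → ℝ) : (vecMulVec a b) *ᵥ v = (b ⬝ᵥ v) • a := by
  ext i
  simp only [mulVec, dotProduct, vecMulVec_apply, Pi.smul_apply, smul_eq_mul, Finset.sum_mul]
  exact Finset.sum_congr rfl fun j _ => by ring

lemma dot_self_pos {v : Fin n → ℝ} (hv : v ≠ 0) : 0 < v ⬝ᵥ v := by
  have h : 0 ≤ v ⬝ᵥ v := Finset.sum_nonneg fun i _ => mul_self_nonneg _
  exact lt_of_le_of_ne h (fun h => hv (dotProduct_self_eq_zero.1 h.symm))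

/-- local solution away from zeros -/
noncomputable def G (X Y : Fin n → ℝ) : Matrix (Fin n) (Fin n) ℝ :=
  (X ⬝ᵥ Y)⁻¹ • vecMulVec Y Y + (1 - (X ⬝ᵥ X)⁻¹ • vecMulVec X X)

/-- symmetric correction -/
noncomputable def S (X r : Fin n → ℝ) : Matrix (Fin n) (Fin n) ℝ :=
  (X ⬝ᵥ X)⁻¹ • (vecMulVec r X + vecMulVec X r) - ((r ⬝ᵥ X) * ((X ⬝ᵥ X) ^ 2)⁻¹) • vecMulVec X X

lemma G_mulVec {X Y : Fin n → ℝ} (h : 0 < X ⬝ᵥ Y) (hX : X ≠ 0) : G X Y *ᵥ X = Y := by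
  have hq := dot_self_pos hX
  rw [G, add_mulVec, sub_mulVec, smul_mulVec, smul_mulVec, vmv, vmv, one_mulVec, smul_smul,
    smul_smul, inv_mul_cancel₀ hq.ne', dotProduct_comm Y X, inv_mul_cancel₀ h.ne']
  simp

lemma G_posDef {X Y : Fin n → ℝ} (h : 0 < X ⬝ᵥ Y) (hX : X ≠ 0) : (G X Y).PosDef := by
  have hq := dot_self_pos hX
  refine PosDef.of_dotProduct_mulVec_pos ?_ fun v hv => ?_
  · ext i j
    simp [G, vecMulVec_apply, Matrix.one_apply, mul_comm, eq_comm]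
  · have e : star v ⬝ᵥ (G X Y *ᵥ v) = (X ⬝ᵥ Y)⁻¹ * (Y ⬝ᵥ v) ^ 2 +
        (v - ((X ⬝ᵥ X)⁻¹ * (X ⬝ᵥ v)) • X) ⬝ᵥ (v - ((X ⬝ᵥ X)⁻¹ * (X ⬝ᵥ v)) • X) := by
      rw [G, add_mulVec, sub_mulVec, smul_mulVec, smul_mulVec, vmv, vmv, one_mulVec]
      simp only [star_trivial, dotProduct_add, dotProduct_sub, sub_dotProduct, dotProduct_smul,
        smul_dotProduct, smul_eq_mul, dotProduct_comm v X, dotProduct_comm v Y]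
      field_simp
      ring
    rw [e]
    by_cases hw : v - ((X ⬝ᵥ X)⁻¹ * (X ⬝ᵥ v)) • X = 0
    · rw [hw]
      have hv' := sub_eq_zero.1 hw
      generalize (X ⬝ᵥ X)⁻¹ * (X ⬝ᵥ v) = c at hv'
      subst hv'
      have hc : c ≠ 0 := by rintro rfl; simp at hv
      rw [dotProduct_smul, dotProduct_comm Y X]
      simp only [dotProduct_zero, add_zero, smul_eq_mul]
      positivity
    · have := dot_self_pos hw
      positivity

lemma S_mulVec {X r : Fin n → ℝ} (hX : X ≠ 0) : S X r *ᵥ X = r := by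
  have hq := dot_self_pos hX
  rw [S, sub_mulVec, smul_mulVec, smul_mulVec, add_mulVec, vmv, vmv, vmv]
  ext i
  simp only [Pi.sub_apply, Pi.smul_apply, Pi.add_apply, smul_eq_mul]
  field_simp
  ring

lemma S_herm (X r : Fin n → ℝ) : (S X r).IsHermitian := by
  ext i j
  simp [S, vecMulVec_apply]
  ring

lemma posDef_nhds {A : Matrix (Fin n) (Fin n) ℝ} (hA : A.PosDef) :
    ∀ᶠ B in 𝓝 A, B.IsHermitian → B.PosDef := by
  have h : ∀ᶠ B in 𝓝 A, ∀ v ∈ Metric.sphere (0 : Fin n → ℝ) 1, 0 < v ⬝ᵥ (B *ᵥ v) := by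
    refine (isCompact_sphere _ _).eventually_forall_of_forall_eventually fun v hv => ?_
    have hc : Continuous fun z : Matrix (Fin n) (Fin n) ℝ × (Fin n → ℝ) =>
        z.2 ⬝ᵥ (z.1 *ᵥ z.2) := by fun_prop
    refine hc.continuousAt.eventually (lt_mem_nhds ?_)
    have hv0 : v ≠ 0 := by rintro rfl; simp at hv
    simpa using hA.dotProduct_mulVec_pos hv0
  filter_upwards [h] with B hB hH
  refine PosDef.of_dotProduct_mulVec_pos hH fun v hv => ?_
  have hn : 0 < ‖v‖ := norm_pos_iff.2 hv
  have := hB (‖v‖⁻¹ • v) (by simp [norm_smul, hn.ne'])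
  rw [mulVec_smul, dotProduct_smul, smul_dotProduct, smul_eq_mul, smul_eq_mul] at this
  have h2 : 0 < ‖v‖⁻¹ := by positivity
  rw [star_trivial]
  exact (mul_pos_iff_of_pos_left h2).1 ((mul_pos_iff_of_pos_left h2).1 this)

lemma S_tendsto {α : Type*} {l : Filter α} {X r : α → Fin n → ℝ} (h : r =o[l] X) :
    Tendsto (fun x => S (X x) (r x)) l (𝓝 0) := by
  have hXi : ∀ i, (fun x => X x i) =O[l] fun x => ‖X x‖ := fun i =>
    IsBigO.of_bound 1 (Eventually.of_forall fun x => by simpa using norm_le_pi_norm (X x) i)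
  have hri : ∀ i, (fun x => r x i) =o[l] fun x => ‖X x‖ := fun i =>
    (IsBigO.of_bound 1 (Eventually.of_forall fun x => by
      simpa using norm_le_pi_norm (r x) i) : (fun x => r x i) =O[l] r).trans_isLittleO h.norm_right
  have hq : (fun x => ‖X x‖ * ‖X x‖) =O[l] fun x => X x ⬝ᵥ X x := by
    refine IsBigO.of_bound 1 (Eventually.of_forall fun x => ?_)
    have h0 : 0 ≤ X x ⬝ᵥ X x := Finset.sum_nonneg fun i _ => mul_self_nonneg _
    have : ‖X x‖ ≤ √(X x ⬝ᵥ X x) := by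
      refine (pi_norm_le_iff_of_nonneg (Real.sqrt_nonneg _)).2 fun i => ?_
      rw [Real.norm_eq_abs]
      refine Real.abs_le_sqrt ?_
      rw [pow_two]
      exact Finset.single_le_sum (f := fun i => X x i * X x i)
        (fun i _ => mul_self_nonneg _) (Finset.mem_univ i)
    rw [Real.norm_of_nonneg h0, Real.norm_of_nonneg (by positivity), one_mul]
    calc _ ≤ √(X x ⬝ᵥ X x) * √(X x ⬝ᵥ X x) := by gcongr
      _ = _ := Real.mul_self_sqrt h0
  refine tendsto_pi_nhds.2 fun i => tendsto_pi_nhds.2 fun j => ?_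
  have h1 : (fun x => r x i * X x j + X x i * r x j) =o[l] fun x => X x ⬝ᵥ X x :=
    (((hri i).mul_isBigO (hXi j)).add ((hXi i).mul_isLittleO (hri j))).trans_isBigO hq
  have h2 : (fun x => (r x ⬝ᵥ X x)) =o[l] fun x => X x ⬝ᵥ X x :=
    (IsLittleO.fun_sum fun i _ => (hri i).mul_isBigO (hXi i)).trans_isBigO hq
  have h3 : (fun x => (r x ⬝ᵥ X x) * (X x i * X x j)) =o[l]
      fun x => (X x ⬝ᵥ X x) * (X x ⬝ᵥ X x) :=
    h2.mul_isBigO (((hXi i).mul (hXi j)).trans hq)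
  have := h1.tendsto_div_nhds_zero.sub h3.tendsto_div_nhds_zero
  rw [sub_zero] at this
  refine this.congr fun x => ?_
  simp only [S, Matrix.sub_apply, Matrix.smul_apply, Matrix.add_apply, vecMulVec_apply, smul_eq_mul]
  ring

lemma dot_cont {f g : (Fin n → ℝ) → Fin n → ℝ} {x : Fin n → ℝ} (hf : ContinuousAt f x)
    (hg : ContinuousAt g x) : ContinuousAt (fun x => f x ⬝ᵥ g x) x := by
  have h : Continuous fun z : (Fin n → ℝ) × (Fin n → ℝ) => z.1 ⬝ᵥ z.2 := by fun_prop
  exact h.continuousAt.comp (hf.prodMk hg)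

lemma vmv_cont {f g : (Fin n → ℝ) → Fin n → ℝ} {x : Fin n → ℝ} (hf : ContinuousAt f x)
    (hg : ContinuousAt g x) : ContinuousAt (fun x => vecMulVec (f x) (g x)) x := by
  have h : Continuous fun z : (Fin n → ℝ) × (Fin n → ℝ) => vecMulVec z.1 z.2 := by
    refine continuous_matrix fun i j => ?_
    simp only [vecMulVec_apply]
    fun_prop
  exact h.continuousAt.comp (hf.prodMk hg)

end CMetric

/-- **Existence of a continuous metric for differentiable fields.**
Let `n ≥ 1`, `Ω ⊆ ℝⁿ` open, and `X Y : Ω → ℝⁿ` differentiable. Assume that at every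
`m ∈ Ω` with `Y m = 0` the derivative `DY m` is invertible, and that
(i) `⟨X m, Y m⟩ > 0` whenever `Y m ≠ 0`, (ii) `X m = 0` whenever `Y m = 0`, and
(iii) at each zero `m` of `Y` there is a symmetric positive definite `ḡ_m` with
`DY m v = ḡ_m · (DX m v)` for all `v`. Then there exists a continuous field of
symmetric positive definite matrices `g` with `Y x = g x · X x` on `Ω`. -/
theorem continuous_metric_exists
    (n : ℕ) (hn : 1 ≤ n) (Ω : Set (Fin n → ℝ)) (hΩ : IsOpen Ω)
    (X Y : (Fin n → ℝ) → (Fin n → ℝ))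
    (hX : DifferentiableOn ℝ X Ω) (hY : DifferentiableOn ℝ Y Ω)
    (hcrit : ∀ m ∈ Ω, Y m = 0 → Function.Bijective (fderiv ℝ Y m))
    (hi : ∀ m ∈ Ω, Y m ≠ 0 → 0 < ∑ i, X m i * Y m i)
    (hii : ∀ m ∈ Ω, Y m = 0 → X m = 0)
    (hiii : ∀ m ∈ Ω, Y m = 0 → ∃ gbar : Matrix (Fin n) (Fin n) ℝ, gbar.PosDef ∧
      ∀ v : Fin n → ℝ, fderiv ℝ Y m v = gbar.mulVec (fderiv ℝ X m v)) :
    ∃ g : (Fin n → ℝ) → Matrix (Fin n) (Fin n) ℝ,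
      (∀ i j, ContinuousOn (fun x => g x i j) Ω) ∧
      (∀ x ∈ Ω, (g x).PosDef) ∧
      (∀ x ∈ Ω, Y x = (g x).mulVec (X x)) := by
  classical
  have key : ∃ g : C(Ω, Matrix (Fin n) (Fin n) ℝ), ∀ x : Ω, g x ∈
      {A : Matrix (Fin n) (Fin n) ℝ | A.PosDef ∧ Y x = A.mulVec (X x)} := by
    refine exists_continuous_forall_mem_convex_of_local (fun x => ?_) (fun m => ?_)
    · intro A hA B hB a b ha hb hab
      refine ⟨?_, ?_⟩
      · rcases ha.eq_or_lt with rfl | ha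
        · have : b = 1 := by linarith
          subst this; simpa using hB.1
        · rcases hb.eq_or_lt with rfl | hb
          · have : a = 1 := by linarith
            subst this; simpa using hA.1
          · exact (hA.1.smul ha).add (hB.1.smul hb)
      · rw [add_mulVec, smul_mulVec, smul_mulVec, ← hA.2, ← hB.2, ← add_smul, hab, one_smul]
    · suffices H : ∃ U ∈ 𝓝 (m : Fin n → ℝ), ∃ g : (Fin n → ℝ) → Matrix (Fin n) (Fin n) ℝ,
          ContinuousOn g U ∧ ∀ y ∈ U, (g y).PosDef ∧ Y y = (g y).mulVec (X y) by
        obtain ⟨U, hU, g, hg, h⟩ := H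
        exact ⟨Subtype.val ⁻¹' U, continuous_subtype_val.continuousAt hU, g ∘ Subtype.val,
          hg.comp continuous_subtype_val.continuousOn (fun _ h => h), fun y hy => h y hy⟩
      obtain ⟨m, hm⟩ := m
      have cX : ∀ x ∈ Ω, ContinuousAt X x := fun x hx => (hX.differentiableAt (hΩ.mem_nhds hx)).continuousAt
      have cY : ∀ x ∈ Ω, ContinuousAt Y x := fun x hx => (hY.differentiableAt (hΩ.mem_nhds hx)).continuousAt
      by_cases hY0 : Y m = 0
      · obtain ⟨gb, hgb, hD⟩ := hiii m hm hY0
        have hX0 := hii m hm hY0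
        have dX := (hX.differentiableAt (hΩ.mem_nhds hm)).hasFDerivAt
        have dY := (hY.differentiableAt (hΩ.mem_nhds hm)).hasFDerivAt
        have hinj : Function.Injective (fderiv ℝ X m) := fun v w hvw =>
          (hcrit m hm hY0).1 (by rw [hD, hD, hvw])
        have hO : (fun x => x - m) =O[𝓝 m] X := by
          have := dX.isTheta_sub (LinearMap.isClosedEmbedding_of_injective
            (f := (fderiv ℝ X m : (Fin n → ℝ) →ₗ[ℝ] (Fin n → ℝ)))
            (LinearMap.ker_eq_bot.2 hinj)).isInducing
          simpa [hX0] using this.isBigO_symm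
        let L : (Fin n → ℝ) →L[ℝ] (Fin n → ℝ) := LinearMap.toContinuousLinearMap gb.mulVecLin
        have hL : ∀ v, L v = gb *ᵥ v := fun v => rfl
        have hr : (fun x => Y x - gb *ᵥ X x) =o[𝓝 m] X := by
          have h1 := dY.sub (L.hasFDerivAt.comp m dX)
          have h2 : fderiv ℝ Y m - L.comp (fderiv ℝ X m) = 0 := by
            ext1 v
            simp [hL, hD]
          rw [h2] at h1
          have h3 := h1.isLittleO
          simp only [Pi.sub_apply, Function.comp_apply, hL, hY0, hX0, mulVec_zero, sub_zero,
            _root_.zero_apply] at h3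
          exact h3.trans_isBigO hO
        have hne : ∀ᶠ x in 𝓝 m, x ≠ m → X x ≠ 0 := by
          obtain ⟨C, hC⟩ := hO.bound
          filter_upwards [hC] with x hx hxm h0
          rw [h0] at hx
          simp [sub_eq_zero, hxm] at hx
        let g := fun x => gb + CMetric.S (X x) (Y x - gb *ᵥ X x)
        have hgm : g m = gb := by
          simp [g, CMetric.S, hX0, hY0]
        have hgc : ContinuousAt g m := by
          have := (CMetric.S_tendsto hr).const_add gb
          rw [add_zero] at this
          rw [ContinuousAt, hgm]
          exact this
        have hpd : ∀ᶠ x in 𝓝 m, (g x).PosDef := by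
          have h1 := CMetric.posDef_nhds hgb
          rw [← hgm] at h1
          filter_upwards [hgc.eventually h1] with x hx
          exact hx (hgb.isHermitian.add (CMetric.S_herm _ _))
        refine ⟨_, inter_mem (hΩ.mem_nhds hm) (inter_mem hne hpd), g, ?_, ?_⟩
        · rintro x ⟨hx, hx1, hx2⟩
          refine ContinuousAt.continuousWithinAt ?_
          by_cases hxm : x = m
          · rw [hxm]; exact hgc
          · have hXx : X x ≠ 0 := hx1 hxm
            have hq := (CMetric.dot_self_pos hXx).ne'
            have hq2 : (X x ⬝ᵥ X x) ^ 2 ≠ 0 := pow_ne_zero _ hq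
            have c1 := cX x hx
            have c2 := cY x hx
            have c3 : ContinuousAt (fun x => gb *ᵥ X x) x := L.continuous.continuousAt.comp c1
            have c4 : ContinuousAt (fun x => Y x - gb *ᵥ X x) x := c2.sub c3
            simp only [g, CMetric.S]
            exact continuousAt_const.add ((((CMetric.dot_cont c1 c1).inv₀ hq).smul
              ((CMetric.vmv_cont c4 c1).add (CMetric.vmv_cont c1 c4))).sub
              (((CMetric.dot_cont c4 c1).mul (((CMetric.dot_cont c1 c1).pow 2).inv₀ hq2)).smul
              (CMetric.vmv_cont c1 c1)))
        · rintro x ⟨hx, hx1, hx2⟩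
          refine ⟨hx2, ?_⟩
          by_cases hxm : x = m
          · rw [hxm, hX0, hY0, mulVec_zero]
          · simp only [g]
            rw [add_mulVec, CMetric.S_mulVec (hx1 hxm)]
            simp
      · have hne : ∀ᶠ x in 𝓝 m, Y x ≠ 0 := (cY m hm).eventually_ne hY0
        have pos : ∀ x ∈ Ω, Y x ≠ 0 → 0 < X x ⬝ᵥ Y x := hi
        have xne : ∀ x ∈ Ω, Y x ≠ 0 → X x ≠ 0 := fun x hx h h0 => by
          have := pos x hx h
          simp [h0] at this
        refine ⟨_, inter_mem (hΩ.mem_nhds hm) hne, fun x => CMetric.G (X x) (Y x), ?_, ?_⟩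
        · rintro x ⟨hx, hx1⟩
          refine ContinuousAt.continuousWithinAt ?_
          have hq := (CMetric.dot_self_pos (xne x hx hx1)).ne'
          have hp := (pos x hx hx1).ne'
          have c1 := cX x hx
          have c2 := cY x hx
          simp only [CMetric.G]
          exact (((CMetric.dot_cont c1 c2).inv₀ hp).smul (CMetric.vmv_cont c2 c2)).add
            (continuousAt_const.sub (((CMetric.dot_cont c1 c1).inv₀ hq).smul
              (CMetric.vmv_cont c1 c1)))
        · rintro x ⟨hx, hx1⟩
          exact ⟨CMetric.G_posDef (pos x hx hx1) (xne x hx hx1),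
            (CMetric.G_mulVec (pos x hx hx1) (xne x hx hx1)).symm⟩
  obtain ⟨g, hg⟩ := key
  refine ⟨fun x => if h : x ∈ Ω then g ⟨x, h⟩ else 0, fun i j => ?_, fun x hx => ?_, fun x hx => ?_⟩
  · rw [continuousOn_iff_continuous_domRestrict]
    have : Continuous fun x : Ω => g x i j := g.continuous.matrix_elem i j
    convert this using 2 with x
    simp
  · simpa [hx] using (hg ⟨x, hx⟩).1
  · simpa [hx] using (hg ⟨x, hx⟩).2
end

section
/- Let n ≥ 1 and let σ ∈ Matrix (Fin n) (Fin n) ℂ be positive definite. For B ∈ Matrix (Fin n) (Fin n) ℂ define M̃_σ(B) := ∫₀^∞ (t·I + σ)⁻¹ · B · (t·I + σ)⁻¹ dt (convergent improper Bochner integral). Then for every B, ∫₀¹ σ^{1−s} · M̃_σ(B) · σ^{s} ds = B, where σ^{r} denotes the matrix power of the positive definite matrix σ defined by functional calculus. In other words, the Bogoliubov–Kubo–Mori multiplication operator M_σ(A) := ∫₀¹ σ^{1−s} A σ^{s} ds and M̃_σ are mutually inverse linear operators on Matrix (Fin n) (Fin n) ℂ. -/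
open scoped ComplexOrder Matrix

/-- Real power `σ^r` of a positive definite (Hermitian) matrix, defined by applying the
real power to the eigenvalues in a spectral decomposition. -/
noncomputable def mpow {n : ℕ} (σ : Matrix (Fin n) (Fin n) ℂ) (r : ℝ) :
    Matrix (Fin n) (Fin n) ℂ :=
  if h : σ.IsHermitian then
    (h.eigenvectorUnitary : Matrix (Fin n) (Fin n) ℂ) *
      Matrix.diagonal (fun i => ((h.eigenvalues i ^ r : ℝ) : ℂ)) *
      (h.eigenvectorUnitary : Matrix (Fin n) (Fin n) ℂ)ᴴ
  else 0

/-- The Bogoliubov–Kubo–Mori multiplication operator `M_σ(A) := ∫₀¹ σ^{1−s} A σ^s ds`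
(entrywise Bochner integral). -/
noncomputable def bkmMul {n : ℕ} (σ A : Matrix (Fin n) (Fin n) ℂ) :
    Matrix (Fin n) (Fin n) ℂ :=
  Matrix.of fun i j => ∫ s in (0:ℝ)..1, (mpow σ (1 - s) * A * mpow σ s) i j

/-- The operator `M̃_σ(B) := ∫₀^∞ (t·I + σ)⁻¹ B (t·I + σ)⁻¹ dt`
(entrywise improper Bochner integral). -/
noncomputable def bkmInv {n : ℕ} (σ B : Matrix (Fin n) (Fin n) ℂ) :
    Matrix (Fin n) (Fin n) ℂ :=
  Matrix.of fun i j => ∫ t in Set.Ioi (0:ℝ),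
    (((t : ℂ) • (1 : Matrix (Fin n) (Fin n) ℂ) + σ)⁻¹ * B * ((t : ℂ) • 1 + σ)⁻¹) i j

open MeasureTheory Filter Topology in
lemma bkm_scalar_inv (a b : ℝ) (ha : 0 < a) (hb : 0 < b) :
    IntegrableOn (fun t : ℝ => (t + a)⁻¹ * (t + b)⁻¹) (Set.Ioi 0) ∧
    ∫ t in Set.Ioi (0:ℝ), (t + a)⁻¹ * (t + b)⁻¹ =
      if a = b then a⁻¹ else (Real.log a - Real.log b) / (a - b) := by
  have hpos : ∀ x ∈ Set.Ioi (0:ℝ), 0 ≤ (x + a)⁻¹ * (x + b)⁻¹ := by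
    intro x hx
    have : 0 < x := hx
    positivity
  split_ifs with h
  · subst h
    have hd : ∀ x ∈ Set.Ici (0:ℝ),
        HasDerivAt (fun t : ℝ => -(t + a)⁻¹) ((x + a)⁻¹ * (x + a)⁻¹) x := by
      intro x hx
      have hx : 0 ≤ x := hx
      have h1 : x + a ≠ 0 := by positivity
      refine HasDerivAt.congr_deriv (((hasDerivAt_id x).add_const a).fun_inv h1).fun_neg ?_
      simp only [id]
      field_simp
    have hl : Tendsto (fun t : ℝ => -(t + a)⁻¹) atTop (𝓝 0) := by
      have := (tendsto_inv_atTop_zero.comp (tendsto_atTop_add_const_right atTop a tendsto_id)).neg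
      simpa using this
    refine ⟨integrableOn_Ioi_deriv_of_nonneg' hd hpos hl, ?_⟩
    rw [integral_Ioi_of_hasDerivAt_of_nonneg' hd hpos hl]
    simp
  · have hba : b - a ≠ 0 := sub_ne_zero.mpr (Ne.symm h)
    have hab : a - b ≠ 0 := sub_ne_zero.mpr h
    have hd : ∀ x ∈ Set.Ici (0:ℝ),
        HasDerivAt (fun t : ℝ => (Real.log (t + a) - Real.log (t + b)) / (b - a))
          ((x + a)⁻¹ * (x + b)⁻¹) x := by
      intro x hx
      have hx : 0 ≤ x := hx
      have h1 : x + a ≠ 0 := by positivity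
      have h2 : x + b ≠ 0 := by positivity
      refine HasDerivAt.congr_deriv (((((hasDerivAt_id x).add_const a).log h1).fun_sub
        (((hasDerivAt_id x).add_const b).log h2)).div_const (b - a)) ?_
      simp only [id]
      field_simp
      ring
    have hl : Tendsto (fun t : ℝ => (Real.log (t + a) - Real.log (t + b)) / (b - a))
        atTop (𝓝 0) := by
      have := ((Real.tendsto_log_comp_add_sub_log a).sub
        (Real.tendsto_log_comp_add_sub_log b)).div_const (b - a)
      simpa using this
    refine ⟨integrableOn_Ioi_deriv_of_nonneg' hd hpos hl, ?_⟩
    rw [integral_Ioi_of_hasDerivAt_of_nonneg' hd hpos hl]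
    simp only [zero_add]
    field_simp
    ring

lemma bkm_scalar_cont (a b : ℝ) (ha : 0 < a) (hb : 0 < b) :
    Continuous (fun s : ℝ => a ^ (1 - s) * b ^ s) := by
  exact (Continuous.rpow continuous_const (by fun_prop) (fun _ => Or.inl ha.ne')).mul
    (Continuous.rpow continuous_const (by fun_prop) (fun _ => Or.inl hb.ne'))

lemma bkm_scalar_mul (a b : ℝ) (ha : 0 < a) (hb : 0 < b) :
    ∫ s in (0:ℝ)..1, a ^ (1 - s) * b ^ s =
      if a = b then a else (a - b) / (Real.log a - Real.log b) := by
  split_ifs with h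
  · subst h
    have : ∀ s : ℝ, a ^ (1 - s) * a ^ s = a := by
      intro s
      rw [← Real.rpow_add ha]
      simp
    simp [this]
  · have hl : Real.log a - Real.log b ≠ 0 := by
      intro h0
      exact h (Real.log_injOn_pos ha hb (sub_eq_zero.mp h0))
    have hl2 : Real.log b - Real.log a ≠ 0 := by
      intro h0
      exact hl (by linarith)
    have hd : ∀ x ∈ Set.uIcc (0:ℝ) 1,
        HasDerivAt (fun s : ℝ => a ^ (1 - s) * b ^ s / (Real.log b - Real.log a))
          (a ^ (1 - x) * b ^ x) x := by
      intro x _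
      have h1 : HasDerivAt (fun s : ℝ => a ^ (1 - s)) (Real.log a * (-1) * a ^ (1 - x)) x :=
        ((hasDerivAt_id x).const_sub 1).const_rpow ha
      have h2 : HasDerivAt (fun s : ℝ => b ^ s) (Real.log b * 1 * b ^ x) x :=
        (hasDerivAt_id x).const_rpow hb
      refine HasDerivAt.congr_deriv ((h1.fun_mul h2).div_const (Real.log b - Real.log a)) ?_
      field_simp
      ring
    rw [intervalIntegral.integral_eq_sub_of_hasDerivAt hd
      ((bkm_scalar_cont a b ha hb).intervalIntegrable 0 1)]
    simp
    field_simp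
    ring

lemma bkm_scalar_prod (a b : ℝ) (ha : 0 < a) (hb : 0 < b) :
    (∫ s in (0:ℝ)..1, a ^ (1 - s) * b ^ s) *
      (∫ t in Set.Ioi (0:ℝ), (t + a)⁻¹ * (t + b)⁻¹) = 1 := by
  rw [bkm_scalar_mul a b ha hb, (bkm_scalar_inv a b ha hb).2]
  split_ifs with h
  · exact mul_inv_cancel₀ ha.ne'
  · have hl : Real.log a - Real.log b ≠ 0 := by
      intro h0
      exact h (Real.log_injOn_pos ha hb (sub_eq_zero.mp h0))
    have hab : a - b ≠ 0 := sub_ne_zero.mpr h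
    field_simp

lemma bkm_gen {n : ℕ} (V W A : Matrix (Fin n) (Fin n) ℂ) (f g : Fin n → ℂ) (i j : Fin n) :
    (V * Matrix.diagonal f * W * A * (V * Matrix.diagonal g * W)) i j =
      ∑ l, ∑ k, f k * g l * (V i k * (W * A * V) k l * W l j) := by
  have : V * Matrix.diagonal f * W * A * (V * Matrix.diagonal g * W) =
      V * (Matrix.diagonal f * (W * A * V) * Matrix.diagonal g) * W := by
    simp only [Matrix.mul_assoc]
  rw [this, Matrix.mul_apply]
  refine Finset.sum_congr rfl fun l _ => ?_
  rw [Matrix.mul_apply, Finset.sum_mul]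
  refine Finset.sum_congr rfl fun k _ => ?_
  rw [Matrix.mul_diagonal, Matrix.diagonal_mul]
  ring

/-- Conjugated Schur multiplier. -/
noncomputable def bkmSchur {n : ℕ} (V W : Matrix (Fin n) (Fin n) ℂ) (c : Fin n → Fin n → ℂ)
    (A : Matrix (Fin n) (Fin n) ℂ) : Matrix (Fin n) (Fin n) ℂ :=
  V * Matrix.of (fun k l => c k l * (W * A * V) k l) * W

lemma bkmSchur_apply {n : ℕ} (V W A : Matrix (Fin n) (Fin n) ℂ) (c : Fin n → Fin n → ℂ)
    (i j : Fin n) :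
    bkmSchur V W c A i j = ∑ l, ∑ k, c k l * (V i k * (W * A * V) k l * W l j) := by
  rw [bkmSchur, Matrix.mul_apply]
  refine Finset.sum_congr rfl fun l _ => ?_
  rw [Matrix.mul_apply, Finset.sum_mul]
  refine Finset.sum_congr rfl fun k _ => ?_
  rw [Matrix.of_apply]
  ring

lemma bkmSchur_comp {n : ℕ} (V W A : Matrix (Fin n) (Fin n) ℂ) (c d : Fin n → Fin n → ℂ)
    (hVW : V * W = 1) (h : ∀ k l, c k l * d k l = 1) :
    bkmSchur V W c (bkmSchur V W d A) = A := by
  have hWV : W * V = 1 := mul_eq_one_comm.mp hVW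
  have h1 : W * bkmSchur V W d A * V = Matrix.of (fun k l => d k l * (W * A * V) k l) := by
    rw [bkmSchur]
    simp only [← Matrix.mul_assoc, hWV, Matrix.one_mul]
    simp only [Matrix.mul_assoc, hWV, Matrix.mul_one]
  rw [bkmSchur, h1]
  have h2 : (Matrix.of fun k l => c k l *
      (Matrix.of (fun k l => d k l * (W * A * V) k l) : Matrix (Fin n) (Fin n) ℂ) k l)
      = W * A * V := by
    ext k l
    rw [Matrix.of_apply, Matrix.of_apply, ← mul_assoc, h, one_mul]
  rw [h2]
  simp only [← Matrix.mul_assoc, hVW, Matrix.one_mul]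
  simp only [Matrix.mul_assoc, hVW, Matrix.mul_one]

lemma bkm_resolvent {n : ℕ} (V W : Matrix (Fin n) (Fin n) ℂ) (hVW : V * W = 1)
    (e : Fin n → ℝ) (he : ∀ i, 0 < e i) (σ : Matrix (Fin n) (Fin n) ℂ)
    (hs : σ = V * Matrix.diagonal (fun i => (e i : ℂ)) * W) (t : ℝ) (ht : 0 < t) :
    ((t : ℂ) • (1 : Matrix (Fin n) (Fin n) ℂ) + σ)⁻¹ =
      V * Matrix.diagonal (fun i => (((t + e i)⁻¹ : ℝ) : ℂ)) * W := by
  have hWV : W * V = 1 := mul_eq_one_comm.mp hVW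
  apply Matrix.inv_eq_right_inv
  have h1 : (t : ℂ) • (1 : Matrix (Fin n) (Fin n) ℂ) + σ =
      V * Matrix.diagonal (fun i => ((t + e i : ℝ) : ℂ)) * W := by
    have : (Matrix.diagonal (fun i => ((t + e i : ℝ) : ℂ)) : Matrix (Fin n) (Fin n) ℂ) =
        (t : ℂ) • (1 : Matrix (Fin n) (Fin n) ℂ) + Matrix.diagonal (fun i => (e i : ℂ)) := by
      rw [Matrix.smul_one_eq_diagonal, Matrix.diagonal_add]
      simp
    rw [this, hs]
    simp [Matrix.mul_add, Matrix.add_mul, hVW]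
  rw [h1]
  have h2 : V * Matrix.diagonal (fun i => ((t + e i : ℝ) : ℂ)) * W *
      (V * Matrix.diagonal (fun i => (((t + e i)⁻¹ : ℝ) : ℂ)) * W) =
      V * (Matrix.diagonal (fun i => ((t + e i : ℝ) : ℂ)) * (W * V) *
        Matrix.diagonal (fun i => (((t + e i)⁻¹ : ℝ) : ℂ))) * W := by
    simp only [Matrix.mul_assoc]
  rw [h2, hWV, Matrix.mul_one, Matrix.diagonal_mul_diagonal]
  have h3 : (fun i => ((t + e i : ℝ) : ℂ) * (((t + e i)⁻¹ : ℝ) : ℂ)) = fun _ => 1 := by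
    funext i
    have : t + e i ≠ 0 := (add_pos ht (he i)).ne'
    rw [← Complex.ofReal_mul, mul_inv_cancel₀ this, Complex.ofReal_one]
  rw [h3, Matrix.diagonal_one, Matrix.mul_one, hVW]

/-- **The BKM multiplication operator and its integral inverse are mutually inverse.**
For positive definite `σ`, the improper integral defining `M̃_σ(B)` converges absolutely,
and `∫₀¹ σ^{1−s}·M̃_σ(B)·σ^s ds = B`; moreover `M̃_σ(M_σ(B)) = B`, i.e. `M_σ` and `M̃_σ`
are mutually inverse linear operators on `Matrix (Fin n) (Fin n) ℂ`. -/
theorem bkm_operators_mutually_inverse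
    (n : ℕ) (hn : 1 ≤ n) (σ : Matrix (Fin n) (Fin n) ℂ) (hσ : σ.PosDef)
    (B : Matrix (Fin n) (Fin n) ℂ) :
    (∀ i j, MeasureTheory.IntegrableOn
      (fun t : ℝ =>
        (((t : ℂ) • (1 : Matrix (Fin n) (Fin n) ℂ) + σ)⁻¹ * B * ((t : ℂ) • 1 + σ)⁻¹) i j)
      (Set.Ioi 0)) ∧
    bkmMul σ (bkmInv σ B) = B ∧
    bkmInv σ (bkmMul σ B) = B := by
  have hH : σ.IsHermitian := hσ.isHermitian
  obtain ⟨V, hV⟩ : ∃ V : Matrix (Fin n) (Fin n) ℂ,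
    V = (hH.eigenvectorUnitary : Matrix (Fin n) (Fin n) ℂ) := ⟨_, rfl⟩
  obtain ⟨e, hE⟩ : ∃ e : Fin n → ℝ, e = hH.eigenvalues := ⟨_, rfl⟩
  have he : ∀ i, 0 < e i := by
    intro i
    rw [hE]
    exact hσ.eigenvalues_pos i
  have hVW : V * Vᴴ = 1 := by
    rw [hV]
    exact Unitary.coe_mul_star_self hH.eigenvectorUnitary
  have hs : σ = V * Matrix.diagonal (fun i => (e i : ℂ)) * Vᴴ := by
    rw [hV, hE]
    exact hH.spectral_theorem
  have hp : ∀ r, mpow σ r = V * Matrix.diagonal (fun i => ((e i ^ r : ℝ) : ℂ)) * Vᴴ := by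
    intro r
    rw [mpow, dif_pos hH, hV, hE]
  have hentry : ∀ (A : Matrix (Fin n) (Fin n) ℂ) (i j : Fin n), Set.EqOn
      (fun t : ℝ =>
        (((t : ℂ) • (1 : Matrix (Fin n) (Fin n) ℂ) + σ)⁻¹ * A * ((t : ℂ) • 1 + σ)⁻¹) i j)
      (fun t : ℝ => ∑ l, ∑ k, (((t + e k)⁻¹ * (t + e l)⁻¹ : ℝ) : ℂ) *
        (V i k * (Vᴴ * A * V) k l * Vᴴ l j)) (Set.Ioi 0) := by
    intro A i j t ht
    beta_reduce
    rw [bkm_resolvent V Vᴴ hVW e he σ hs t ht, bkm_gen]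
    simp only [Complex.ofReal_mul]
  have hint : ∀ (A : Matrix (Fin n) (Fin n) ℂ) (i j k l : Fin n), MeasureTheory.IntegrableOn
      (fun t : ℝ => (((t + e k)⁻¹ * (t + e l)⁻¹ : ℝ) : ℂ) *
        (V i k * (Vᴴ * A * V) k l * Vᴴ l j)) (Set.Ioi 0) := by
    intro A i j k l
    exact ((bkm_scalar_inv (e k) (e l) (he k) (he l)).1.ofReal).mul_const _
  have hI : ∀ A, bkmInv σ A = bkmSchur V Vᴴ
      (fun k l => ((∫ t in Set.Ioi (0:ℝ), (t + e k)⁻¹ * (t + e l)⁻¹ : ℝ) : ℂ)) A := by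
    intro A
    ext i j
    rw [bkmSchur_apply, bkmInv, Matrix.of_apply,
      MeasureTheory.setIntegral_congr_fun measurableSet_Ioi (hentry A i j),
      MeasureTheory.integral_finsetSum _
        (fun l _ => MeasureTheory.integrable_finsetSum _ (fun k _ => hint A i j k l))]
    refine Finset.sum_congr rfl fun l _ => ?_
    rw [MeasureTheory.integral_finsetSum _ (fun k _ => hint A i j k l)]
    refine Finset.sum_congr rfl fun k _ => ?_
    rw [MeasureTheory.integral_mul_const, integral_complex_ofReal]
  have hM : ∀ A, bkmMul σ A = bkmSchur V Vᴴ
      (fun k l => ((∫ s in (0:ℝ)..1, e k ^ (1 - s) * e l ^ s : ℝ) : ℂ)) A := by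
    intro A
    have hc : ∀ i j k l : Fin n, IntervalIntegrable (fun s : ℝ =>
        ((e k ^ (1 - s) * e l ^ s : ℝ) : ℂ) * (V i k * (Vᴴ * A * V) k l * Vᴴ l j))
        MeasureTheory.volume 0 1 := by
      intro i j k l
      exact ((Complex.continuous_ofReal.comp
        (bkm_scalar_cont (e k) (e l) (he k) (he l))).mul continuous_const).intervalIntegrable 0 1
    ext i j
    rw [bkmSchur_apply, bkmMul, Matrix.of_apply]
    simp only [hp, bkm_gen, ← Complex.ofReal_mul]
    rw [intervalIntegral.integral_finsetSum
        (fun l _ => by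
          have := IntervalIntegrable.sum Finset.univ (fun k _ => hc i j k l)
          simpa [Finset.sum_fn] using this)]
    refine Finset.sum_congr rfl fun l _ => ?_
    rw [intervalIntegral.integral_finsetSum (fun k _ => hc i j k l)]
    refine Finset.sum_congr rfl fun k _ => ?_
    rw [intervalIntegral.integral_mul_const, intervalIntegral.integral_ofReal]
  refine ⟨fun i j => ?_, ?_, ?_⟩
  · refine MeasureTheory.IntegrableOn.congr_fun ?_ (hentry B i j).symm measurableSet_Ioi
    exact MeasureTheory.integrable_finsetSum _
      (fun l _ => MeasureTheory.integrable_finsetSum _ (fun k _ => hint B i j k l))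
  · rw [hI, hM]
    refine bkmSchur_comp V Vᴴ B _ _ hVW fun k l => ?_
    rw [← Complex.ofReal_mul, bkm_scalar_prod _ _ (he k) (he l), Complex.ofReal_one]
  · rw [hI, hM]
    refine bkmSchur_comp V Vᴴ B _ _ hVW fun k l => ?_
    rw [← Complex.ofReal_mul, mul_comm, bkm_scalar_prod _ _ (he k) (he l), Complex.ofReal_one]
end

section
/- Let n ≥ 1 and let σ ∈ Matrix (Fin n) (Fin n) ℂ be positive definite. For A, B ∈ Matrix (Fin n) (Fin n) ℂ define ⟨A,B⟩_BKM := Tr[A* · ∫₀¹ σ^{1−s} B σ^{s} ds] and ⟨A,B⟩_BKM~ := Tr[A* · ∫₀^∞ (t·I+σ)⁻¹ B (t·I+σ)⁻¹ dt]. Let K : Matrix (Fin n) (Fin n) ℂ → Matrix (Fin n) (Fin n) ℂ be a linear map and let K† be its adjoint with respect to the Hilbert–Schmidt pairing, i.e. Tr[(K†A)* B] = Tr[A* (K B)] for all A, B. Then the following are equivalent: (1) ⟨K A, B⟩_BKM = ⟨A, K B⟩_BKM for all A, B; (2) ⟨K† A, B⟩_BKM~ = ⟨A, K† B⟩_BKM~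 for all A, B; (3) M_σ ∘ K = K† ∘ M_σ, where M_σ(A) := ∫₀¹ σ^{1−s} A σ^{s} ds. -/
open scoped ComplexOrder Matrix

/-- Sandwich operator: Hadamard multiplication by `c` in the basis `U`. -/
noncomputable def hadU {n : ℕ} (U : Matrix (Fin n) (Fin n) ℂ) (c : Fin n → Fin n → ℝ)
    (A : Matrix (Fin n) (Fin n) ℂ) : Matrix (Fin n) (Fin n) ℂ :=
  U * Matrix.of (fun k l => (c k l : ℂ) * (Uᴴ * A * U) k l) * Uᴴ

lemma hadU_hadU {n : ℕ} (U : Matrix (Fin n) (Fin n) ℂ) (hU : Uᴴ * U = 1) (hU' : U * Uᴴ = 1)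
    (c c' : Fin n → Fin n → ℝ) (hc : ∀ k l, c k l * c' k l = 1)
    (A : Matrix (Fin n) (Fin n) ℂ) : hadU U c (hadU U c' A) = A := by
  have h1 : ∀ X : Matrix (Fin n) (Fin n) ℂ, Uᴴ * (U * X * Uᴴ) * U = X := by
    intro X
    calc Uᴴ * (U * X * Uᴴ) * U = (Uᴴ * U) * X * (Uᴴ * U) := by simp only [Matrix.mul_assoc]
      _ = X := by simp [hU]
  unfold hadU
  rw [h1]
  have h2 : (Matrix.of (fun k l => (c k l : ℂ) *
      (Matrix.of (fun k l => (c' k l : ℂ) * (Uᴴ * A * U) k l)) k l)) = Uᴴ * A * U := by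
    ext k l
    simp only [Matrix.of_apply]
    rw [← mul_assoc, ← Complex.ofReal_mul, hc]
    simp
  rw [h2]
  calc U * (Uᴴ * A * U) * Uᴴ = (U * Uᴴ) * A * (U * Uᴴ) := by simp only [Matrix.mul_assoc]
    _ = A := by simp [hU']

lemma integral_hadU {n : ℕ} (U : Matrix (Fin n) (Fin n) ℂ) (μ : MeasureTheory.Measure ℝ)
    (d e : ℝ → Fin n → ℝ)
    (hint : ∀ k l, MeasureTheory.Integrable (fun s => d s k * e s l) μ)
    (A : Matrix (Fin n) (Fin n) ℂ) (i j : Fin n) :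
    ∫ s, ((U * Matrix.diagonal (fun k => (d s k : ℂ)) * Uᴴ) * A *
      (U * Matrix.diagonal (fun k => (e s k : ℂ)) * Uᴴ)) i j ∂μ =
    hadU U (fun k l => ∫ s, d s k * e s l ∂μ) A i j := by
  have h : ∀ s, ((U * Matrix.diagonal (fun k => (d s k : ℂ)) * Uᴴ) * A *
      (U * Matrix.diagonal (fun k => (e s k : ℂ)) * Uᴴ)) i j =
      ∑ l, ∑ k, ((d s k * e s l : ℝ) : ℂ) * (U i k * (Uᴴ * A * U) k l * Uᴴ l j) := by
    intro s
    have : (U * Matrix.diagonal (fun k => (d s k : ℂ)) * Uᴴ) * A *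
      (U * Matrix.diagonal (fun k => (e s k : ℂ)) * Uᴴ) =
      (U * (Matrix.diagonal (fun k => (d s k : ℂ)) * (Uᴴ * A * U) *
        Matrix.diagonal (fun k => (e s k : ℂ)))) * Uᴴ := by
      simp only [Matrix.mul_assoc]
    rw [this, Matrix.mul_apply]
    refine Finset.sum_congr rfl fun l _ => ?_
    rw [Matrix.mul_apply, Finset.sum_mul]
    refine Finset.sum_congr rfl fun k _ => ?_
    rw [Matrix.mul_diagonal, Matrix.diagonal_mul]
    push_cast
    ring
  simp_rw [h]
  have hi : ∀ k l, MeasureTheory.Integrable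
      (fun s => ((d s k * e s l : ℝ) : ℂ) * (U i k * (Uᴴ * A * U) k l * Uᴴ l j)) μ :=
    fun k l => ((hint k l).ofReal).mul_const _
  rw [MeasureTheory.integral_finsetSum _
    (fun l _ => MeasureTheory.integrable_finsetSum _ fun k _ => hi k l)]
  unfold hadU
  rw [Matrix.mul_apply]
  refine Finset.sum_congr rfl fun l _ => ?_
  rw [MeasureTheory.integral_finsetSum _ (fun k _ => hi k l), Matrix.mul_apply, Finset.sum_mul]
  refine Finset.sum_congr rfl fun k _ => ?_
  rw [MeasureTheory.integral_mul_const, integral_complex_ofReal, Matrix.of_apply]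
  ring

lemma logmean_integral (a b : ℝ) (ha : 0 < a) (hb : 0 < b) :
    ∫ s in (0:ℝ)..1, a ^ (1 - s) * b ^ s =
      if a = b then a else (b - a) / (Real.log b - Real.log a) := by
  split_ifs with hab
  · subst hab
    have : ∀ s : ℝ, a ^ (1 - s) * a ^ s = a := by
      intro s
      rw [← Real.rpow_add ha]; simp
    simp [this]
  · have hne : Real.log b - Real.log a ≠ 0 := by
      intro h
      exact hab (Real.log_injOn_pos ha hb (by linarith))
    have hd : ∀ s ∈ Set.uIcc (0:ℝ) 1, HasDerivAt
        (fun s => a ^ (1 - s) * b ^ s / (Real.log b - Real.log a)) (a ^ (1 - s) * b ^ s) s := by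
      intro s _
      have h1 : HasDerivAt (fun s : ℝ => a ^ (1 - s)) (Real.log a * (-1) * a ^ (1 - s)) s :=
        ((hasDerivAt_id s).const_sub 1).const_rpow ha
      have h2 : HasDerivAt (fun s : ℝ => b ^ s) (Real.log b * 1 * b ^ s) s :=
        (hasDerivAt_id s).const_rpow hb
      refine ((h1.mul h2).div_const (Real.log b - Real.log a)).congr_deriv ?_
      field_simp
      ring
    have hc : Continuous (fun s : ℝ => a ^ (1 - s) * b ^ s) :=
      ((Real.continuous_const_rpow ha.ne').comp (by fun_prop)).mul
        (Real.continuous_const_rpow hb.ne')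
    rw [intervalIntegral.integral_eq_sub_of_hasDerivAt hd (hc.intervalIntegrable _ _)]
    simp
    ring

lemma logmean_inv (a b : ℝ) (ha : 0 < a) (hb : 0 < b) :
    MeasureTheory.IntegrableOn (fun t => (t + a)⁻¹ * (t + b)⁻¹) (Set.Ioi (0:ℝ)) ∧
    ∫ t in Set.Ioi (0:ℝ), (t + a)⁻¹ * (t + b)⁻¹ =
      if a = b then a⁻¹ else (Real.log b - Real.log a) / (b - a) := by
  have hpos : ∀ t ∈ Set.Ioi (0:ℝ), 0 ≤ (t + a)⁻¹ * (t + b)⁻¹ := by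
    intro t ht
    have : 0 < t := ht
    positivity
  split_ifs with hab
  · subst hab
    have hd : ∀ t ∈ Set.Ici (0:ℝ), HasDerivAt (fun t => -(t + a)⁻¹) ((t + a)⁻¹ * (t + a)⁻¹) t := by
      intro t ht
      have ht : 0 ≤ t := ht
      have hne : t + a ≠ 0 := by positivity
      refine (((hasDerivAt_id t).add_const a).fun_inv hne).fun_neg.congr_deriv ?_
      simp only [id]
      field_simp
    have hl : Filter.Tendsto (fun t => -(t + a)⁻¹) Filter.atTop (nhds (0:ℝ)) := by
      simpa using ((Filter.tendsto_atTop_add_const_right _ a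
        Filter.tendsto_id).inv_tendsto_atTop).neg
    refine ⟨MeasureTheory.integrableOn_Ioi_deriv_of_nonneg' hd hpos hl, ?_⟩
    rw [MeasureTheory.integral_Ioi_of_hasDerivAt_of_nonneg' hd hpos hl]
    simp
  · have hba : b - a ≠ 0 := fun h => hab (by linarith)
    have hd : ∀ t ∈ Set.Ici (0:ℝ), HasDerivAt
        (fun t => (Real.log (t + a) - Real.log (t + b)) / (b - a)) ((t + a)⁻¹ * (t + b)⁻¹) t := by
      intro t ht
      have ht : 0 ≤ t := ht
      have hne : t + a ≠ 0 := by positivity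
      have hne' : t + b ≠ 0 := by positivity
      refine (((((hasDerivAt_id t).add_const a).log hne).sub
        (((hasDerivAt_id t).add_const b).log hne')).div_const (b - a)).congr_deriv ?_
      simp only [id]
      field_simp
      ring
    have hl : Filter.Tendsto (fun t => (Real.log (t + a) - Real.log (t + b)) / (b - a))
        Filter.atTop (nhds (0:ℝ)) := by
      have h1 : Filter.Tendsto (fun t : ℝ => 1 + (a - b) * (t + b)⁻¹) Filter.atTop
          (nhds (1 + (a - b) * 0)) :=
        (((Filter.tendsto_atTop_add_const_right _ b
          Filter.tendsto_id).inv_tendsto_atTop).const_mul _).const_add _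
      have h2 := ((h1.log (by simp)).div_const (b - a))
      simp only [mul_zero, add_zero, Real.log_one, zero_div] at h2
      refine h2.congr' ?_
      filter_upwards [Filter.eventually_gt_atTop 0] with t ht
      have hne : t + a ≠ 0 := by positivity
      have hne' : t + b ≠ 0 := by positivity
      rw [← Real.log_div hne hne']
      congr 2
      field_simp
      ring
    refine ⟨MeasureTheory.integrableOn_Ioi_deriv_of_nonneg' hd hpos hl, ?_⟩
    rw [MeasureTheory.integral_Ioi_of_hasDerivAt_of_nonneg' hd hpos hl]
    simp only [zero_add]
    field_simp
    ring

lemma bkm_inverse {n : ℕ} (σ : Matrix (Fin n) (Fin n) ℂ) (hσ : σ.PosDef) :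
    (∀ A, bkmMul σ (bkmInv σ A) = A) ∧ (∀ A, bkmInv σ (bkmMul σ A) = A) := by
  have hH : σ.IsHermitian := hσ.isHermitian
  have hev : ∀ i, 0 < hH.eigenvalues i := fun i => hσ.eigenvalues_pos i
  set U : Matrix (Fin n) (Fin n) ℂ := (hH.eigenvectorUnitary : Matrix (Fin n) (Fin n) ℂ) with hUdef
  have hU : Uᴴ * U = 1 := Unitary.coe_star_mul_self hH.eigenvectorUnitary
  have hU' : U * Uᴴ = 1 := Unitary.coe_mul_star_self hH.eigenvectorUnitary
  have hspec : σ = U * Matrix.diagonal (fun k => (hH.eigenvalues k : ℂ)) * Uᴴ := by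
    have := hH.spectral_theorem
    rw [Unitary.conjStarAlgAut_apply] at this
    exact this
  have hM : ∀ A, bkmMul σ A = hadU U (fun k l => ∫ s in (0:ℝ)..1,
      hH.eigenvalues k ^ (1 - s) * hH.eigenvalues l ^ s) A := by
    intro A
    ext i j
    have := integral_hadU U (MeasureTheory.volume.restrict (Set.Ioc (0:ℝ) 1))
      (fun s k => hH.eigenvalues k ^ (1 - s)) (fun s k => hH.eigenvalues k ^ s) (by
        intro k l
        have hc : Continuous (fun s : ℝ => hH.eigenvalues k ^ (1 - s) * hH.eigenvalues l ^ s) :=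
          ((Real.continuous_const_rpow (hev k).ne').comp (by fun_prop)).mul
            (Real.continuous_const_rpow (hev l).ne')
        exact (hc.intervalIntegrable 0 1).1) A i j
    simp only [intervalIntegral.integral_of_le (zero_le_one (α := ℝ))]
    rw [← this]
    simp only [bkmMul, Matrix.of_apply, intervalIntegral.integral_of_le (zero_le_one (α := ℝ)),
      mpow, dif_pos hH]
    rfl
  have hN : ∀ A, bkmInv σ A = hadU U (fun k l => ∫ t in Set.Ioi (0:ℝ),
      (t + hH.eigenvalues k)⁻¹ * (t + hH.eigenvalues l)⁻¹) A := by
    intro A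
    ext i j
    rw [← integral_hadU U (MeasureTheory.volume.restrict (Set.Ioi (0:ℝ)))
      (fun t k => (t + hH.eigenvalues k)⁻¹) (fun t k => (t + hH.eigenvalues k)⁻¹)
      (fun k l => (logmean_inv _ _ (hev k) (hev l)).1) A i j]
    simp only [bkmInv, Matrix.of_apply]
    refine MeasureTheory.setIntegral_congr_fun measurableSet_Ioi fun t ht => ?_
    have ht : 0 < t := ht
    have hinv : ((t : ℂ) • (1 : Matrix (Fin n) (Fin n) ℂ) + σ)⁻¹ =
        U * Matrix.diagonal (fun k => (((t + hH.eigenvalues k)⁻¹ : ℝ) : ℂ)) * Uᴴ := by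
      apply Matrix.inv_eq_left_inv
      have h1 : (t : ℂ) • (1 : Matrix (Fin n) (Fin n) ℂ) + σ =
          U * Matrix.diagonal (fun k => ((t + hH.eigenvalues k : ℝ) : ℂ)) * Uᴴ := by
        have h3 : Matrix.diagonal (fun k => ((t + hH.eigenvalues k : ℝ) : ℂ)) =
            (t : ℂ) • (1 : Matrix (Fin n) (Fin n) ℂ) +
              Matrix.diagonal (fun k => (hH.eigenvalues k : ℂ)) := by
          rw [Matrix.smul_one_eq_diagonal, Matrix.diagonal_add]
          simp
        rw [h3, Matrix.mul_add, Matrix.add_mul, ← hspec]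
        simp [hU']
      rw [h1]
      calc _ = U * (Matrix.diagonal (fun k => (((t + hH.eigenvalues k)⁻¹ : ℝ) : ℂ)) * (Uᴴ * U) *
              Matrix.diagonal (fun k => ((t + hH.eigenvalues k : ℝ) : ℂ))) * Uᴴ := by
            simp only [Matrix.mul_assoc]
        _ = U * 1 * Uᴴ := by
            rw [hU, Matrix.mul_one, Matrix.diagonal_mul_diagonal]
            congr 2
            rw [← Matrix.diagonal_one]
            congr 1
            ext k
            have : t + hH.eigenvalues k ≠ 0 := by have := hev k; positivity
            rw [← Complex.ofReal_mul, inv_mul_cancel₀ this]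
            simp
        _ = 1 := by simp [hU']
    simp only [hinv]
  have hc : ∀ k l, (∫ s in (0:ℝ)..1, hH.eigenvalues k ^ (1 - s) * hH.eigenvalues l ^ s) *
      (∫ t in Set.Ioi (0:ℝ), (t + hH.eigenvalues k)⁻¹ * (t + hH.eigenvalues l)⁻¹) = 1 := by
    intro k l
    rw [logmean_integral _ _ (hev k) (hev l), (logmean_inv _ _ (hev k) (hev l)).2]
    split_ifs with hab
    · exact mul_inv_cancel₀ (hev k).ne'
    · have h1 : Real.log (hH.eigenvalues l) - Real.log (hH.eigenvalues k) ≠ 0 := by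
        intro h
        exact hab (Real.log_injOn_pos (hev k) (hev l) (by linarith))
      have h2 : hH.eigenvalues l - hH.eigenvalues k ≠ 0 := fun h => hab (by linarith)
      field_simp
  constructor
  · intro A
    rw [hN, hM]
    exact hadU_hadU U hU hU' _ _ hc A
  · intro A
    rw [hM, hN]
    exact hadU_hadU U hU hU' _ _ (fun k l => by rw [mul_comm]; exact hc k l) A

lemma eq_of_trace {n : ℕ} (X Y : Matrix (Fin n) (Fin n) ℂ)
    (h : ∀ A : Matrix (Fin n) (Fin n) ℂ, (Aᴴ * X).trace = (Aᴴ * Y).trace) : X = Y := by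
  apply Matrix.ext_iff_trace_mul_left.2
  intro A
  simpa using h Aᴴ

/-- **Equivalence of BKM selfadjointness conditions.**
For `σ` positive definite, a linear map `K` with Hilbert–Schmidt adjoint `K†`, the
following are equivalent: (1) `K` is selfadjoint for `⟨A,B⟩_BKM = Tr[Aᴴ M_σ(B)]`;
(2) `K†` is selfadjoint for `⟨A,B⟩_BKM~ = Tr[Aᴴ M̃_σ(B)]`; (3) `M_σ ∘ K = K† ∘ M_σ`. -/
theorem bkm_selfadjoint_equiv
    (n : ℕ) (hn : 1 ≤ n) (σ : Matrix (Fin n) (Fin n) ℂ) (hσ : σ.PosDef)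
    (K Kd : Matrix (Fin n) (Fin n) ℂ →ₗ[ℂ] Matrix (Fin n) (Fin n) ℂ)
    (hKd : ∀ A B : Matrix (Fin n) (Fin n) ℂ, ((Kd A)ᴴ * B).trace = (Aᴴ * K B).trace) :
    ((∀ A B : Matrix (Fin n) (Fin n) ℂ,
        ((K A)ᴴ * bkmMul σ B).trace = (Aᴴ * bkmMul σ (K B)).trace) ↔
      (∀ A B : Matrix (Fin n) (Fin n) ℂ,
        ((Kd A)ᴴ * bkmInv σ B).trace = (Aᴴ * bkmInv σ (Kd B)).trace)) ∧
    ((∀ A B : Matrix (Fin n) (Fin n) ℂ,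
        ((K A)ᴴ * bkmMul σ B).trace = (Aᴴ * bkmMul σ (K B)).trace) ↔
      (∀ A : Matrix (Fin n) (Fin n) ℂ, bkmMul σ (K A) = Kd (bkmMul σ A))) := by
  obtain ⟨hMN, hNM⟩ := bkm_inverse σ hσ
  have hK : ∀ A B : Matrix (Fin n) (Fin n) ℂ, ((K A)ᴴ * B).trace = (Aᴴ * Kd B).trace := by
    intro A B
    have := congrArg star (hKd B A)
    rw [← Matrix.trace_conjTranspose, ← Matrix.trace_conjTranspose] at this
    simpa using this.symm
  have h13 : (∀ A B : Matrix (Fin n) (Fin n) ℂ,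
        ((K A)ᴴ * bkmMul σ B).trace = (Aᴴ * bkmMul σ (K B)).trace) ↔
      (∀ A : Matrix (Fin n) (Fin n) ℂ, bkmMul σ (K A) = Kd (bkmMul σ A)) := by
    constructor
    · intro h B
      apply eq_of_trace
      intro A
      rw [← h, hK]
    · intro h A B
      rw [hK, h]
  refine ⟨h13.trans ⟨fun h A B => ?_, fun h A => ?_⟩, h13⟩
  · rw [hKd]
    have := h (bkmInv σ B)
    rw [hMN] at this
    rw [← this, hNM]
  · have h2 : K A = bkmInv σ (Kd (bkmMul σ A)) := by
      apply eq_of_trace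
      intro C
      rw [← h, hKd, hNM]
    rw [h2, hMN]
end
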